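/- arXiv:2212.08835 — 2 statements merged into one kernel-verified Lean document; each statement's English description precedes it below -/
import Mathlib

section
/- The space L(log L)²(-1,1) is contained in the range T(LlogL(-1,1)) of the finite Hilbert transform: for every g ∈ L(log L)²(-1,1) there exists f ∈ LlogL(-1,1) with T(f) = g almost everywhere. -/
open MeasureTheory Set Filter

noncomputable section

/-- Lebesgue measure restricted to the interval `(-1, 1)`. -/
def μI : Measure ℝ := volume.restrict (Set.Ioo (-1 : ℝ) 1)

/-- The finite Hilbert transform: the principal-value limit
`T(f)(t) = lim_{ε→0⁺} (1/π) ∫_{x∈(-1,1), |x-t|≥ε} f(x)/(x-t) dx`. -/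
def FHT (f : ℝ → ℂ) (t : ℝ) : ℂ :=
  limUnder (nhdsWithin (0 : ℝ) (Set.Ioi 0)) fun ε : ℝ =>
    (Real.pi : ℂ)⁻¹ *
      ∫ x in {x : ℝ | x ∈ Set.Ioo (-1 : ℝ) 1 ∧ ε ≤ |x - t|}, f x / ((x : ℂ) - (t : ℂ))

/-- The operator `T̂(g)(x) = -(1-x²)^{-1/2} T(t ↦ √(1-t²) g(t))(x)`. -/
def hatT (g : ℝ → ℂ) (x : ℝ) : ℂ :=
  -((Real.sqrt (1 - x ^ 2) : ℂ))⁻¹ * FHT (fun t => (Real.sqrt (1 - t ^ 2) : ℂ) * g t) x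

/-- Membership in the Zygmund space `L log L(-1,1)`:
`f` is a.e. measurable on `(-1,1)` and `∫ |f| log⁺|f| < ∞`. -/
def MemLlogL (f : ℝ → ℂ) : Prop :=
  AEStronglyMeasurable f μI ∧
    IntegrableOn (fun x => ‖f x‖ * max (Real.log ‖f x‖) 0) (Set.Ioo (-1 : ℝ) 1)

/-- The distribution function `λ ↦ |{x ∈ (-1,1) : |f(x)| > λ}|`. -/
def distFun (f : ℝ → ℂ) (lam : ℝ) : ℝ :=
  (volume {x : ℝ | x ∈ Set.Ioo (-1 : ℝ) 1 ∧ lam < ‖f x‖}).toReal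

/-- The decreasing rearrangement `f*` of `f`, a function on `(0,2)`. -/
def decRearr (f : ℝ → ℂ) (t : ℝ) : ℝ :=
  sInf {lam : ℝ | 0 ≤ lam ∧ distFun f lam ≤ t}

/-- The `L log L` norm `‖f‖ = ∫_0^2 f*(t) log(2e/t) dt`. -/
def llogLNorm (f : ℝ → ℂ) : ℝ :=
  ∫ t in Set.Ioo (0 : ℝ) 2, decRearr f t * Real.log (2 * Real.exp 1 / t)

/-- The `L(log L)^α` norm `∫_0^2 f*(t) log^α(2e/t) dt` (for `α = 0` this is the `L¹` norm). -/
def zygNorm (α : ℝ) (f : ℝ → ℂ) : ℝ :=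
  ∫ t in Set.Ioo (0 : ℝ) 2, decRearr f t * Real.log (2 * Real.exp 1 / t) ^ α

/-- Membership in the Zygmund space `L(log L)^α(-1,1)`. -/
def MemZyg (α : ℝ) (f : ℝ → ℂ) : Prop :=
  AEStronglyMeasurable f μI ∧
    IntegrableOn (fun t => decRearr f t * Real.log (2 * Real.exp 1 / t) ^ α)
      (Set.Ioo (0 : ℝ) 2)

/-- Membership in `L(log L)²(-1,1)`: `∫ |f| (log(2+|f|))² < ∞`. -/
def MemLlogL2 (f : ℝ → ℂ) : Prop :=
  AEStronglyMeasurable f μI ∧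
    IntegrableOn (fun x => ‖f x‖ * Real.log (2 + ‖f x‖) ^ 2) (Set.Ioo (-1 : ℝ) 1)

/-- The constant `c(β,γ) = max{1/(1-β), 1/(1-γ), 1/(β+γ-1)}`. -/
def cBG (β γ : ℝ) : ℝ := max (max (1 / (1 - β)) (1 / (1 - γ))) (1 / (β + γ - 1))


/-!
Write `w(x) = √(1 - x²)`, let `C f(z) = ∫ f(t) / (t - z) dt` be the Cauchy transform over `(-1, 1)`,
and put `S = C(1/w)`. The airfoil equation `T f = g` is solved by Tricomi's formula
`f = -w⁻¹ T(w g)`. In the upper half plane this is the identity `C f = -π⁻¹ S · C(w g)`, which is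
elementary for polynomials `g` and stable under `L¹` limits, and whose boundary values give back
both `T f = g` and the formula for `f`. Hence it suffices to bound `f` in `L log L` by `g` in
`L (log L)²`, as polynomials are dense in the latter class.

For `G ≥ 0` the function `D = 1 - i C G` has real part at least `1`, so `D log² D` is holomorphic.
Since `|D| log |D|` is controlled by a function of `Re D` minus `Re (D log² D)`, and contour
integration bounds the integral of the second term, the bound on `C G` in `L log L` reduces to one
on `Re D`, a Poisson integral, to which Jensen's inequality applies. Replacing `w⁻¹ T(w g)` by `T g`
costs an error dominated by an integral operator with an explicit positive kernel.
-/

open scoped Topology ENNReal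

instance : IsFiniteMeasure μI := by
  rw [μI]
  infer_instance

instance : NullSingletonClass μI := by
  rw [μI]
  infer_instance

lemma ae_mem_Ioo : ∀ᵐ t ∂μI, t ∈ Ioo (-1 : ℝ) 1 :=
  ae_restrict_mem measurableSet_Ioo

lemma integrable_id_mul {f : ℝ → ℝ} (hf : Integrable f μI) : Integrable (fun t => t * f t) μI := by
  refine hf.bdd_mul (c := 1) (by fun_prop) ?_
  filter_upwards [ae_mem_Ioo] with t ht
  exact abs_le.2 ⟨ht.1.le, ht.2.le⟩

/-! ### The Cauchy transform -/

/-- The Cauchy transform `z ↦ ∫ f(t) / (t - z) dμ(t)` of a density `f` with respect to `μ`. Only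
its values off the real line matter. -/
def cauchyTransform (μ : Measure ℝ) (f : ℝ → ℝ) (z : ℂ) : ℂ :=
  ∫ t, (f t : ℂ) / ((t : ℂ) - z) ∂μ

section CauchyTransform

variable {μ : Measure ℝ} {f g : ℝ → ℝ} {z : ℂ}

lemma abs_im_le_norm_ofReal_sub (t : ℝ) (z : ℂ) : |z.im| ≤ ‖(t : ℂ) - z‖ := by
  simpa using Complex.abs_im_le_norm ((t : ℂ) - z)

lemma ofReal_sub_ne_zero (t : ℝ) (hz : z.im ≠ 0) : (t : ℂ) - z ≠ 0 :=
  norm_pos_iff.1 ((abs_pos.2 hz).trans_le (abs_im_le_norm_ofReal_sub t z))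

lemma norm_ofReal_div_sub_le (a t : ℝ) (hz : z.im ≠ 0) :
    ‖(a : ℂ) / ((t : ℂ) - z)‖ ≤ |a| / |z.im| := by
  rw [norm_div, Complex.norm_real, Real.norm_eq_abs]
  have : 0 < |z.im| := abs_pos.2 hz
  gcongr
  exact abs_im_le_norm_ofReal_sub t z

lemma integrable_div_ofReal_sub (hf : Integrable f μ) (hz : z.im ≠ 0) :
    Integrable (fun t : ℝ => (f t : ℂ) / ((t : ℂ) - z)) μ := by
  refine (hf.abs.div_const |z.im|).mono' ?_ (.of_forall fun t => norm_ofReal_div_sub_le _ t hz)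
  exact hf.ofReal.aestronglyMeasurable.mul
    (by fun_prop : Measurable fun t : ℝ => ((t : ℂ) - z)⁻¹).aestronglyMeasurable

lemma cauchyTransform_congr (h : f =ᵐ[μ] g) (z : ℂ) :
    cauchyTransform μ f z = cauchyTransform μ g z :=
  integral_congr_ae (h.mono fun t ht => by simp only [ht])

lemma cauchyTransform_const_mul (c : ℝ) (f : ℝ → ℝ) (z : ℂ) :
    cauchyTransform μ (fun t => c * f t) z = c * cauchyTransform μ f z := by
  simp only [cauchyTransform, ← integral_const_mul, Complex.ofReal_mul, mul_div_assoc]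

lemma cauchyTransform_add (hf : Integrable f μ) (hg : Integrable g μ) (hz : z.im ≠ 0) :
    cauchyTransform μ (fun t => f t + g t) z = cauchyTransform μ f z + cauchyTransform μ g z := by
  simp only [cauchyTransform, Complex.ofReal_add, add_div]
  exact integral_add (integrable_div_ofReal_sub hf hz) (integrable_div_ofReal_sub hg hz)

lemma cauchyTransform_sub (hf : Integrable f μ) (hg : Integrable g μ) (hz : z.im ≠ 0) :
    cauchyTransform μ (fun t => f t - g t) z = cauchyTransform μ f z - cauchyTransform μ g z := by
  simp only [cauchyTransform, Complex.ofReal_sub, sub_div]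
  exact integral_sub (integrable_div_ofReal_sub hf hz) (integrable_div_ofReal_sub hg hz)

lemma cauchyTransform_id_mul (hf : Integrable f μ) (hz : z.im ≠ 0) :
    cauchyTransform μ (fun t => t * f t) z = z * cauchyTransform μ f z + (∫ t, f t ∂μ : ℝ) := by
  have hf' : Integrable (fun t => (f t : ℂ)) μ := hf.ofReal
  rw [cauchyTransform, cauchyTransform, ← integral_const_mul, ← integral_complex_ofReal,
    ← integral_add ((integrable_div_ofReal_sub hf hz).const_mul z) hf']
  congr 1 with t
  have := ofReal_sub_ne_zero t hz
  push_cast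
  field_simp
  ring

lemma norm_cauchyTransform_le (hf : Integrable f μ) {d : ℝ} (hd : 0 < d)
    (h : ∀ᵐ t : ℝ ∂μ, d ≤ ‖(t : ℂ) - z‖) : ‖cauchyTransform μ f z‖ ≤ (∫ t, |f t| ∂μ) / d := by
  rw [← integral_div]
  refine norm_integral_le_of_norm_le (hf.abs.div_const d) (h.mono fun t ht => ?_)
  rw [norm_div, Complex.norm_real, Real.norm_eq_abs]
  gcongr

lemma norm_cauchyTransform_le_div_im (hf : Integrable f μ) (hz : z.im ≠ 0) :
    ‖cauchyTransform μ f z‖ ≤ (∫ t, |f t| ∂μ) / |z.im| :=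
  norm_cauchyTransform_le hf (abs_pos.2 hz) (.of_forall fun t => abs_im_le_norm_ofReal_sub t z)

lemma tendsto_cauchyTransform {ι : Type*} {l : Filter ι} {f : ι → ℝ → ℝ} {F : ℝ → ℝ}
    (hf : ∀ i, Integrable (f i) μ) (hF : Integrable F μ)
    (h : Tendsto (fun i => eLpNorm (f i - F) 1 μ) l (𝓝 0)) (hz : z.im ≠ 0) :
    Tendsto (fun i => cauchyTransform μ (f i) z) l (𝓝 (cauchyTransform μ F z)) := by
  have hL1 : ∀ i, (eLpNorm (f i - F) 1 μ).toReal = ∫ t, |f i t - F t| ∂μ := fun i => by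
    rw [eLpNorm_one_eq_lintegral_enorm,
      ← integral_norm_eq_lintegral_enorm ((hf i).sub hF).aestronglyMeasurable]
    rfl
  have hreal := ((ENNReal.tendsto_toReal ENNReal.zero_ne_top).comp h).div_const |z.im|
  simp only [Function.comp_def, hL1, ENNReal.toReal_zero, zero_div] at hreal
  refine tendsto_iff_norm_sub_tendsto_zero.2
    (squeeze_zero (fun _ => norm_nonneg _) (fun i => ?_) hreal)
  rw [← cauchyTransform_sub (hf i) hF hz]
  exact norm_cauchyTransform_le_div_im ((hf i).sub hF) hz

lemma differentiableAt_cauchyTransform (hf : Integrable f μ) (hz : z.im ≠ 0) :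
    DifferentiableAt ℂ (cauchyTransform μ f) z := by
  have hr : 0 < |z.im| / 2 := by positivity
  have hs : Metric.ball z (|z.im| / 2) ∈ 𝓝 z := Metric.ball_mem_nhds _ hr
  have him : ∀ w ∈ Metric.ball z (|z.im| / 2), |z.im| / 2 ≤ |w.im| := fun w hw => by
    have h1 : |z.im| - |w.im| ≤ |z.im - w.im| := abs_sub_abs_le_abs_sub _ _
    have h2 : |z.im - w.im| ≤ ‖z - w‖ := Complex.abs_im_le_norm (z - w)
    rw [Metric.mem_ball', dist_eq_norm] at hw
    linarith
  have him0 : ∀ w ∈ Metric.ball z (|z.im| / 2), w.im ≠ 0 := fun w hw =>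
    abs_pos.1 (hr.trans_le (him w hw))
  refine (hasDerivAt_integral_of_dominated_loc_of_deriv_le (μ := μ) (𝕜 := ℂ)
    (F := fun w t => (f t : ℂ) / ((t : ℂ) - w)) (F' := fun w t => (f t : ℂ) / ((t : ℂ) - w) ^ 2)
    (bound := fun t => |f t| / (|z.im| / 2) ^ 2)
    hs ?_ (integrable_div_ofReal_sub hf hz) ?_ ?_ (hf.abs.div_const _) ?_).2.differentiableAt
  · filter_upwards [hs] with w hw
    exact (integrable_div_ofReal_sub hf (him0 w hw)).aestronglyMeasurable
  · exact hf.ofReal.aestronglyMeasurable.mul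
      (by fun_prop : Measurable fun t : ℝ => (((t : ℂ) - z) ^ 2)⁻¹).aestronglyMeasurable
  · filter_upwards with t w hw
    rw [norm_div, Complex.norm_real, Real.norm_eq_abs, norm_pow]
    gcongr
    exact (him w hw).trans (abs_im_le_norm_ofReal_sub t w)
  · filter_upwards with t w hw
    simpa using (hasDerivAt_const w (f t : ℂ)).fun_div ((hasDerivAt_id w).const_sub (t : ℂ))
      (ofReal_sub_ne_zero t (him0 w hw))

lemma im_add_mul_I_ne_zero (x : ℝ) {y : ℝ} (hy : 0 < y) :
    ((x : ℂ) + y * Complex.I).im ≠ 0 := by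
  simpa using hy.ne'

lemma re_cauchyTransform (hf : Integrable f μ) (x : ℝ) {y : ℝ} (hy : 0 < y) :
    (cauchyTransform μ f (x + y * Complex.I)).re =
      ∫ t, f t * ((t - x) / ((t - x) ^ 2 + y ^ 2)) ∂μ := by
  refine (integral_re (integrable_div_ofReal_sub hf (im_add_mul_I_ne_zero x hy))).symm.trans ?_
  congr 1 with t
  rw [RCLike.re_to_complex, div_eq_mul_inv, Complex.re_ofReal_mul, Complex.inv_re]
  simp [Complex.normSq_apply, sq]

lemma im_cauchyTransform (hf : Integrable f μ) (x : ℝ) {y : ℝ} (hy : 0 < y) :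
    (cauchyTransform μ f (x + y * Complex.I)).im =
      ∫ t, f t * (y / ((t - x) ^ 2 + y ^ 2)) ∂μ := by
  refine (integral_im (integrable_div_ofReal_sub hf (im_add_mul_I_ne_zero x hy))).symm.trans ?_
  congr 1 with t
  rw [RCLike.im_to_complex, div_eq_mul_inv, Complex.im_ofReal_mul, Complex.inv_im]
  simp [Complex.normSq_apply, sq]

lemma norm_im_mul_ofReal_div_sub_le (a t : ℝ) (hz : z.im ≠ 0) :
    ‖(z.im : ℂ) * ((a : ℂ) / ((t : ℂ) - z))‖ ≤ |a| := by
  have h0 : 0 < |z.im| := abs_pos.2 hz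
  calc ‖(z.im : ℂ) * ((a : ℂ) / ((t : ℂ) - z))‖ ≤ |z.im| * (|a| / |z.im|) := by
        rw [norm_mul, Complex.norm_real, Real.norm_eq_abs]
        gcongr
        exact norm_ofReal_div_sub_le a t hz
    _ = |a| := mul_div_cancel₀ _ h0.ne'

lemma tendsto_mul_cauchyTransform_nhdsGT_zero [NullSingletonClass μ] (hf : Integrable f μ)
    (x : ℝ) : Tendsto (fun y : ℝ => (y : ℂ) * cauchyTransform μ f (x + y * Complex.I))
      (𝓝[>] 0) (𝓝 0) := by
  simp_rw [cauchyTransform, ← integral_const_mul]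
  rw [← integral_zero ℝ ℂ (μ := μ)]
  refine tendsto_integral_filter_of_dominated_convergence (fun t => |f t|) ?_ ?_ hf.abs ?_
  · filter_upwards [self_mem_nhdsWithin] with y hy
    exact ((integrable_div_ofReal_sub hf (im_add_mul_I_ne_zero x hy)).const_mul _).1
  · filter_upwards [self_mem_nhdsWithin] with y hy
    refine .of_forall fun t => ?_
    simpa using norm_im_mul_ofReal_div_sub_le (f t) t (im_add_mul_I_ne_zero x hy)
  · filter_upwards [Measure.ae_ne μ x] with t ht
    have hne : (t : ℂ) - (x + (0 : ℝ) * Complex.I) ≠ 0 := by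
      simpa [sub_eq_zero] using ht
    have hc : ContinuousAt
        (fun y : ℝ => (y : ℂ) * ((f t : ℂ) / ((t : ℂ) - (x + y * Complex.I)))) 0 := by
      fun_prop (disch := assumption)
    simpa using hc.tendsto.mono_left nhdsWithin_le_nhds

lemma tendsto_mul_cauchyTransform_atTop (hf : Integrable f μ) :
    Tendsto (fun y : ℝ => (y * Complex.I) * cauchyTransform μ f (y * Complex.I)) atTop
      (𝓝 (-(∫ t, f t ∂μ : ℝ))) := by
  have him {y : ℝ} (hy : 0 < y) : (y * Complex.I).im ≠ 0 := by simpa using hy.ne'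
  simp_rw [cauchyTransform, ← integral_const_mul]
  rw [← integral_complex_ofReal, ← integral_neg]
  refine tendsto_integral_filter_of_dominated_convergence (fun t => |f t|) ?_ ?_ hf.abs ?_
  · filter_upwards [eventually_gt_atTop 0] with y hy
    exact ((integrable_div_ofReal_sub hf (him hy)).const_mul _).1
  · filter_upwards [eventually_gt_atTop 0] with y hy
    refine .of_forall fun t => ?_
    simpa using norm_im_mul_ofReal_div_sub_le (f t) t (him hy)
  · refine .of_forall fun t => ?_
    have h : Tendsto (fun y : ℝ => (t : ℂ) / (y * Complex.I)) atTop (𝓝 0) :=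
      tendsto_zero_iff_norm_tendsto_zero.2 <| by
        simpa using tendsto_const_nhds.div_atTop tendsto_norm_atTop_atTop
    have h' := (tendsto_const_nhds (x := (f t : ℂ))).div (h.sub_const 1) (by norm_num)
    rw [zero_sub, div_neg, div_one] at h'
    refine h'.congr' ?_
    filter_upwards [eventually_gt_atTop 0] with y hy
    have hyI : (y : ℂ) * Complex.I ≠ 0 := by simpa using hy.ne'
    have := ofReal_sub_ne_zero t (him hy)
    rw [Pi.div_apply, div_sub_one hyI, div_div_eq_mul_div]
    ring

lemma tendsto_cauchyTransform_atTop (hf : Integrable f μ) :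
    Tendsto (fun y : ℝ => cauchyTransform μ f (y * Complex.I)) atTop (𝓝 0) := by
  refine squeeze_zero_norm' ?_ ((tendsto_const_nhds (x := ∫ t, |f t| ∂μ)).div_atTop tendsto_id)
  filter_upwards [eventually_gt_atTop 0] with y hy
  simpa [abs_of_pos hy] using
    norm_cauchyTransform_le_div_im hf (z := y * Complex.I) (by simpa using hy.ne')

end CauchyTransform
/-! ### The arcsine weight -/

/-- The semicircle weight `√(1 - x²)`. -/
def semicircle (x : ℝ) : ℝ := Real.sqrt (1 - x ^ 2)

lemma semicircle_nonneg (x : ℝ) : 0 ≤ semicircle x := Real.sqrt_nonneg _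

lemma semicircle_pos {x : ℝ} (hx : x ∈ Ioo (-1 : ℝ) 1) : 0 < semicircle x :=
  Real.sqrt_pos.2 (by nlinarith [hx.1, hx.2])

lemma semicircle_sq {x : ℝ} (hx : x ∈ Ioo (-1 : ℝ) 1) : semicircle x ^ 2 = 1 - x ^ 2 :=
  Real.sq_sqrt (by nlinarith [hx.1, hx.2])

lemma semicircle_le_one (x : ℝ) : semicircle x ≤ 1 :=
  Real.sqrt_le_one.2 (by nlinarith [sq_nonneg x])

@[fun_prop]
lemma continuous_semicircle : Continuous semicircle := by
  unfold semicircle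
  fun_prop

@[fun_prop]
lemma measurable_semicircle : Measurable semicircle := continuous_semicircle.measurable

lemma integrable_semicircle_mul {g : ℝ → ℝ} (hg : Integrable g μI) :
    Integrable (fun t => semicircle t * g t) μI := by
  refine hg.bdd_mul (c := 1) (by fun_prop) (.of_forall fun t => ?_)
  rw [Real.norm_of_nonneg (semicircle_nonneg t)]
  exact semicircle_le_one t

lemma semicircle_cos {θ : ℝ} (hθ : θ ∈ Ioo 0 Real.pi) :
    semicircle (Real.cos θ) = Real.sin θ := by
  rw [semicircle, ← Real.sin_sq, Real.sqrt_sq (Real.sin_pos_of_mem_Ioo hθ).le]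

lemma integral_semicircle_inv_smul {E : Type*} [NormedAddCommGroup E] [NormedSpace ℝ E]
    (φ : ℝ → E) :
    ∫ t, (semicircle t)⁻¹ • φ t ∂μI = ∫ θ in (0 : ℝ)..Real.pi, φ (Real.cos θ) := by
  have himage : Real.cos '' Ioo 0 Real.pi = Ioo (-1 : ℝ) 1 :=
    Real.cosPartialHomeomorph.image_source_eq_target
  rw [μI, ← himage, integral_image_eq_integral_abs_deriv_smul measurableSet_Ioo
    (fun x _ => (Real.hasDerivAt_cos x).hasDerivWithinAt)
    (Real.injOn_cos.mono Ioo_subset_Icc_self),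
    intervalIntegral.integral_of_le Real.pi_pos.le, integral_Ioc_eq_integral_Ioo]
  refine setIntegral_congr_fun measurableSet_Ioo fun θ hθ => ?_
  have hsin := Real.sin_pos_of_mem_Ioo hθ
  simp only [semicircle_cos hθ, abs_neg, abs_of_pos hsin, smul_smul, mul_inv_cancel₀ hsin.ne',
    one_smul]

lemma integrable_semicircle_inv : Integrable (fun t => (semicircle t)⁻¹) μI := by
  have h := (intervalIntegrable_iff_integrableOn_Ioo_of_le (by norm_num)).1
    Polynomial.Chebyshev.intervalIntegrable_sqrt_one_sub_sq_inv
  simpa only [IntegrableOn, μI, semicircle, Real.sqrt_inv] using h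

lemma integral_semicircle_inv : ∫ t, (semicircle t)⁻¹ ∂μI = Real.pi := by
  simpa using integral_semicircle_inv_smul fun _ : ℝ => (1 : ℝ)

lemma integral_id_mul_semicircle_inv : ∫ t, t * (semicircle t)⁻¹ ∂μI = 0 := by
  simpa [mul_comm] using integral_semicircle_inv_smul fun t : ℝ => t

/-- The Cauchy transform of the arcsine weight `1 / √(1 - x²)`, a branch of
`-π / √(z² - 1)`. -/
def arcsineTransform (z : ℂ) : ℂ := cauchyTransform μI (fun t => (semicircle t)⁻¹) z

lemma arcsineTransform_eq_integral_cos (z : ℂ) :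
    arcsineTransform z = ∫ θ in (0 : ℝ)..Real.pi, ((Real.cos θ : ℂ) - z)⁻¹ := by
  rw [← integral_semicircle_inv_smul fun t : ℝ => ((t : ℂ) - z)⁻¹]
  simp only [arcsineTransform, cauchyTransform, div_eq_mul_inv, Complex.real_smul]

lemma integral_cos_sub_inv_two_pi {z : ℂ} (hz : z.im ≠ 0) :
    ∫ θ in (0 : ℝ)..2 * Real.pi, ((Real.cos θ : ℂ) - z)⁻¹ = 2 * arcsineTransform z := by
  have hc : Continuous fun θ : ℝ => ((Real.cos θ : ℂ) - z)⁻¹ :=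
    .inv₀ (by fun_prop) fun θ => ofReal_sub_ne_zero _ hz
  have hsymm := intervalIntegral.integral_comp_sub_left (a := 0) (b := Real.pi)
    (fun θ : ℝ => ((Real.cos θ : ℂ) - z)⁻¹) (2 * Real.pi)
  rw [sub_zero, two_mul Real.pi, add_sub_cancel_right, ← two_mul] at hsymm
  simp only [Real.cos_two_pi_sub] at hsymm
  rw [← intervalIntegral.integral_add_adjacent_intervals (b := Real.pi)
    (hc.intervalIntegrable _ _) (hc.intervalIntegrable _ _), arcsineTransform_eq_integral_cos,
    two_mul (∫ _ in _.._, _), ← hsymm]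

lemma norm_ne_one_of_add_eq_of_mul_eq_one {z a b : ℂ} (hz : z.im ≠ 0) (hadd : a + b = 2 * z)
    (hmul : a * b = 1) : ‖a‖ ≠ 1 := fun hnorm => by
  have ha : a ≠ 0 := norm_ne_zero_iff.1 (by simp [hnorm])
  have hb : b = starRingEnd ℂ a := mul_left_cancel₀ ha <| by
    rw [hmul, Complex.mul_conj, Complex.normSq_eq_norm_sq, hnorm]
    simp
  have him : 0 = 2 * z.im := by simpa [hb] using congrArg Complex.im hadd
  exact hz (by linarith)

/-- The two solutions of `(ζ + ζ⁻¹) / 2 = z`. -/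
lemma exists_joukowski_roots {z : ℂ} (hz : z.im ≠ 0) :
    ∃ a b : ℂ, a + b = 2 * z ∧ a * b = 1 ∧ ‖a‖ < 1 ∧ 1 < ‖b‖ := by
  obtain ⟨s, hs⟩ := IsAlgClosed.exists_pow_nat_eq (z ^ 2 - 1) (n := 2) two_pos
  have hadd : (z + s) + (z - s) = 2 * z := by ring
  have hmul : (z + s) * (z - s) = 1 := by linear_combination -hs
  have hnorm : ‖z + s‖ * ‖z - s‖ = 1 := by rw [← norm_mul, hmul, norm_one]
  rcases (norm_ne_one_of_add_eq_of_mul_eq_one hz hadd hmul).lt_or_gt with h | h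
  · exact ⟨z + s, z - s, hadd, hmul, h, by nlinarith [norm_nonneg (z + s)]⟩
  · exact ⟨z - s, z + s, by rw [add_comm, hadd], by rw [mul_comm, hmul],
      by nlinarith [norm_nonneg (z - s)], h⟩

lemma circleIntegral_sub_inv_of_one_lt_norm {b : ℂ} (hb : 1 < ‖b‖) :
    ∮ ζ in C(0, 1), (ζ - b)⁻¹ = 0 := by
  refine DiffContOnCl.circleIntegral_eq_zero zero_le_one ?_
  refine (DifferentiableOn.inv (by fun_prop) fun ζ hζ h => ?_).diffContOnCl
  rw [sub_eq_zero.1 h] at hζ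
  have := Metric.closure_ball_subset_closedBall hζ
  rw [mem_closedBall_zero_iff] at this
  linarith

lemma deriv_circleMap_smul_sub {z a b : ℂ} (hadd : a + b = 2 * z) (hmul : a * b = 1)
    (ha : ‖a‖ ≠ 1) (hb : ‖b‖ ≠ 1) (θ : ℝ) :
    deriv (circleMap 0 1) θ • ((circleMap 0 1 θ - a)⁻¹ - (circleMap 0 1 θ - b)⁻¹) =
      ((a - b) * Complex.I / 2) * ((Real.cos θ : ℂ) - z)⁻¹ := by
  rw [deriv_circleMap, smul_eq_mul]
  set ζ := circleMap 0 1 θ with hζ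
  have hnorm : ‖ζ‖ = 1 := by simp [hζ]
  have hζ0 : ζ ≠ 0 := norm_ne_zero_iff.1 (by simp [hnorm])
  have hζa : ζ - a ≠ 0 := sub_ne_zero.2 fun h => ha (h ▸ hnorm)
  have hζb : ζ - b ≠ 0 := sub_ne_zero.2 fun h => hb (h ▸ hnorm)
  have hcos : (Real.cos θ : ℂ) = (ζ + ζ⁻¹) / 2 := by
    rw [hζ, circleMap, zero_add, Complex.ofReal_one, one_mul, ← Complex.exp_neg,
      Complex.ofReal_cos, Complex.cos, neg_mul]
  have hfactor : (Real.cos θ : ℂ) - z = (ζ - a) * (ζ - b) / (2 * ζ) := by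
    rw [hcos]
    field_simp
    linear_combination -hmul + ζ * hadd
  rw [hfactor]
  field_simp
  ring

-- The substitution `ζ = exp (iθ)` turns `∫ dθ / (cos θ - z)` over a period into a contour integral
-- over the unit circle, whose only pole inside is `a`.
lemma arcsineTransform_mul_sub {z a b : ℂ} (hz : z.im ≠ 0) (hadd : a + b = 2 * z)
    (hmul : a * b = 1) (ha : ‖a‖ < 1) (hb : 1 < ‖b‖) :
    arcsineTransform z * (a - b) = 2 * Real.pi := by
  have hcirc {c : ℂ} (hc : ‖c‖ ≠ 1) : CircleIntegrable (fun ζ => (ζ - c)⁻¹) 0 1 := by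
    rw [circleIntegrable_sub_inv_iff]
    simp [hc]
  have hcircle := circleIntegral.integral_sub (hcirc ha.ne) (hcirc hb.ne')
  rw [circleIntegral.integral_sub_inv_of_mem_ball (by simpa using ha),
    circleIntegral_sub_inv_of_one_lt_norm hb, sub_zero, circleIntegral] at hcircle
  simp_rw [deriv_circleMap_smul_sub hadd hmul ha.ne hb.ne'] at hcircle
  rw [intervalIntegral.integral_const_mul, integral_cos_sub_inv_two_pi hz] at hcircle
  refine mul_right_cancel₀ Complex.I_ne_zero ?_
  linear_combination hcircle

theorem arcsineTransform_sq_mul {z : ℂ} (hz : z.im ≠ 0) :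
    arcsineTransform z ^ 2 * (z ^ 2 - 1) = (Real.pi : ℂ) ^ 2 := by
  obtain ⟨a, b, hadd, hmul, ha, hb⟩ := exists_joukowski_roots hz
  have h := arcsineTransform_mul_sub hz hadd hmul ha hb
  have hz2 : z ^ 2 - 1 = (a - b) ^ 2 / 4 := by
    linear_combination (-(a + b) / 4 - z / 2) * hadd + hmul
  rw [hz2]
  linear_combination (arcsineTransform z * (a - b) + 2 * Real.pi) / 4 * h

/-! ### The airfoil equation on the Cauchy transform side -/

/-- `IsAirfoilPair f g` says that `f` solves the airfoil equation `T f = g` in the form of the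
identity `C f = -π⁻¹ S · C (w g)` between Cauchy transforms on the upper half plane, where
`w = √(1 - x²)` and `S` is the Cauchy transform of `1 / w`. -/
structure IsAirfoilPair (f g : ℝ → ℝ) : Prop where
  integrable_left : Integrable f μI
  integrable_right : Integrable g μI
  cauchyTransform_eq : ∀ z : ℂ, 0 < z.im → cauchyTransform μI f z =
    -(Real.pi : ℂ)⁻¹ * arcsineTransform z * cauchyTransform μI (fun t => semicircle t * g t) z

namespace IsAirfoilPair

variable {f g f' g' : ℝ → ℝ}

protected lemma add (h : IsAirfoilPair f g) (h' : IsAirfoilPair f' g') :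
    IsAirfoilPair (fun t => f t + f' t) (fun t => g t + g' t) where
  integrable_left := h.integrable_left.add h'.integrable_left
  integrable_right := h.integrable_right.add h'.integrable_right
  cauchyTransform_eq z hz := by
    simp only [mul_add]
    rw [cauchyTransform_add h.integrable_left h'.integrable_left hz.ne',
      cauchyTransform_add (integrable_semicircle_mul h.integrable_right)
        (integrable_semicircle_mul h'.integrable_right) hz.ne',
      h.cauchyTransform_eq z hz, h'.cauchyTransform_eq z hz, mul_add]

protected lemma const_mul (c : ℝ) (h : IsAirfoilPair f g) :
    IsAirfoilPair (fun t => c * f t) (fun t => c * g t) where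
  integrable_left := h.integrable_left.const_mul c
  integrable_right := h.integrable_right.const_mul c
  cauchyTransform_eq z hz := by
    simp only [mul_left_comm _ c]
    rw [cauchyTransform_const_mul, cauchyTransform_const_mul, h.cauchyTransform_eq z hz]
    ring

protected lemma sub (h : IsAirfoilPair f g) (h' : IsAirfoilPair f' g') :
    IsAirfoilPair (fun t => f t - f' t) (fun t => g t - g' t) := by
  simpa [sub_eq_add_neg] using h.add (h'.const_mul (-1))

-- Compare the leading terms of both sides as `z → i∞`.
lemma integral_left_eq_zero (h : IsAirfoilPair f g) : ∫ t, f t ∂μI = 0 := by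
  have hright := ((tendsto_mul_cauchyTransform_atTop integrable_semicircle_inv).mul
    (tendsto_cauchyTransform_atTop (integrable_semicircle_mul h.integrable_right))).const_mul
      (-(Real.pi : ℂ)⁻¹)
  have hleft := tendsto_mul_cauchyTransform_atTop h.integrable_left
  have := tendsto_nhds_unique hleft <| hright.congr' <| by
    filter_upwards [eventually_gt_atTop 0] with y hy
    rw [h.cauchyTransform_eq _ (by simpa using hy), arcsineTransform]
    ring
  simpa using this

lemma one : IsAirfoilPair (fun t => t * (semicircle t)⁻¹) (fun _ => 1) where
  integrable_left := integrable_id_mul integrable_semicircle_inv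
  integrable_right := integrable_const 1
  cauchyTransform_eq z hz := by
    have hinv := integrable_semicircle_inv
    have hweight : (fun t => semicircle t * 1) =ᵐ[μI]
        fun t => (semicircle t)⁻¹ - t * (t * (semicircle t)⁻¹) := by
      filter_upwards [ae_mem_Ioo] with t ht
      have := semicircle_pos ht
      field_simp
      exact semicircle_sq ht
    have hsq := arcsineTransform_sq_mul hz.ne'
    rw [cauchyTransform_congr hweight,
      cauchyTransform_sub hinv (integrable_id_mul (integrable_id_mul hinv)) hz.ne',
      cauchyTransform_id_mul (integrable_id_mul hinv) hz.ne', cauchyTransform_id_mul hinv hz.ne',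
      integral_id_mul_semicircle_inv, integral_semicircle_inv, ← arcsineTransform]
    have hpi : (Real.pi : ℂ) ≠ 0 := Complex.ofReal_ne_zero.2 Real.pi_ne_zero
    push_cast
    field_simp
    linear_combination -hsq

-- The correction by a multiple of the homogeneous solution `1 / w` restores the identity.
lemma id_mul (h : IsAirfoilPair f g) : IsAirfoilPair
    (fun t => t * f t - (Real.pi⁻¹ * ∫ s, semicircle s * g s ∂μI) * (semicircle t)⁻¹)
    (fun t => t * g t) where
  integrable_left :=
    (integrable_id_mul h.integrable_left).sub (integrable_semicircle_inv.const_mul _)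
  integrable_right := integrable_id_mul h.integrable_right
  cauchyTransform_eq z hz := by
    simp only [mul_left_comm (semicircle _)]
    rw [cauchyTransform_sub (integrable_id_mul h.integrable_left)
        (integrable_semicircle_inv.const_mul _) hz.ne', cauchyTransform_const_mul,
      cauchyTransform_id_mul h.integrable_left hz.ne',
      cauchyTransform_id_mul (integrable_semicircle_mul h.integrable_right) hz.ne',
      h.integral_left_eq_zero, h.cauchyTransform_eq z hz, ← arcsineTransform]
    push_cast
    ring

lemma exists_pow (n : ℕ) : ∃ f, IsAirfoilPair f fun t => t ^ n := by
  induction n with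
  | zero => exact ⟨_, by simpa using one⟩
  | succ n ih =>
    obtain ⟨f, hf⟩ := ih
    exact ⟨_, by simpa only [pow_succ'] using hf.id_mul⟩

theorem exists_polynomial (p : Polynomial ℝ) : ∃ f, IsAirfoilPair f fun t => p.eval t := by
  induction p using Polynomial.induction_on' with
  | add p q hp hq =>
    obtain ⟨f, hf⟩ := hp
    obtain ⟨f', hf'⟩ := hq
    exact ⟨_, by simpa only [Polynomial.eval_add] using hf.add hf'⟩
  | monomial n a =>
    obtain ⟨f, hf⟩ := exists_pow n
    exact ⟨_, by simpa using hf.const_mul a⟩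

end IsAirfoilPair

/-! ### Boundary behaviour of kernels dominated by the Poisson kernel -/

/-- The Poisson kernel `y / (s² + y²)` of the upper half-plane at height `y`, normalised to have
total mass `π`, so that it is the imaginary part of `1 / (s - iy)`. -/
def halfPlanePoisson (y s : ℝ) : ℝ := y / (s ^ 2 + y ^ 2)

section HalfPlanePoisson

variable {y : ℝ}

lemma halfPlanePoisson_nonneg (hy : 0 < y) (s : ℝ) : 0 ≤ halfPlanePoisson y s := by
  unfold halfPlanePoisson
  positivity

@[fun_prop]
lemma measurable_halfPlanePoisson (y : ℝ) : Measurable (halfPlanePoisson y) := by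
  unfold halfPlanePoisson
  fun_prop

lemma halfPlanePoisson_eq_inv_one_add_sq (hy : 0 < y) :
    halfPlanePoisson y = fun s => y⁻¹ * (1 + (s / y) ^ 2)⁻¹ := by
  ext s
  unfold halfPlanePoisson
  field_simp
  ring

lemma halfPlanePoisson_le_inv (hy : 0 < y) (s : ℝ) : halfPlanePoisson y s ≤ y⁻¹ := by
  rw [halfPlanePoisson_eq_inv_one_add_sq hy]
  have : (1 + (s / y) ^ 2)⁻¹ ≤ 1 := inv_le_one_of_one_le₀ (by nlinarith [sq_nonneg (s / y)])
  simpa using mul_le_mul_of_nonneg_left this (inv_pos.2 hy).le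

lemma integrable_halfPlanePoisson (hy : 0 < y) : Integrable (halfPlanePoisson y) := by
  rw [halfPlanePoisson_eq_inv_one_add_sq hy]
  exact (integrable_inv_one_add_sq.comp_div hy.ne').const_mul _

lemma integral_halfPlanePoisson (hy : 0 < y) : ∫ s, halfPlanePoisson y s = Real.pi := by
  rw [halfPlanePoisson_eq_inv_one_add_sq hy, integral_const_mul,
    Measure.integral_comp_div fun s : ℝ => (1 + s ^ 2)⁻¹, integral_univ_inv_one_add_sq,
    abs_of_pos hy, smul_eq_mul, inv_mul_cancel_left₀ hy.ne']

lemma exists_halfPlanePoisson_le_dyadic (hy : 0 < y) (s : ℝ) :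
    ∃ k : ℕ, |s| ≤ 2 ^ k * y ∧ halfPlanePoisson y s ≤ 4 * (1 / 2) ^ k / (2 ^ k * y) := by
  rcases le_or_gt |s| y with h | h
  · refine ⟨0, by simpa using h, (halfPlanePoisson_le_inv hy s).trans ?_⟩
    rw [pow_zero, pow_zero, one_mul, ← one_div]
    gcongr
    norm_num
  · obtain ⟨k, hk, hk'⟩ := exists_nat_pow_near (x := |s| / y) (y := (2 : ℝ))
      (by rw [le_div_iff₀ hy]; linarith) (by norm_num)
    rw [le_div_iff₀ hy] at hk
    rw [div_lt_iff₀ hy] at hk'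
    refine ⟨k + 1, hk'.le, ?_⟩
    have hs : (2 ^ k * y) ^ 2 ≤ s ^ 2 + y ^ 2 := by
      rw [← sq_abs s]
      nlinarith [pow_le_pow_left₀ (by positivity) hk 2, sq_nonneg y]
    calc halfPlanePoisson y s ≤ y / (2 ^ k * y) ^ 2 := by unfold halfPlanePoisson; gcongr
      _ = 4 * (1 / 2) ^ (k + 1) / (2 ^ (k + 1) * y) := by
        rw [one_div, inv_pow]
        field_simp
        ring

variable {F : ℝ → ℝ} {x : ℝ}

lemma integral_mul_halfPlanePoisson_le_tsum (hF0 : ∀ t, 0 ≤ F t) (hF : LocallyIntegrable F)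
    (hy : 0 < y) (hs : Summable fun k : ℕ =>
      4 * (1 / 2) ^ k * ((∫ t in Metric.closedBall x (2 ^ k * y), F t) / (2 ^ k * y))) :
    ∫ t, F t * halfPlanePoisson y (t - x) ≤ ∑' k : ℕ,
      4 * (1 / 2) ^ k * ((∫ t in Metric.closedBall x (2 ^ k * y), F t) / (2 ^ k * y)) := by
  have hball : ∀ r, MeasurableSet (Metric.closedBall x r) := fun r => measurableSet_closedBall
  have hFm : AEMeasurable F := hF.aestronglyMeasurable.aemeasurable
  have hFP : ∀ t, 0 ≤ F t * halfPlanePoisson y (t - x) :=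
    fun t => mul_nonneg (hF0 t) (halfPlanePoisson_nonneg hy _)
  have hterm : ∀ k : ℕ, 0 ≤
      4 * (1 / 2) ^ k * ((∫ t in Metric.closedBall x (2 ^ k * y), F t) / (2 ^ k * y)) :=
    fun k => mul_nonneg (by positivity)
      (div_nonneg (integral_nonneg fun t => hF0 t) (by positivity))
  rw [integral_eq_lintegral_of_nonneg_ae (.of_forall hFP)
    (hFm.mul (by fun_prop)).aestronglyMeasurable]
  refine ENNReal.toReal_le_of_le_ofReal (tsum_nonneg hterm) ?_
  rw [ENNReal.ofReal_tsum_of_nonneg hterm hs]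
  calc ∫⁻ t, ENNReal.ofReal (F t * halfPlanePoisson y (t - x))
      ≤ ∫⁻ t, ∑' k : ℕ, ENNReal.ofReal (4 * (1 / 2) ^ k / (2 ^ k * y)) *
          (Metric.closedBall x (2 ^ k * y)).indicator (fun t => ENNReal.ofReal (F t)) t := by
        refine lintegral_mono fun t => ?_
        obtain ⟨k, hk, hle⟩ := exists_halfPlanePoisson_le_dyadic hy (t - x)
        refine le_trans ?_ (ENNReal.le_tsum k)
        rw [indicator_of_mem (Metric.mem_closedBall.2 hk), ← ENNReal.ofReal_mul (by positivity),
          mul_comm]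
        exact ENNReal.ofReal_le_ofReal (mul_le_mul_of_nonneg_right hle (hF0 t))
    _ = ∑' k : ℕ, ENNReal.ofReal
          (4 * (1 / 2) ^ k * ((∫ t in Metric.closedBall x (2 ^ k * y), F t) / (2 ^ k * y))) := by
        rw [lintegral_tsum fun k => (hFm.ennreal_ofReal.indicator (hball _)).const_mul _]
        congr with k
        rw [lintegral_const_mul'' _ (hFm.ennreal_ofReal.indicator (hball _)),
          lintegral_indicator (hball _), ← ofReal_integral_eq_lintegral_ofReal
            (hF.integrableOn_isCompact (isCompact_closedBall _ _)) (.of_forall hF0),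
          ← ENNReal.ofReal_mul (by positivity), mul_div_left_comm, mul_comm]

lemma tendsto_integral_mul_halfPlanePoisson_zero (hF0 : ∀ t, 0 ≤ F t) (hF : LocallyIntegrable F)
    {C : ℝ} (hC : ∀ r, 0 < r → (∫ t in Metric.closedBall x r, F t) / r ≤ C)
    (hlim : Tendsto (fun r => (∫ t in Metric.closedBall x r, F t) / r) (𝓝[>] 0) (𝓝 0)) :
    Tendsto (fun y => ∫ t, F t * halfPlanePoisson y (t - x)) (𝓝[>] 0) (𝓝 0) := by
  set A : ℝ → ℝ := fun r => (∫ t in Metric.closedBall x r, F t) / r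
  have hgeo : Summable fun k : ℕ => 4 * (1 / 2 : ℝ) ^ k * C :=
    ((summable_geometric_of_lt_one (by norm_num) (by norm_num)).mul_left 4).mul_right C
  have hbound : ∀ y, 0 < y → ∀ k : ℕ,
      ‖4 * (1 / 2) ^ k * A (2 ^ k * y)‖ ≤ 4 * (1 / 2 : ℝ) ^ k * C := by
    intro y hy k
    have hA : 0 ≤ A (2 ^ k * y) := div_nonneg (integral_nonneg fun t => hF0 t) (by positivity)
    rw [Real.norm_of_nonneg (by positivity)]
    gcongr
    exact hC _ (by positivity)
  have hsum : Tendsto (fun y => ∑' k : ℕ, 4 * (1 / 2 : ℝ) ^ k * A (2 ^ k * y))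
      (𝓝[>] 0) (𝓝 (∑' _ : ℕ, (0 : ℝ))) := by
    refine tendsto_tsum_of_dominated_convergence hgeo (fun k => ?_)
      (eventually_mem_nhdsWithin.mono fun y hy => hbound y hy)
    have hscale : Tendsto (fun y : ℝ => 2 ^ k * y) (𝓝[>] 0) (𝓝[>] 0) :=
      tendsto_nhdsWithin_iff.2 ⟨tendsto_nhdsWithin_of_tendsto_nhds
          (by simpa using (continuous_const_mul ((2 : ℝ) ^ k)).tendsto 0),
        eventually_mem_nhdsWithin.mono fun y (hy : 0 < y) => mem_Ioi.2 (by positivity)⟩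
    simpa using (hlim.comp hscale).const_mul (4 * (1 / 2 : ℝ) ^ k)
  rw [tsum_zero] at hsum
  refine tendsto_of_tendsto_of_tendsto_of_le_of_le' tendsto_const_nhds hsum ?_ ?_
  · filter_upwards [self_mem_nhdsWithin] with y hy
    exact integral_nonneg fun t => mul_nonneg (hF0 t) (halfPlanePoisson_nonneg hy _)
  · filter_upwards [self_mem_nhdsWithin] with y hy
    exact integral_mul_halfPlanePoisson_le_tsum hF0 hF hy (.of_norm_bounded hgeo (hbound y hy))

end HalfPlanePoisson

section LebesguePoint

variable {f : ℝ → ℝ} {x : ℝ}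

lemma locallyIntegrable_abs_sub (hf : Integrable f) (a : ℝ) :
    LocallyIntegrable fun t => |f t - a| :=
  (hf.locallyIntegrable.sub (locallyIntegrable_const a)).mono
    (hf.aestronglyMeasurable.sub aestronglyMeasurable_const).norm
    (.of_forall fun _ => (abs_abs _).le)

lemma ae_tendsto_setIntegral_abs_sub_div (hf : Integrable f) : ∀ᵐ x,
    Tendsto (fun r => (∫ t in Metric.closedBall x r, |f t - f x|) / r) (𝓝[>] 0) (𝓝 0) := by
  filter_upwards [IsUnifLocDoublingMeasure.ae_tendsto_average_norm_sub volume
    hf.locallyIntegrable 1] with x hx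
  have h := (hx (fun _ => x) id tendsto_id (eventually_mem_nhdsWithin.mono fun r (hr : 0 < r) =>
    Metric.mem_closedBall_self (by simpa using hr.le))).const_mul 2
  rw [mul_zero] at h
  refine h.congr' (eventually_mem_nhdsWithin.mono fun r (hr : 0 < r) => ?_)
  simp only [id, setAverage_eq, Real.volume_real_closedBall hr.le, smul_eq_mul, Real.norm_eq_abs]
  field_simp

lemma setIntegral_abs_sub_le (hf : Integrable f) (a x : ℝ) {r : ℝ} (hr : 0 ≤ r) :
    ∫ t in Metric.closedBall x r, |f t - a| ≤ (∫ t, |f t|) + 2 * r * |a| := by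
  have hconst : IntegrableOn (fun _ : ℝ => |a|) (Metric.closedBall x r) :=
    integrableOn_const measure_closedBall_lt_top.ne
  calc ∫ t in Metric.closedBall x r, |f t - a|
      ≤ ∫ t in Metric.closedBall x r, (|f t| + |a|) :=
        integral_mono ((locallyIntegrable_abs_sub hf a).integrableOn_isCompact
          (isCompact_closedBall x r)) (hf.abs.integrableOn.add hconst) fun t => abs_sub _ _
    _ = (∫ t in Metric.closedBall x r, |f t|) + 2 * r * |a| := by
        rw [integral_add hf.abs.integrableOn hconst, setIntegral_const,
          Real.volume_real_closedBall hr, smul_eq_mul]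
    _ ≤ (∫ t, |f t|) + 2 * r * |a| := by
        gcongr ?_ + _
        exact setIntegral_le_integral hf.abs (.of_forall fun _ => abs_nonneg _)

lemma exists_setIntegral_abs_sub_div_le (hf : Integrable f)
    (hx : Tendsto (fun r => (∫ t in Metric.closedBall x r, |f t - f x|) / r) (𝓝[>] 0) (𝓝 0)) :
    ∃ C, ∀ r, 0 < r → (∫ t in Metric.closedBall x r, |f t - f x|) / r ≤ C := by
  obtain ⟨δ, hδ, hsmall⟩ := mem_nhdsGT_iff_exists_Ioo_subset.1 (hx.eventually_le_const one_pos)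
  refine ⟨max 1 ((∫ t, |f t|) / δ + 2 * |f x|), fun r hr => ?_⟩
  rcases lt_or_ge r δ with h | h
  · exact (hsmall ⟨hr, h⟩).trans (le_max_left _ _)
  · refine le_max_of_le_right ?_
    have hδ : 0 < δ := hδ
    calc (∫ t in Metric.closedBall x r, |f t - f x|) / r
        ≤ ((∫ t, |f t|) + 2 * r * |f x|) / r := by gcongr; exact setIntegral_abs_sub_le hf _ x hr.le
      _ = (∫ t, |f t|) / r + 2 * |f x| := by field_simp
      _ ≤ (∫ t, |f t|) / δ + 2 * |f x| := by
        gcongr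

theorem ae_tendsto_integral_abs_sub_mul_halfPlanePoisson (hf : Integrable f) : ∀ᵐ x,
    Tendsto (fun y => ∫ t, |f t - f x| * halfPlanePoisson y (t - x)) (𝓝[>] 0) (𝓝 0) := by
  filter_upwards [ae_tendsto_setIntegral_abs_sub_div hf] with x hx
  obtain ⟨C, hC⟩ := exists_setIntegral_abs_sub_div_le hf hx
  exact tendsto_integral_mul_halfPlanePoisson_zero (fun t => abs_nonneg _)
    (locallyIntegrable_abs_sub hf _) hC hx

end LebesguePoint

section DominatedKernel

variable {f k : ℝ → ℝ} {y : ℝ}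

lemma integrable_mul_of_le_halfPlanePoisson (hf : Integrable f) (hkm : Measurable k) (hy : 0 < y)
    (hk : ∀ s, |k s| ≤ halfPlanePoisson y s) (x : ℝ) : Integrable fun t => f t * k (t - x) :=
  hf.mul_bdd (c := y⁻¹) (hkm.comp (measurable_sub_const x)).aestronglyMeasurable
    (.of_forall fun _ => (hk _).trans (halfPlanePoisson_le_inv hy _))

lemma integrable_of_le_halfPlanePoisson (hkm : Measurable k) (hy : 0 < y)
    (hk : ∀ s, |k s| ≤ halfPlanePoisson y s) : Integrable k :=
  (integrable_halfPlanePoisson hy).mono' hkm.aestronglyMeasurable (.of_forall hk)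

lemma abs_integral_mul_sub_le (hf : Integrable f) (hkm : Measurable k) (hy : 0 < y)
    (hk : ∀ s, |k s| ≤ halfPlanePoisson y s) (a x : ℝ) :
    |(∫ t, f t * k (t - x)) - (∫ s, k s) * a| ≤ ∫ t, |f t - a| * halfPlanePoisson y (t - x) := by
  have hki : Integrable fun t => k (t - x) :=
    (integrable_of_le_halfPlanePoisson hkm hy hk).comp_sub_right x
  have hP : ∀ s, |halfPlanePoisson y s| ≤ halfPlanePoisson y s :=
    fun s => (abs_of_nonneg (halfPlanePoisson_nonneg hy s)).le
  have hmean : (∫ t, f t * k (t - x)) - (∫ s, k s) * a = ∫ t, (f t - a) * k (t - x) := by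
    simp only [sub_mul]
    rw [integral_sub (integrable_mul_of_le_halfPlanePoisson hf hkm hy hk x) (hki.const_mul a),
      integral_const_mul, integral_sub_right_eq_self k, mul_comm a]
  rw [hmean]
  refine norm_integral_le_of_norm_le (f := fun t => (f t - a) * k (t - x)) ?_
    (.of_forall fun t => ?_)
  · refine (((integrable_mul_of_le_halfPlanePoisson hf (by fun_prop) hy hP x).sub
      (((integrable_halfPlanePoisson hy).comp_sub_right x).const_mul a)).abs).congr
        (.of_forall fun t => ?_)
    simp only [Pi.sub_apply, ← sub_mul, abs_mul, abs_of_nonneg (halfPlanePoisson_nonneg hy _)]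
  · rw [norm_mul, Real.norm_eq_abs, Real.norm_eq_abs]
    gcongr
    exact hk _

theorem ae_tendsto_integral_mul_of_le_halfPlanePoisson (hf : Integrable f) {k : ℝ → ℝ → ℝ}
    {c : ℝ} (hkm : ∀ y, Measurable (k y))
    (hk : ∀ y, 0 < y → ∀ s, |k y s| ≤ halfPlanePoisson y s) (hc : ∀ y, 0 < y → ∫ s, k y s = c) :
    ∀ᵐ x, Tendsto (fun y => ∫ t, f t * k y (t - x)) (𝓝[>] 0) (𝓝 (c * f x)) := by
  filter_upwards [ae_tendsto_integral_abs_sub_mul_halfPlanePoisson hf] with x hx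
  rw [tendsto_iff_norm_sub_tendsto_zero]
  refine tendsto_of_tendsto_of_tendsto_of_le_of_le' tendsto_const_nhds hx
    (.of_forall fun _ => norm_nonneg _) (eventually_mem_nhdsWithin.mono fun y hy => ?_)
  simpa only [hc y hy, Real.norm_eq_abs] using
    abs_integral_mul_sub_le hf (hkm y) hy (hk y hy) (f x) x

end DominatedKernel

/-- The Hilbert kernel `1 / s` truncated at `|s| < y`, minus its smooth regularisation
`s / (s² + y²)`, the real part of `1 / (s - iy)`. -/
def hilbertKernelDefect (y s : ℝ) : ℝ := (if y ≤ |s| then s⁻¹ else 0) - s / (s ^ 2 + y ^ 2)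

lemma measurable_hilbertKernelDefect (y : ℝ) : Measurable (hilbertKernelDefect y) :=
  (Measurable.ite (measurableSet_le measurable_const (by fun_prop)) (by fun_prop)
    (by fun_prop)).sub (by fun_prop)

lemma abs_hilbertKernelDefect_le {y : ℝ} (hy : 0 < y) (s : ℝ) :
    |hilbertKernelDefect y s| ≤ halfPlanePoisson y s := by
  have hd : 0 < s ^ 2 + y ^ 2 := by positivity
  unfold hilbertKernelDefect halfPlanePoisson
  split_ifs with h
  · have hs : 0 < |s| := hy.trans_le h
    have hs' : s ≠ 0 := abs_pos.1 hs
    have hdiff : s⁻¹ - s / (s ^ 2 + y ^ 2) = y ^ 2 / (s * (s ^ 2 + y ^ 2)) := by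
      field_simp
      ring
    rw [hdiff, abs_div, abs_mul, abs_of_pos hd, abs_of_nonneg (sq_nonneg y), ← div_div]
    gcongr
    rw [div_le_iff₀ hs, sq]
    gcongr
  · rw [zero_sub, abs_neg, abs_div, abs_of_pos hd]
    gcongr
    exact (not_le.1 h).le

lemma integral_hilbertKernelDefect (y : ℝ) : ∫ s, hilbertKernelDefect y s = 0 := by
  have hodd : ∀ s, hilbertKernelDefect y (-s) = -hilbertKernelDefect y s := by
    intro s
    unfold hilbertKernelDefect
    rw [abs_neg]
    split_ifs
    · rw [inv_neg, neg_sq, neg_div, neg_sub_neg, neg_sub]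
    · rw [neg_sq, neg_div, zero_sub, zero_sub]
  have h := integral_neg_eq_self (hilbertKernelDefect y) volume
  simp_rw [hodd, integral_neg] at h
  linarith

/-! ### Boundary values and principal values -/

lemma integral_mul_eq_integral_indicator_mul (f k : ℝ → ℝ) :
    ∫ t, f t * k t ∂μI = ∫ t, (Ioo (-1 : ℝ) 1).indicator f t * k t := by
  simp only [μI, ← integral_indicator measurableSet_Ioo, ← indicator_mul_left]

section BoundaryValues

variable {f g : ℝ → ℝ} {x y : ℝ}

lemma ae_tendsto_integral_mul_kernel (hf : Integrable f μI) {k : ℝ → ℝ → ℝ} {c : ℝ}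
    (hkm : ∀ y, Measurable (k y)) (hk : ∀ y, 0 < y → ∀ s, |k y s| ≤ halfPlanePoisson y s)
    (hc : ∀ y, 0 < y → ∫ s, k y s = c) :
    ∀ᵐ x ∂μI, Tendsto (fun y => ∫ t, f t * k y (t - x) ∂μI) (𝓝[>] 0) (𝓝 (c * f x)) := by
  have hf' : Integrable ((Ioo (-1 : ℝ) 1).indicator f) :=
    (integrable_indicator_iff measurableSet_Ioo).2 hf
  filter_upwards [ae_mem_Ioo, ae_restrict_of_ae
    (ae_tendsto_integral_mul_of_le_halfPlanePoisson hf' hkm hk hc)] with x hx h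
  simpa only [integral_mul_eq_integral_indicator_mul, indicator_of_mem hx] using h

lemma ae_tendsto_im_cauchyTransform (hf : Integrable f μI) : ∀ᵐ x : ℝ ∂μI,
    Tendsto (fun y : ℝ => (cauchyTransform μI f (x + y * Complex.I)).im) (𝓝[>] 0)
      (𝓝 (Real.pi * f x)) := by
  filter_upwards [ae_tendsto_integral_mul_kernel hf measurable_halfPlanePoisson
    (fun y hy s => (abs_of_nonneg (halfPlanePoisson_nonneg hy s)).le)
    (fun y hy => integral_halfPlanePoisson hy)] with x hx
  exact hx.congr' (eventually_mem_nhdsWithin.mono fun y hy => (im_cauchyTransform hf x hy).symm)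

/-- The principal value integral defining the finite Hilbert transform, truncated at distance `y`
from the singularity `x` and without the factor `π⁻¹`. -/
def truncatedHilbert (f : ℝ → ℝ) (y x : ℝ) : ℝ :=
  ∫ t in {t : ℝ | t ∈ Ioo (-1 : ℝ) 1 ∧ y ≤ |t - x|}, f t / (t - x)

lemma measurableSet_truncation (x y : ℝ) :
    MeasurableSet {t : ℝ | t ∈ Ioo (-1 : ℝ) 1 ∧ y ≤ |t - x|} :=
  measurableSet_Ioo.inter (measurableSet_le measurable_const
    (by fun_prop : Measurable fun t : ℝ => |t - x|))

lemma truncatedHilbert_eq_integral_mul_ite (f : ℝ → ℝ) (y x : ℝ) :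
    truncatedHilbert f y x = ∫ t, f t * (if y ≤ |t - x| then (t - x)⁻¹ else 0) ∂μI := by
  rw [truncatedHilbert, μI, ← integral_indicator (measurableSet_truncation x y),
    ← integral_indicator measurableSet_Ioo]
  congr with t
  by_cases h : t ∈ Ioo (-1 : ℝ) 1 <;> by_cases h' : y ≤ |t - x| <;>
    simp only [indicator, mem_ofPred_eq, h, h', and_true, and_false, and_self, if_true, if_false,
      div_eq_mul_inv, mul_zero]

lemma truncatedHilbert_eq_re_cauchyTransform_add (hf : Integrable f μI) (x : ℝ) (hy : 0 < y) :
    truncatedHilbert f y x = (cauchyTransform μI f (x + y * Complex.I)).re +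
      ∫ t, f t * hilbertKernelDefect y (t - x) ∂μI := by
  have hdefect : Integrable (fun t => f t * hilbertKernelDefect y (t - x)) μI :=
    hf.mul_bdd (c := y⁻¹)
      ((measurable_hilbertKernelDefect y).comp (measurable_sub_const x)).aestronglyMeasurable
      (.of_forall fun _ =>
        (abs_hilbertKernelDefect_le hy _).trans (halfPlanePoisson_le_inv hy _))
  have hre : Integrable (fun t => f t * ((t - x) / ((t - x) ^ 2 + y ^ 2))) μI := by
    refine (integrable_div_ofReal_sub hf (im_add_mul_I_ne_zero x hy)).re.congr
      (.of_forall fun t => ?_)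
    simp [Complex.div_re, Complex.normSq_apply]
    ring
  rw [re_cauchyTransform hf x hy, truncatedHilbert_eq_integral_mul_ite,
    ← integral_add hre hdefect]
  congr with t
  unfold hilbertKernelDefect
  ring

lemma ae_tendsto_truncatedHilbert_sub_re_cauchyTransform (hf : Integrable f μI) :
    ∀ᵐ x : ℝ ∂μI, Tendsto (fun y : ℝ =>
      truncatedHilbert f y x - (cauchyTransform μI f (x + y * Complex.I)).re) (𝓝[>] 0) (𝓝 0) := by
  filter_upwards [ae_tendsto_integral_mul_kernel hf measurable_hilbertKernelDefect
    (fun y hy s => abs_hilbertKernelDefect_le hy s)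
    (fun y _ => integral_hilbertKernelDefect y)] with x hx
  rw [zero_mul] at hx
  refine hx.congr' (eventually_mem_nhdsWithin.mono fun y hy => ?_)
  simp only [truncatedHilbert_eq_re_cauchyTransform_add hf x hy, add_sub_cancel_left]

lemma semicircle_sq_le_norm_sq_sub_one (hx : x ∈ Ioo (-1 : ℝ) 1) (y : ℝ) :
    semicircle x ^ 2 ≤ ‖((x : ℂ) + y * Complex.I) ^ 2 - 1‖ := by
  have hleft : 1 - x ≤ ‖(x : ℂ) + y * Complex.I - 1‖ := by
    simpa using (neg_le_abs _).trans (Complex.abs_re_le_norm ((x : ℂ) + y * Complex.I - 1))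
  have hright : 1 + x ≤ ‖(x : ℂ) + y * Complex.I + 1‖ := by
    simpa [add_comm] using Complex.re_le_norm ((x : ℂ) + y * Complex.I + 1)
  calc semicircle x ^ 2 = (1 - x) * (1 + x) := by rw [semicircle_sq hx]; ring
    _ ≤ ‖(x : ℂ) + y * Complex.I - 1‖ * ‖(x : ℂ) + y * Complex.I + 1‖ :=
        mul_le_mul hleft hright (by linarith [hx.1]) (norm_nonneg _)
    _ = ‖((x : ℂ) + y * Complex.I) ^ 2 - 1‖ := by rw [← norm_mul]; ring_nf

lemma norm_sq_sub_add_mul_I_sq_le (hx : |x| ≤ 1) (hy : 0 ≤ y) (hy1 : y ≤ 1) :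
    ‖(x : ℂ) ^ 2 - (x + y * Complex.I) ^ 2‖ ≤ 3 * y := by
  have hfactor : (x : ℂ) ^ 2 - (x + y * Complex.I) ^ 2 = y * (y - 2 * x * Complex.I) := by
    linear_combination -(y : ℂ) ^ 2 * Complex.I_sq
  have hsub : ‖(y : ℂ) - 2 * x * Complex.I‖ ≤ 3 := by
    refine (norm_sub_le _ _).trans ?_
    simp only [norm_mul, Complex.norm_real, Real.norm_eq_abs, Complex.norm_I, Complex.norm_ofNat,
      abs_of_nonneg hy]
    linarith
  rw [hfactor, norm_mul, Complex.norm_of_nonneg hy, mul_comm]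
  gcongr

lemma div_semicircle_le_norm_arcsineTransform_add (hy : 0 < y) :
    Real.pi / semicircle x ≤ ‖arcsineTransform (x + y * Complex.I) +
      ((Real.pi / semicircle x : ℝ) : ℂ) * Complex.I‖ := by
  have him : 0 ≤ (arcsineTransform (x + y * Complex.I)).im := by
    rw [arcsineTransform, im_cauchyTransform integrable_semicircle_inv x hy]
    exact integral_nonneg fun t => by have := semicircle_nonneg t; positivity
  refine le_trans ?_ (Complex.im_le_norm _)
  simpa using him

lemma norm_arcsineTransform_sub_le (hx : x ∈ Ioo (-1 : ℝ) 1) (hy : 0 < y) (hy1 : y ≤ 1) :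
    ‖arcsineTransform (x + y * Complex.I) - ((Real.pi / semicircle x : ℝ) : ℂ) * Complex.I‖ ≤
      3 * Real.pi / semicircle x ^ 3 * y := by
  have hw := semicircle_pos hx
  have hpi := Real.pi_pos
  have hw2 : (semicircle x : ℂ) ^ 2 = 1 - x ^ 2 := mod_cast semicircle_sq hx
  have hw0 : (semicircle x : ℂ) ≠ 0 := mod_cast hw.ne'
  set z : ℂ := x + y * Complex.I
  set s : ℂ := ((Real.pi / semicircle x : ℝ) : ℂ) * Complex.I with hs
  have hs2 : s ^ 2 * semicircle x ^ 2 = -(Real.pi : ℂ) ^ 2 := by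
    rw [hs, mul_pow, Complex.I_sq]
    push_cast
    field_simp
  have hfactor : (arcsineTransform z - s) * (arcsineTransform z + s) *
      ((z ^ 2 - 1) * semicircle x ^ 2) = -(Real.pi : ℂ) ^ 2 * (x ^ 2 - z ^ 2) := by
    linear_combination (semicircle x : ℂ) ^ 2 *
      arcsineTransform_sq_mul (im_add_mul_I_ne_zero x hy) - (z ^ 2 - 1) * hs2
        + (Real.pi : ℂ) ^ 2 * hw2
  have hnorm := congrArg norm hfactor
  simp only [norm_mul, norm_neg, norm_pow, Complex.norm_of_nonneg hpi.le,
    Complex.norm_of_nonneg hw.le] at hnorm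
  have hle : ‖arcsineTransform z - s‖ * (Real.pi / semicircle x *
      (semicircle x ^ 2 * semicircle x ^ 2)) ≤ Real.pi ^ 2 * (3 * y) := by
    calc _ ≤ ‖arcsineTransform z - s‖ *
          (‖arcsineTransform z + s‖ * (‖z ^ 2 - 1‖ * semicircle x ^ 2)) := by
          gcongr
          · exact div_semicircle_le_norm_arcsineTransform_add hy
          · exact semicircle_sq_le_norm_sq_sub_one hx y
      _ = Real.pi ^ 2 * ‖(x : ℂ) ^ 2 - z ^ 2‖ := by rw [← hnorm]; ring
      _ ≤ _ := by
          gcongr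
          exact norm_sq_sub_add_mul_I_sq_le (abs_le.2 ⟨hx.1.le, hx.2.le⟩) hy.le hy1
  calc ‖arcsineTransform z - s‖ = ‖arcsineTransform z - s‖ * (Real.pi / semicircle x *
        (semicircle x ^ 2 * semicircle x ^ 2)) / (Real.pi * semicircle x ^ 3) := by field_simp
    _ ≤ Real.pi ^ 2 * (3 * y) / (Real.pi * semicircle x ^ 3) := by gcongr
    _ = 3 * Real.pi / semicircle x ^ 3 * y := by field_simp

namespace IsAirfoilPair

lemma tendsto_cauchyTransform_add (h : IsAirfoilPair f g) (hx : x ∈ Ioo (-1 : ℝ) 1) :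
    Tendsto (fun y : ℝ => cauchyTransform μI f (x + y * Complex.I) +
      (((semicircle x)⁻¹ : ℝ) : ℂ) *
        (Complex.I * cauchyTransform μI (fun t => semicircle t * g t) (x + y * Complex.I)))
      (𝓝[>] 0) (𝓝 0) := by
  have hw : (semicircle x : ℂ) ≠ 0 := mod_cast (semicircle_pos hx).ne'
  have hpi : (Real.pi : ℂ) ≠ 0 := mod_cast Real.pi_ne_zero
  have hzero := (tendsto_mul_cauchyTransform_nhdsGT_zero
    (integrable_semicircle_mul h.integrable_right) x).norm.const_mul
      (Real.pi⁻¹ * (3 * Real.pi / semicircle x ^ 3))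
  rw [norm_zero, mul_zero] at hzero
  refine squeeze_zero_norm' ?_ hzero
  filter_upwards [self_mem_nhdsWithin, mem_nhdsWithin_of_mem_nhds (Iic_mem_nhds one_pos)]
    with y (hy : 0 < y) hy1
  rw [h.cauchyTransform_eq _ (by simpa using hy)]
  set c := cauchyTransform μI (fun t => semicircle t * g t) (x + y * Complex.I)
  calc ‖-(Real.pi : ℂ)⁻¹ * arcsineTransform (x + y * Complex.I) * c +
        (((semicircle x)⁻¹ : ℝ) : ℂ) * (Complex.I * c)‖
      = ‖-(Real.pi : ℂ)⁻¹ * ((arcsineTransform (x + y * Complex.I) -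
          ((Real.pi / semicircle x : ℝ) : ℂ) * Complex.I) * c)‖ := by
        congr 1
        push_cast
        field_simp
        ring
    _ = Real.pi⁻¹ * (‖arcsineTransform (x + y * Complex.I) -
          ((Real.pi / semicircle x : ℝ) : ℂ) * Complex.I‖ * ‖c‖) := by
        simp only [norm_mul, norm_neg, norm_inv, Complex.norm_of_nonneg Real.pi_pos.le]
    _ ≤ Real.pi⁻¹ * (3 * Real.pi / semicircle x ^ 3 * y * ‖c‖) := by
        gcongr
        exact norm_arcsineTransform_sub_le hx hy hy1
    _ = Real.pi⁻¹ * (3 * Real.pi / semicircle x ^ 3) * ‖(y : ℂ) * c‖ := by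
        rw [norm_mul, Complex.norm_of_nonneg hy.le]
        ring

theorem ae_tendsto_truncatedHilbert (h : IsAirfoilPair f g) : ∀ᵐ x : ℝ ∂μI,
    Tendsto (fun y => truncatedHilbert f y x) (𝓝[>] 0) (𝓝 (Real.pi * g x)) := by
  filter_upwards [ae_mem_Ioo,
    ae_tendsto_im_cauchyTransform (integrable_semicircle_mul h.integrable_right),
    ae_tendsto_truncatedHilbert_sub_re_cauchyTransform h.integrable_left] with x hx him hsub
  have hre := (Complex.continuous_re.tendsto 0).comp (h.tendsto_cauchyTransform_add hx)
  have hlim := (hsub.add hre).add (him.const_mul (semicircle x)⁻¹)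
  rw [Complex.zero_re, add_zero, zero_add, mul_left_comm,
    inv_mul_cancel_left₀ (semicircle_pos hx).ne'] at hlim
  refine hlim.congr fun y => ?_
  simp only [Function.comp, Complex.add_re, Complex.re_ofReal_mul, Complex.I_mul_re]
  ring

theorem ae_tendsto_re_cauchyTransform (h : IsAirfoilPair f g) : ∀ᵐ x : ℝ ∂μI,
    Tendsto (fun y : ℝ => (semicircle x)⁻¹ *
      (cauchyTransform μI (fun t => semicircle t * g t) (x + y * Complex.I)).re) (𝓝[>] 0)
      (𝓝 (-(Real.pi * f x))) := by
  filter_upwards [ae_mem_Ioo, ae_tendsto_im_cauchyTransform h.integrable_left] with x hx him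
  have hlim := ((Complex.continuous_im.tendsto 0).comp (h.tendsto_cauchyTransform_add hx)).sub him
  rw [Complex.zero_im, zero_sub] at hlim
  refine hlim.congr fun y => ?_
  simp only [Function.comp, Complex.add_im, Complex.im_ofReal_mul, Complex.I_mul_im]
  ring

end IsAirfoilPair

end BoundaryValues

/-! ### Zygmund modulars -/

/-- The Young function `s ↦ s logᵏ(2 + s)` of the Zygmund class `L(log L)ᵏ`, meant for `0 ≤ s`. -/
def zygmundFun (k : ℕ) (s : ℝ) : ℝ := s * Real.log (2 + s) ^ k

section ZygmundFun

variable {k : ℕ} {a b c : ℝ}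

lemma one_half_le_log_two_add (ha : 0 ≤ a) : 1 / 2 ≤ Real.log (2 + a) := by
  have : Real.log 2 ≤ Real.log (2 + a) := Real.log_le_log two_pos (by linarith)
  linarith [Real.log_two_gt_d9]

lemma zygmundFun_nonneg (k : ℕ) (ha : 0 ≤ a) : 0 ≤ zygmundFun k a := by
  have := one_half_le_log_two_add ha
  unfold zygmundFun
  positivity

lemma zygmundFun_le_zygmundFun (k : ℕ) (ha : 0 ≤ a) (hab : a ≤ b) :
    zygmundFun k a ≤ zygmundFun k b := by
  have := one_half_le_log_two_add ha
  have hb := ha.trans hab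
  unfold zygmundFun
  gcongr

lemma measurable_zygmundFun (k : ℕ) : Measurable (zygmundFun k) := by
  unfold zygmundFun
  fun_prop

lemma continuousAt_zygmundFun (k : ℕ) (ha : 0 ≤ a) : ContinuousAt (zygmundFun k) a := by
  unfold zygmundFun
  have : 2 + a ≠ 0 := by positivity
  fun_prop (disch := assumption)

lemma le_two_pow_mul_zygmundFun (k : ℕ) (ha : 0 ≤ a) : a ≤ 2 ^ k * zygmundFun k a := by
  have hlog := one_half_le_log_two_add ha
  calc a = 2 ^ k * (a * (1 / 2) ^ k) := by
        rw [mul_left_comm, ← mul_pow]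
        norm_num
    _ ≤ 2 ^ k * zygmundFun k a := by
        unfold zygmundFun
        gcongr

-- Bernoulli's inequality `2 + c a ≤ (2 + a)ᶜ`.
lemma log_two_add_mul_le (hc : 1 ≤ c) (ha : 0 ≤ a) :
    Real.log (2 + c * a) ≤ c * Real.log (2 + a) := by
  rw [← Real.log_rpow (by positivity)]
  refine Real.log_le_log (by positivity) ?_
  have := one_add_mul_self_le_rpow_one_add (show -1 ≤ 1 + a by linarith) hc
  rw [← add_assoc, one_add_one_eq_two] at this
  linarith

lemma zygmundFun_mul_le (k : ℕ) (hc : 1 ≤ c) (ha : 0 ≤ a) :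
    zygmundFun k (c * a) ≤ c ^ (k + 1) * zygmundFun k a := by
  have hlog := one_half_le_log_two_add (mul_nonneg (zero_le_one.trans hc) ha)
  calc zygmundFun k (c * a) ≤ c * a * (c * Real.log (2 + a)) ^ k := by
        unfold zygmundFun
        gcongr
        exact log_two_add_mul_le hc ha
    _ = c ^ (k + 1) * zygmundFun k a := by
        unfold zygmundFun
        ring

lemma zygmundFun_add_le (k : ℕ) (ha : 0 ≤ a) (hb : 0 ≤ b) :
    zygmundFun k (a + b) ≤ 2 ^ (k + 1) * (zygmundFun k a + zygmundFun k b) := by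
  have hmax : zygmundFun k (max a b) ≤ zygmundFun k a + zygmundFun k b := by
    rcases max_choice a b with h | h <;> rw [h] <;>
      linarith [zygmundFun_nonneg k ha, zygmundFun_nonneg k hb]
  calc zygmundFun k (a + b) ≤ zygmundFun k (2 * max a b) :=
        zygmundFun_le_zygmundFun k (add_nonneg ha hb)
          (by linarith [le_max_left a b, le_max_right a b])
    _ ≤ 2 ^ (k + 1) * zygmundFun k (max a b) :=
        zygmundFun_mul_le k one_le_two (ha.trans (le_max_left a b))
    _ ≤ _ := by gcongr

end ZygmundFun

/-- The modular `∫ |g| logᵏ(2 + |g|) dμ`, whose finiteness defines the Zygmund class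
`L(log L)ᵏ(μ)`; an extended nonnegative real, so no integrability has to be assumed. -/
def zygmundModular {α E : Type*} [MeasurableSpace α] [NormedAddCommGroup E] (μ : Measure α)
    (k : ℕ) (g : α → E) : ℝ≥0∞ :=
  ∫⁻ x, ENNReal.ofReal (zygmundFun k ‖g x‖) ∂μ

section ZygmundModular

variable {α E F F' : Type*} [MeasurableSpace α] [NormedAddCommGroup E] [NormedAddCommGroup F]
  [NormedAddCommGroup F'] {μ : Measure α} {k : ℕ} {f : α → E} {g : α → F} {h : α → F'}

lemma aemeasurable_zygmundFun_norm (k : ℕ) (hf : AEStronglyMeasurable f μ) :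
    AEMeasurable (fun x => zygmundFun k ‖f x‖) μ :=
  (measurable_zygmundFun k).comp_aemeasurable hf.norm.aemeasurable

lemma zygmundModular_mono (k : ℕ) (hfg : ∀ᵐ x ∂μ, ‖f x‖ ≤ ‖g x‖) :
    zygmundModular μ k f ≤ zygmundModular μ k g :=
  lintegral_mono_ae (hfg.mono fun _ hx =>
    ENNReal.ofReal_le_ofReal (zygmundFun_le_zygmundFun k (norm_nonneg _) hx))

lemma zygmundModular_le_of_norm_le_mul (k : ℕ) {c : ℝ} (hc : 1 ≤ c)
    (hfg : ∀ᵐ x ∂μ, ‖f x‖ ≤ c * ‖g x‖) :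
    zygmundModular μ k f ≤ ENNReal.ofReal (c ^ (k + 1)) * zygmundModular μ k g := by
  rw [zygmundModular, zygmundModular, ← lintegral_const_mul' _ _ ENNReal.ofReal_ne_top]
  refine lintegral_mono_ae (hfg.mono fun x hx => ?_)
  rw [← ENNReal.ofReal_mul (by positivity)]
  exact ENNReal.ofReal_le_ofReal ((zygmundFun_le_zygmundFun k (norm_nonneg _) hx).trans
    (zygmundFun_mul_le k hc (norm_nonneg _)))

lemma zygmundModular_le_of_norm_le_add (k : ℕ) (hf : AEStronglyMeasurable f μ)
    (hfgh : ∀ᵐ x ∂μ, ‖h x‖ ≤ ‖f x‖ + ‖g x‖) :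
    zygmundModular μ k h ≤ 2 ^ (k + 1) * (zygmundModular μ k f + zygmundModular μ k g) := by
  rw [zygmundModular, zygmundModular, zygmundModular,
    ← lintegral_add_left' (aemeasurable_zygmundFun_norm k hf).ennreal_ofReal,
    ← lintegral_const_mul' _ _ (by finiteness)]
  refine lintegral_mono_ae (hfgh.mono fun x hx => ?_)
  have hfx := zygmundFun_nonneg k (norm_nonneg (f x))
  have hgx := zygmundFun_nonneg k (norm_nonneg (g x))
  rw [← ENNReal.ofReal_add hfx hgx, ← ENNReal.ofReal_ofNat 2, ← ENNReal.ofReal_pow zero_le_two,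
    ← ENNReal.ofReal_mul (by positivity)]
  exact ENNReal.ofReal_le_ofReal ((zygmundFun_le_zygmundFun k (norm_nonneg _) hx).trans
    (zygmundFun_add_le k (norm_nonneg _) (norm_nonneg _)))

lemma lintegral_enorm_le_zygmundModular (k : ℕ) (f : α → E) :
    ∫⁻ x, ‖f x‖ₑ ∂μ ≤ 2 ^ k * zygmundModular μ k f := by
  rw [zygmundModular, ← lintegral_const_mul' _ _ (by finiteness)]
  refine lintegral_mono fun x => ?_
  rw [← ENNReal.ofReal_ofNat 2, ← ENNReal.ofReal_pow zero_le_two,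
    ← ENNReal.ofReal_mul (by positivity), ← ofReal_norm]
  exact ENNReal.ofReal_le_ofReal (le_two_pow_mul_zygmundFun k (norm_nonneg _))

lemma integrable_of_zygmundModular_ne_top (hf : AEStronglyMeasurable f μ)
    (hfin : zygmundModular μ k f ≠ ∞) : Integrable f μ :=
  ⟨hf, (lintegral_enorm_le_zygmundModular k f).trans_lt (by finiteness)⟩

lemma integrable_zygmundFun_norm (hf : AEStronglyMeasurable f μ)
    (hfin : zygmundModular μ k f ≠ ∞) : Integrable (fun x => zygmundFun k ‖f x‖) μ :=
  (lintegral_ofReal_ne_top_iff_integrable (aemeasurable_zygmundFun_norm k hf).aestronglyMeasurable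
    (.of_forall fun _ => zygmundFun_nonneg k (norm_nonneg _))).1 hfin

lemma zygmundModular_ne_top (hf : Integrable (fun x => zygmundFun k ‖f x‖) μ) :
    zygmundModular μ k f ≠ ∞ :=
  hf.lintegral_lt_top.ne

lemma toReal_zygmundModular (hf : AEStronglyMeasurable f μ) :
    (zygmundModular μ k f).toReal = ∫ x, zygmundFun k ‖f x‖ ∂μ :=
  (integral_eq_lintegral_of_nonneg_ae (.of_forall fun _ => zygmundFun_nonneg k (norm_nonneg _))
    (aemeasurable_zygmundFun_norm k hf).aestronglyMeasurable).symm

lemma zygmundModular_le_of_tendsto {u : ℕ → α → E} {B : ℝ≥0∞}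
    (hu : ∀ n, AEStronglyMeasurable (u n) μ) (hB : ∀ n, zygmundModular μ k (u n) ≤ B)
    (hlim : ∀ᵐ x ∂μ, Tendsto (fun n => u n x) atTop (𝓝 (f x))) : zygmundModular μ k f ≤ B := by
  calc zygmundModular μ k f
      = ∫⁻ x, liminf (fun n => ENNReal.ofReal (zygmundFun k ‖u n x‖)) atTop ∂μ := by
        refine lintegral_congr_ae (hlim.mono fun x hx => ?_)
        exact (ENNReal.tendsto_ofReal ((continuousAt_zygmundFun k (norm_nonneg _)).tendsto.comp
          hx.norm)).liminf_eq.symm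
    _ ≤ liminf (fun n => zygmundModular μ k (u n)) atTop :=
        lintegral_liminf_le' fun n => (aemeasurable_zygmundFun_norm k (hu n)).ennreal_ofReal
    _ ≤ B := liminf_le_of_le (by isBoundedDefault) fun b hb => by
        obtain ⟨n, hn⟩ := hb.exists
        exact hn.trans (hB n)

end ZygmundModular

/-! ### Zygmund's estimate for Cauchy transforms -/

/-- The function `s ↦ 8 s (1 + log s)²`, convex on `[1, ∞)` and comparable to `s log²(2 + s)`
there. It dominates `|D| log |D| + Re (D log² D)` at `s = Re D`. -/
def zygmundMajorant (s : ℝ) : ℝ := 8 * s * (1 + Real.log s) ^ 2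

section ZygmundMajorant

variable {a b r v : ℝ}

lemma zygmundMajorant_one : zygmundMajorant 1 = 8 := by
  simp [zygmundMajorant]

lemma continuousAt_zygmundMajorant (ha : a ≠ 0) : ContinuousAt zygmundMajorant a := by
  unfold zygmundMajorant
  fun_prop (disch := assumption)

lemma measurable_zygmundMajorant : Measurable zygmundMajorant := by
  unfold zygmundMajorant
  fun_prop

lemma zygmundMajorant_add_slope_mul_le (ha : 1 ≤ a) (hb : 1 ≤ b) :
    zygmundMajorant a + 8 * ((1 + Real.log a) ^ 2 + 2 * (1 + Real.log a)) * (b - a) ≤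
      zygmundMajorant b := by
  have hloga := Real.log_nonneg ha
  have hlog : 0 ≤ b * (Real.log b - Real.log a - 1) + a := by
    have := Real.log_le_sub_one_of_pos (show 0 < a / b by positivity)
    rw [Real.log_div (by positivity) (by positivity), le_sub_iff_add_le,
      le_div_iff₀ (by positivity)] at this
    linarith
  have hsq : zygmundMajorant b - (zygmundMajorant a +
      8 * ((1 + Real.log a) ^ 2 + 2 * (1 + Real.log a)) * (b - a)) =
      8 * (b * (Real.log b - Real.log a) ^ 2) +
        16 * (1 + Real.log a) * (b * (Real.log b - Real.log a - 1) + a) := by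
    unfold zygmundMajorant
    ring
  have : 0 ≤ 8 * (b * (Real.log b - Real.log a) ^ 2) +
      16 * (1 + Real.log a) * (b * (Real.log b - Real.log a - 1) + a) := by positivity
  linarith

lemma eight_le_zygmundMajorant (ha : 1 ≤ a) : 8 ≤ zygmundMajorant a := by
  have := zygmundMajorant_add_slope_mul_le le_rfl ha
  rw [zygmundMajorant_one, Real.log_one] at this
  linarith

lemma zygmundMajorant_one_add_pi_mul_le (ha : 0 ≤ a) :
    zygmundMajorant (1 + Real.pi * a) ≤ 800 + 1000 * zygmundFun 2 a := by
  have hhalf := one_half_le_log_two_add ha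
  set l := Real.log (2 + a)
  have hpi : Real.pi * a ≤ 4 * a := by gcongr; exact Real.pi_lt_four.le
  have hpos : 0 ≤ Real.pi * a := mul_nonneg Real.pi_pos.le ha
  have hlog0 : 0 ≤ Real.log (1 + Real.pi * a) := Real.log_nonneg (by linarith)
  have hlog : 1 + Real.log (1 + Real.pi * a) ≤ 5 * l := by
    have h4 : Real.log (1 + Real.pi * a) ≤ Real.log (2 ^ 2 * (2 + a)) :=
      Real.log_le_log (by positivity) (by linarith)
    rw [Real.log_mul (by norm_num) (by positivity), Real.log_pow] at h4
    have h2 : Real.log 2 ≤ l := Real.log_le_log two_pos (by linarith)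
    push_cast at h4
    linarith
  have hl2 : l ^ 2 ≤ 4 + a * l ^ 2 := by
    rcases le_total a 1 with h | h
    · have : l ≤ 2 := (Real.log_le_sub_one_of_pos (by positivity)).trans (by linarith)
      nlinarith [mul_nonneg ha (sq_nonneg l)]
    · nlinarith [sq_nonneg l]
  calc zygmundMajorant (1 + Real.pi * a) ≤ 8 * (1 + 4 * a) * (5 * l) ^ 2 := by
        unfold zygmundMajorant
        gcongr
    _ = 200 * l ^ 2 + 800 * (a * l ^ 2) := by ring
    _ ≤ 800 + 1000 * (a * l ^ 2) := by linarith
    _ = 800 + 1000 * zygmundFun 2 a := by rw [zygmundFun]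

lemma mul_log_add_two_le (hv : 1 ≤ v) (hvr : 4 * v ^ 2 ≤ r) : v * (Real.log r + 2) ≤ r := by
  have hr : 0 < r := by nlinarith
  have hsqrt : 0 < √r := Real.sqrt_pos.2 hr
  have hv' : v ≤ √r / 2 := by
    rw [le_div_iff₀ two_pos]
    exact Real.le_sqrt_of_sq_le (by linarith)
  have hlog : Real.log r + 2 ≤ 2 * √r := by
    have := Real.log_le_sub_one_of_pos hsqrt
    rw [Real.log_sqrt hr.le] at this
    linarith
  have hlog0 : 0 ≤ Real.log r := Real.log_nonneg (by nlinarith)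
  calc v * (Real.log r + 2) ≤ √r / 2 * (2 * √r) := by gcongr
    _ = √r * √r := by ring
    _ = r := Real.mul_self_sqrt hr.le

lemma mul_log_sq_add_two_mul_log_le (hv : 1 ≤ v) (hvr : v ≤ r) :
    v * (Real.log r ^ 2 + 2 * Real.log r) ≤ r * Real.log r + zygmundMajorant v := by
  have hr : 1 ≤ r := hv.trans hvr
  have hlogr := Real.log_nonneg hr
  have hlogv := Real.log_nonneg hv
  rcases le_total r (4 * v ^ 2) with h | h
  · have hlog : Real.log r ≤ 2 * (1 + Real.log v) := by
      have := Real.log_le_log (by positivity) (show r ≤ (2 * v) ^ 2 by linarith)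
      rw [Real.log_pow, Real.log_mul two_ne_zero (by positivity)] at this
      push_cast at this
      linarith [Real.log_two_lt_d9]
    calc v * (Real.log r ^ 2 + 2 * Real.log r)
        ≤ v * ((2 * (1 + Real.log v)) ^ 2 + 2 * (2 * (1 + Real.log v))) := by gcongr
      _ ≤ v * (8 * (1 + Real.log v) ^ 2) := by
          gcongr
          nlinarith
      _ ≤ r * Real.log r + zygmundMajorant v := by
          unfold zygmundMajorant
          nlinarith [mul_nonneg (zero_le_one.trans hr) hlogr]
  · calc v * (Real.log r ^ 2 + 2 * Real.log r) = v * (Real.log r + 2) * Real.log r := by ring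
      _ ≤ r * Real.log r := by
          gcongr
          exact mul_log_add_two_le hv h
      _ ≤ r * Real.log r + zygmundMajorant v := by linarith [eight_le_zygmundMajorant hv]

lemma norm_sub_re_le_im_mul_arg {z : ℂ} (hz : 0 ≤ z.re) : ‖z‖ - z.re ≤ z.im * z.arg := by
  have hcos : 0 ≤ Real.cos z.arg := Real.cos_nonneg_of_mem_Icc (abs_le.1
    (Complex.abs_arg_le_pi_div_two_iff.2 hz))
  have hsin : Real.sin z.arg ^ 2 ≤ Real.sin z.arg * z.arg := by
    have hsign : 0 ≤ Real.sin z.arg * z.arg := by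
      rcases le_total 0 z.arg with h | h
      · exact mul_nonneg (Real.sin_nonneg_of_nonneg_of_le_pi h (Complex.arg_le_pi z)) h
      · exact mul_nonneg_of_nonpos_of_nonpos
          (Real.sin_nonpos_of_nonpos_of_neg_pi_le h (Complex.neg_pi_lt_arg z).le) h
    rw [← abs_of_nonneg hsign, abs_mul, ← sq_abs, sq]
    exact mul_le_mul_of_nonneg_left Real.abs_sin_le_abs (abs_nonneg _)
  have hle : 1 - Real.cos z.arg ≤ Real.sin z.arg * z.arg := by
    nlinarith [Real.sin_sq_add_cos_sq z.arg, Real.cos_le_one z.arg]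
  calc ‖z‖ - z.re = ‖z‖ * (1 - Real.cos z.arg) := by
        rw [mul_sub, mul_one, Complex.norm_mul_cos_arg]
    _ ≤ ‖z‖ * (Real.sin z.arg * z.arg) := by gcongr
    _ = z.im * z.arg := by rw [← mul_assoc, Complex.norm_mul_sin_arg]

theorem norm_mul_log_norm_le {z : ℂ} (hz : 1 ≤ z.re) :
    ‖z‖ * Real.log ‖z‖ ≤ zygmundMajorant z.re - (z * Complex.log z ^ 2).re := by
  have hnorm : 1 ≤ ‖z‖ := hz.trans (Complex.re_le_norm z)
  have hre : (z * Complex.log z ^ 2).re =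
      z.re * (Real.log ‖z‖ ^ 2 - z.arg ^ 2) - z.im * (2 * Real.log ‖z‖ * z.arg) := by
    simp only [sq, Complex.mul_re, Complex.mul_im, Complex.log_re, Complex.log_im]
    ring
  have harg := mul_le_mul_of_nonneg_left (norm_sub_re_le_im_mul_arg (zero_le_one.trans hz))
    (Real.log_nonneg hnorm)
  have hmajorant := mul_log_sq_add_two_mul_log_le hz (Complex.re_le_norm z)
  have : 0 ≤ z.re * z.arg ^ 2 := by positivity
  rw [hre]
  linarith

end ZygmundMajorant

section PoissonJensen

variable {G : ℝ → ℝ} {x y : ℝ}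

lemma integrable_mul_halfPlanePoisson (hG : Integrable G) (hy : 0 < y) (x : ℝ) :
    Integrable fun t => G t * halfPlanePoisson y (t - x) :=
  integrable_mul_of_le_halfPlanePoisson hG (by fun_prop) hy
    (fun s => (abs_of_nonneg (halfPlanePoisson_nonneg hy s)).le) x

lemma mul_halfPlanePoisson_eq_convolution (H : ℝ → ℝ) (y : ℝ) :
    (fun x => ∫ t, H t * halfPlanePoisson y (t - x)) =
      convolution H (halfPlanePoisson y) (ContinuousLinearMap.mul ℝ ℝ) volume := by
  ext x
  refine integral_congr_ae (.of_forall fun t => ?_)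
  simp only [ContinuousLinearMap.mul_apply', halfPlanePoisson, sub_sq_comm t x]

lemma integrable_integral_mul_halfPlanePoisson {H : ℝ → ℝ} (hH : Integrable H) (hy : 0 < y) :
    Integrable fun x => ∫ t, H t * halfPlanePoisson y (t - x) := by
  rw [mul_halfPlanePoisson_eq_convolution]
  exact hH.integrable_convolution _ (integrable_halfPlanePoisson hy)

lemma integral_integral_mul_halfPlanePoisson {H : ℝ → ℝ} (hH : Integrable H) (hy : 0 < y) :
    ∫ x, ∫ t, H t * halfPlanePoisson y (t - x) = Real.pi * ∫ t, H t := by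
  rw [mul_halfPlanePoisson_eq_convolution, integral_convolution _ hH
    (integrable_halfPlanePoisson hy), integral_halfPlanePoisson hy,
    ContinuousLinearMap.mul_apply', mul_comm]

-- Jensen's inequality for the probability density `π⁻¹ halfPlanePoisson y (t - x)`.
lemma pi_mul_zygmundMajorant_sub_le (hG0 : ∀ t, 0 ≤ G t) (hG : Integrable G)
    (hH : Integrable fun t => zygmundMajorant (1 + Real.pi * G t) - 8) (hy : 0 < y) (x : ℝ) :
    Real.pi * (zygmundMajorant (1 + ∫ t, G t * halfPlanePoisson y (t - x)) - 8) ≤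
      ∫ t, (zygmundMajorant (1 + Real.pi * G t) - 8) * halfPlanePoisson y (t - x) := by
  set u := ∫ t, G t * halfPlanePoisson y (t - x)
  set c := 8 * ((1 + Real.log (1 + u)) ^ 2 + 2 * (1 + Real.log (1 + u)))
  have hu : 0 ≤ u := integral_nonneg fun t => mul_nonneg (hG0 t) (halfPlanePoisson_nonneg hy _)
  have hP : Integrable fun t => halfPlanePoisson y (t - x) :=
    (integrable_halfPlanePoisson hy).comp_sub_right x
  have hGP := integrable_mul_halfPlanePoisson hG hy x
  calc Real.pi * (zygmundMajorant (1 + u) - 8)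
      = ∫ t, ((zygmundMajorant (1 + u) - 8 - c * u) * halfPlanePoisson y (t - x) +
          c * Real.pi * (G t * halfPlanePoisson y (t - x))) := by
        rw [integral_add (hP.const_mul _) (hGP.const_mul _), integral_const_mul,
          integral_const_mul, integral_sub_right_eq_self (halfPlanePoisson y) x,
          integral_halfPlanePoisson hy]
        ring
    _ ≤ _ := by
        refine integral_mono ((hP.const_mul _).add (hGP.const_mul _))
          (integrable_mul_halfPlanePoisson hH hy x) fun t => ?_
        have htangent := zygmundMajorant_add_slope_mul_le (a := 1 + u) (b := 1 + Real.pi * G t)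
          (by linarith) (by linarith [mul_nonneg Real.pi_pos.le (hG0 t)])
        calc _ = (zygmundMajorant (1 + u) + c * (1 + Real.pi * G t - (1 + u)) - 8) *
              halfPlanePoisson y (t - x) := by ring
          _ ≤ _ := by
              have := halfPlanePoisson_nonneg hy (t - x)
              gcongr

lemma setIntegral_zygmundMajorant_poisson_le (hG0 : ∀ t, 0 ≤ G t) (hG : Integrable G)
    (hH : Integrable fun t => zygmundMajorant (1 + Real.pi * G t) - 8) (hy : 0 < y) (s : Set ℝ) :
    ∫ x in s, (zygmundMajorant (1 + ∫ t, G t * halfPlanePoisson y (t - x)) - 8) ≤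
      ∫ t, (zygmundMajorant (1 + Real.pi * G t) - 8) := by
  have hH0 : ∀ t, 0 ≤ zygmundMajorant (1 + Real.pi * G t) - 8 := fun t =>
    sub_nonneg.2 (eight_le_zygmundMajorant (by linarith [mul_nonneg Real.pi_pos.le (hG0 t)]))
  have hHP := integrable_integral_mul_halfPlanePoisson hH hy
  refine le_of_mul_le_mul_left ?_ Real.pi_pos
  rw [← integral_integral_mul_halfPlanePoisson hH hy, ← integral_const_mul]
  refine (integral_mono_of_nonneg (.of_forall fun x => ?_) hHP.restrict
    (.of_forall fun x => pi_mul_zygmundMajorant_sub_le hG0 hG hH hy x)).trans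
      (setIntegral_le_integral hHP (.of_forall fun x => ?_))
  · exact mul_nonneg Real.pi_pos.le (sub_nonneg.2 (eight_le_zygmundMajorant
      (le_add_of_nonneg_right (integral_nonneg fun t =>
        mul_nonneg (hG0 t) (halfPlanePoisson_nonneg hy _)))))
  · exact integral_nonneg fun t => mul_nonneg (hH0 t) (halfPlanePoisson_nonneg hy _)

end PoissonJensen

lemma continuous_comp_add_mul_I {F : ℂ → ℂ} {y : ℝ}
    (hF : ∀ x : ℝ, ContinuousAt F (x + y * Complex.I)) :
    Continuous fun x : ℝ => F (x + y * Complex.I) :=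
  continuous_iff_continuousAt.2 fun x =>
    (hF x).comp (f := fun x : ℝ => (x : ℂ) + y * Complex.I) (by fun_prop)

lemma continuous_cauchyTransform_add_mul_I {f : ℝ → ℝ} (hf : Integrable f μI) {y : ℝ}
    (hy : 0 < y) : Continuous fun x : ℝ => cauchyTransform μI f (x + y * Complex.I) :=
  continuous_comp_add_mul_I fun x =>
    (differentiableAt_cauchyTransform hf (im_add_mul_I_ne_zero x hy)).continuousAt

-- Cauchy's theorem on the rectangle `[-2, 2] × [y, 2]`.
lemma norm_intervalIntegral_add_mul_I_le {F : ℂ → ℂ} {C y : ℝ}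
    (hF : ∀ z : ℂ, 0 < z.im → DifferentiableAt ℂ F z)
    (hC : ∀ z : ℂ, 0 < z.im → 2 ≤ |z.re| ∨ 2 ≤ z.im → ‖F z‖ ≤ C) (hy : 0 < y) (hy2 : y ≤ 2) :
    ‖∫ x in (-2 : ℝ)..2, F (x + y * Complex.I)‖ ≤ 8 * C := by
  have hC0 : 0 ≤ C := (norm_nonneg _).trans (hC (2 * Complex.I) (by simp) (by simp))
  have htop : ‖∫ x in (-2 : ℝ)..2, F (x + (2 : ℝ) * Complex.I)‖ ≤ C * |2 - (-2)| :=
    intervalIntegral.norm_integral_le_of_norm_le_const fun x _ => hC _ (by simp) (by simp)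
  have hside : ∀ a : ℝ, 2 ≤ |a| → ‖∫ s in y..2, F (a + s * Complex.I)‖ ≤ C * 2 := fun a ha => by
    refine (intervalIntegral.norm_integral_le_of_norm_le_const (C := C) fun s hs => ?_).trans ?_
    · rw [uIoc_of_le hy2] at hs
      exact hC _ (by simpa using hy.trans hs.1) (by simpa using Or.inl ha)
    · gcongr
      rw [abs_of_nonneg (by linarith)]
      linarith
  have hrect := Complex.integral_boundary_rect_eq_zero_of_differentiableOn F
    (-2 + y * Complex.I) (2 + 2 * Complex.I) fun z hz => (hF z (by
      have : z.im ∈ uIcc y 2 := by simpa using hz.2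
      rw [uIcc_of_le hy2] at this
      exact hy.trans_le this.1)).differentiableWithinAt
  have hbottom : ∫ x in (-2 : ℝ)..2, F (x + y * Complex.I) =
      (∫ x in (-2 : ℝ)..2, F (x + (2 : ℝ) * Complex.I))
        - Complex.I • (∫ s in y..2, F ((2 : ℝ) + s * Complex.I))
        + Complex.I • (∫ s in y..2, F ((-2 : ℝ) + s * Complex.I)) := by
    simp only [Complex.add_im, Complex.neg_im, Complex.im_ofNat, neg_zero, Complex.mul_im,
      Complex.ofReal_re, Complex.I_im, mul_one, Complex.ofReal_im, Complex.I_re, mul_zero, add_zero,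
      zero_add, Complex.add_re, Complex.neg_re, Complex.re_ofNat, Complex.mul_re, sub_self,
      Complex.ofReal_ofNat, smul_eq_mul, Complex.ofReal_neg] at hrect ⊢
    linear_combination hrect
  have hright := hside 2 (by norm_num)
  have hleft := hside (-2) (by norm_num)
  rw [show |(2 : ℝ) - (-2)| = 4 by norm_num] at htop
  rw [hbottom]
  refine (norm_add_le _ _).trans ((add_le_add_left (norm_sub_le _ _) _).trans ?_)
  rw [norm_smul, norm_smul, Complex.norm_I, one_mul, one_mul]
  linarith

/-- The function `1 - i C G` for the Cauchy transform `C G` of a density `G` on `(-1, 1)`. For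
`0 ≤ G` its real part is at least `1` in the upper half-plane, so its powers and logarithm are
holomorphic there. -/
def oneSubICauchy (G : ℝ → ℝ) (z : ℂ) : ℂ := 1 - Complex.I * cauchyTransform μI G z

section OneSubICauchy

variable {G : ℝ → ℝ} {z : ℂ}

lemma re_oneSubICauchy (G : ℝ → ℝ) (z : ℂ) :
    (oneSubICauchy G z).re = 1 + (cauchyTransform μI G z).im := by
  simp [oneSubICauchy]

lemma one_le_re_oneSubICauchy (hG0 : ∀ t, 0 ≤ G t) (hG : Integrable G μI) (hz : 0 < z.im) :
    1 ≤ (oneSubICauchy G z).re := by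
  rw [re_oneSubICauchy, ← Complex.re_add_im z, im_cauchyTransform hG _ hz]
  exact le_add_of_nonneg_right (integral_nonneg fun t => mul_nonneg (hG0 t) (by positivity))

lemma norm_cauchyTransform_le_two_mul (hG0 : ∀ t, 0 ≤ G t) (hG : Integrable G μI)
    (hz : 0 < z.im) : ‖cauchyTransform μI G z‖ ≤ 2 * ‖oneSubICauchy G z‖ := by
  have hone := (one_le_re_oneSubICauchy hG0 hG hz).trans (Complex.re_le_norm _)
  calc ‖cauchyTransform μI G z‖ = ‖1 - oneSubICauchy G z‖ := by simp [oneSubICauchy]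
    _ ≤ ‖(1 : ℂ)‖ + ‖oneSubICauchy G z‖ := norm_sub_le _ _
    _ ≤ 2 * ‖oneSubICauchy G z‖ := by
        rw [norm_one]
        linarith

lemma differentiableAt_oneSubICauchy (hG : Integrable G μI) (hz : 0 < z.im) :
    DifferentiableAt ℂ (oneSubICauchy G) z :=
  ((differentiableAt_cauchyTransform hG hz.ne').const_mul _).const_sub _

lemma differentiableAt_oneSubICauchy_mul_log_sq (hG0 : ∀ t, 0 ≤ G t) (hG : Integrable G μI)
    (hz : 0 < z.im) :
    DifferentiableAt ℂ (fun z => oneSubICauchy G z * Complex.log (oneSubICauchy G z) ^ 2) z :=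
  have hD := differentiableAt_oneSubICauchy hG hz
  hD.mul ((hD.clog (.inl (zero_lt_one.trans_le (one_le_re_oneSubICauchy hG0 hG hz)))).pow 2)

lemma one_le_norm_ofReal_sub {t : ℝ} (ht : t ∈ Ioo (-1 : ℝ) 1) (hz : 2 ≤ |z.re| ∨ 2 ≤ z.im) :
    1 ≤ ‖(t : ℂ) - z‖ := by
  rcases hz with hz | hz
  · have hre : |t - z.re| ≤ ‖(t : ℂ) - z‖ := by simpa using Complex.abs_re_le_norm ((t : ℂ) - z)
    have hsub := abs_sub_abs_le_abs_sub z.re t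
    rw [abs_sub_comm] at hsub
    have : |t| < 1 := abs_lt.2 ht
    linarith
  · linarith [abs_im_le_norm_ofReal_sub t z, le_abs_self z.im]

lemma norm_oneSubICauchy_mul_log_sq_le (hG0 : ∀ t, 0 ≤ G t) (hG : Integrable G μI) {m : ℝ}
    (hm : ∫ t, |G t| ∂μI ≤ m) (hz : 0 < z.im) (hz2 : 2 ≤ |z.re| ∨ 2 ≤ z.im) :
    ‖oneSubICauchy G z * Complex.log (oneSubICauchy G z) ^ 2‖ ≤ (1 + m) * (m + 4) ^ 2 := by
  have hle : ‖oneSubICauchy G z‖ ≤ 1 + m := by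
    refine (norm_sub_le _ _).trans ?_
    rw [norm_mul, Complex.norm_I, one_mul, norm_one]
    gcongr
    simpa using (norm_cauchyTransform_le hG one_pos
      (ae_mem_Ioo.mono fun t ht => one_le_norm_ofReal_sub ht hz2)).trans (by simpa using hm)
  have hone := (one_le_re_oneSubICauchy hG0 hG hz).trans (Complex.re_le_norm _)
  have hlog : ‖Complex.log (oneSubICauchy G z)‖ ≤ m + 4 := by
    refine (Complex.norm_le_abs_re_add_abs_im _).trans ?_
    rw [Complex.log_re, Complex.log_im, abs_of_nonneg (Real.log_nonneg hone)]
    linarith [Real.log_le_sub_one_of_pos (zero_lt_one.trans_le hone),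
      Complex.abs_arg_le_pi (oneSubICauchy G z), Real.pi_lt_four]
  rw [norm_mul, norm_pow]
  gcongr
  exact (norm_nonneg _).trans hle

end OneSubICauchy

section ZygmundEstimate

variable {G : ℝ → ℝ} {m : NNReal} {y : ℝ}

lemma measureReal_μI_univ : μI.real univ = 2 := by
  rw [μI, measureReal_restrict_apply_univ, Real.volume_real_Ioo_of_le (by norm_num)]
  norm_num

lemma integral_zygmundFun_norm_le (hG : Integrable G μI) {k : ℕ}
    (hGm : zygmundModular μI k G ≤ m) : ∫ t, zygmundFun k ‖G t‖ ∂μI ≤ m := by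
  rw [← toReal_zygmundModular hG.aestronglyMeasurable]
  exact ENNReal.toReal_le_coe_of_le_coe hGm

lemma integral_abs_le_of_zygmundModular_le (hG : Integrable G μI) {k : ℕ}
    (hGm : zygmundModular μI k G ≤ m) : ∫ t, |G t| ∂μI ≤ 2 ^ k * m := by
  have hle : ∫⁻ t, ‖G t‖ₑ ∂μI ≤ ((2 ^ k * m : NNReal) : ℝ≥0∞) :=
    (lintegral_enorm_le_zygmundModular k G).trans (by push_cast; gcongr)
  simpa [← integral_norm_eq_lintegral_enorm hG.aestronglyMeasurable] using
    ENNReal.toReal_le_coe_of_le_coe hle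

lemma integrable_zygmundMajorant_sub (hG0 : ∀ t, 0 ≤ G t) (hG : Integrable G μI)
    (hGm : zygmundModular μI 2 G ≤ m) :
    Integrable (fun t => zygmundMajorant (1 + Real.pi * G t) - 8) μI ∧
      ∫ t, (zygmundMajorant (1 + Real.pi * G t) - 8) ∂μI ≤ 1584 + 1000 * m := by
  have hbound : Integrable (fun t => 792 + 1000 * zygmundFun 2 ‖G t‖) μI :=
    (integrable_const _).add ((integrable_zygmundFun_norm hG.aestronglyMeasurable
      (ne_top_of_le_ne_top ENNReal.coe_ne_top hGm)).const_mul _)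
  have hle : ∀ t, zygmundMajorant (1 + Real.pi * G t) - 8 ≤ 792 + 1000 * zygmundFun 2 ‖G t‖ := by
    intro t
    rw [Real.norm_of_nonneg (hG0 t)]
    linarith [zygmundMajorant_one_add_pi_mul_le (hG0 t)]
  have hint : Integrable (fun t => zygmundMajorant (1 + Real.pi * G t) - 8) μI := by
    have hmeas : AEMeasurable (fun t => zygmundMajorant (1 + Real.pi * G t)) μI :=
      measurable_zygmundMajorant.comp_aemeasurable ((hG.aemeasurable.const_mul _).const_add _)
    refine hbound.mono' (hmeas.sub_const 8).aestronglyMeasurable (.of_forall fun t => ?_)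
    rw [Real.norm_of_nonneg (sub_nonneg.2 (eight_le_zygmundMajorant
      (by linarith [mul_nonneg Real.pi_pos.le (hG0 t)])))]
    exact hle t
  refine ⟨hint, (integral_mono hint hbound hle).trans ?_⟩
  rw [integral_add (integrable_const _) ((integrable_zygmundFun_norm hG.aestronglyMeasurable
    (ne_top_of_le_ne_top ENNReal.coe_ne_top hGm)).const_mul _), integral_const_mul,
    integral_const, measureReal_μI_univ, smul_eq_mul]
  linarith [integral_zygmundFun_norm_le hG hGm]

lemma setIntegral_zygmundMajorant_re_le (hG0 : ∀ t, 0 ≤ G t) (hG : Integrable G μI)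
    (hGm : zygmundModular μI 2 G ≤ m) (hy : 0 < y) (s : Set ℝ) :
    ∫ x in s, (zygmundMajorant (oneSubICauchy G (x + y * Complex.I)).re - 8) ≤
      1584 + 1000 * m := by
  obtain ⟨hH, hHm⟩ := integrable_zygmundMajorant_sub hG0 hG hGm
  set G' := (Ioo (-1 : ℝ) 1).indicator G with hG'
  have hH' : (fun t => zygmundMajorant (1 + Real.pi * G' t) - 8) =
      (Ioo (-1 : ℝ) 1).indicator fun t => zygmundMajorant (1 + Real.pi * G t) - 8 := by
    ext t
    by_cases ht : t ∈ Ioo (-1 : ℝ) 1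
    · simp only [hG', indicator_of_mem ht]
    · simp only [hG', indicator_of_notMem ht, mul_zero, add_zero, zygmundMajorant_one, sub_self]
  have hG'0 : ∀ t, 0 ≤ G' t := indicator_nonneg fun t _ => hG0 t
  have hG'i : Integrable G' := (integrable_indicator_iff measurableSet_Ioo).2 hG
  have hH'i : Integrable fun t => zygmundMajorant (1 + Real.pi * G' t) - 8 := by
    rw [hH']
    exact (integrable_indicator_iff measurableSet_Ioo).2 hH
  have him : ∀ x : ℝ, (oneSubICauchy G (x + y * Complex.I)).re =
      1 + ∫ t, G' t * halfPlanePoisson y (t - x) := fun x => by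
    rw [re_oneSubICauchy, im_cauchyTransform hG x hy, ← integral_mul_eq_integral_indicator_mul]
    rfl
  simp only [him]
  refine (setIntegral_zygmundMajorant_poisson_le hG'0 hG'i hH'i hy s).trans ?_
  rwa [hH', integral_indicator measurableSet_Ioo]

lemma zygmundFun_one_le {r : ℝ} (hr : 1 ≤ r) : zygmundFun 1 r ≤ 6 + 3 * (r * Real.log r) := by
  have hlog0 := Real.log_nonneg hr
  have hlog : Real.log (2 + r) ≤ 2 + Real.log r := by
    have := Real.log_le_log (by positivity) (show 2 + r ≤ 3 * r by linarith)
    rw [Real.log_mul (by norm_num) (by positivity)] at this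
    linarith [Real.log_le_sub_one_of_pos (show (0 : ℝ) < 3 by norm_num)]
  have hle : r ≤ 3 + r * Real.log r := by
    rcases le_total r (Real.exp 1) with h | h
    · linarith [Real.exp_one_lt_three, mul_nonneg (zero_le_one.trans hr) hlog0]
    · have : 1 ≤ Real.log r := (Real.le_log_iff_exp_le (by positivity)).2 h
      nlinarith
  calc zygmundFun 1 r ≤ r * (2 + Real.log r) := by
        unfold zygmundFun
        rw [pow_one]
        gcongr
    _ ≤ 6 + 3 * (r * Real.log r) := by linarith

lemma zygmundFun_one_norm_cauchyTransform_le (hG0 : ∀ t, 0 ≤ G t) (hG : Integrable G μI) {z : ℂ}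
    (hz : 0 < z.im) :
    zygmundFun 1 ‖cauchyTransform μI G z‖ ≤ 120 + 12 * ((zygmundMajorant (oneSubICauchy G z).re - 8)
      - (oneSubICauchy G z * Complex.log (oneSubICauchy G z) ^ 2).re) := by
  have hre := one_le_re_oneSubICauchy hG0 hG hz
  calc zygmundFun 1 ‖cauchyTransform μI G z‖ ≤ zygmundFun 1 (2 * ‖oneSubICauchy G z‖) :=
        zygmundFun_le_zygmundFun 1 (norm_nonneg _) (norm_cauchyTransform_le_two_mul hG0 hG hz)
    _ ≤ 2 ^ 2 * zygmundFun 1 ‖oneSubICauchy G z‖ :=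
        zygmundFun_mul_le 1 one_le_two (norm_nonneg _)
    _ ≤ _ := by
        linarith [zygmundFun_one_le (hre.trans (Complex.re_le_norm _)), norm_mul_log_norm_le hre]

lemma setIntegral_re_mul_log_sq_ge (hG0 : ∀ t, 0 ≤ G t) (hG : Integrable G μI)
    (hGm : zygmundModular μI 2 G ≤ m) (hy : 0 < y) (hy2 : y ≤ 2) :
    -(8 * ((1 + 4 * m) * (4 * m + 4) ^ 2)) ≤ ∫ x in Ioc (-2 : ℝ) 2,
      (oneSubICauchy G (x + y * Complex.I) *
        Complex.log (oneSubICauchy G (x + y * Complex.I)) ^ 2).re := by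
  have him : ∀ x : ℝ, 0 < ((x : ℂ) + y * Complex.I).im := fun x => by simpa using hy
  have hdiff := fun (z : ℂ) (hz : 0 < z.im) => differentiableAt_oneSubICauchy_mul_log_sq hG0 hG hz
  have hcont := continuous_comp_add_mul_I fun x => (hdiff _ (him x)).continuousAt
  have hint := hcont.integrableOn_Ioc (μ := volume) (a := -2) (b := 2)
  have hm : ∫ t, |G t| ∂μI ≤ 4 * m := by
    simpa [show (2 : ℝ) ^ 2 = 4 by norm_num] using integral_abs_le_of_zygmundModular_le hG hGm
  have hnorm := norm_intervalIntegral_add_mul_I_le hdiff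
    (fun z hz hz2 => norm_oneSubICauchy_mul_log_sq_le hG0 hG hm hz hz2) hy hy2
  rw [intervalIntegral.integral_of_le (by norm_num)] at hnorm
  calc _ ≤ (∫ x in Ioc (-2 : ℝ) 2, oneSubICauchy G (x + y * Complex.I) *
        Complex.log (oneSubICauchy G (x + y * Complex.I)) ^ 2).re :=
        neg_le_of_abs_le ((Complex.abs_re_le_norm _).trans hnorm)
    _ = _ := (integral_re hint).symm

lemma integrableOn_zygmundMajorant_sub_re_mul_log_sq (hG0 : ∀ t, 0 ≤ G t) (hG : Integrable G μI)
    (hGm : zygmundModular μI 2 G ≤ m) (hy : 0 < y) (hy2 : y ≤ 2) :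
    IntegrableOn (fun x : ℝ => zygmundMajorant (oneSubICauchy G (x + y * Complex.I)).re - 8 -
        (oneSubICauchy G (x + y * Complex.I) *
          Complex.log (oneSubICauchy G (x + y * Complex.I)) ^ 2).re) (Ioc (-2) 2) ∧
      ∫ x in Ioc (-2 : ℝ) 2, (zygmundMajorant (oneSubICauchy G (x + y * Complex.I)).re - 8 -
        (oneSubICauchy G (x + y * Complex.I) *
          Complex.log (oneSubICauchy G (x + y * Complex.I)) ^ 2).re) ≤
        1584 + 1000 * m + 8 * ((1 + 4 * m) * (4 * m + 4) ^ 2) := by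
  have him : ∀ x : ℝ, 0 < ((x : ℂ) + y * Complex.I).im := fun x => by simpa using hy
  set D : ℝ → ℂ := fun x => oneSubICauchy G (x + y * Complex.I)
  have hmajorant : IntegrableOn (fun x => zygmundMajorant (D x).re - 8) (Ioc (-2) 2) := by
    refine ((continuous_iff_continuousAt.2 fun x => ?_).sub continuous_const).integrableOn_Ioc
    refine (continuousAt_zygmundMajorant ?_).comp (f := fun x : ℝ => (D x).re) ?_
    · exact (zero_lt_one.trans_le (one_le_re_oneSubICauchy hG0 hG (him x))).ne'
    · exact (Complex.continuous_re.comp (continuous_comp_add_mul_I fun x =>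
        (differentiableAt_oneSubICauchy hG (him x)).continuousAt)).continuousAt
  have hlog : IntegrableOn (fun x => (D x * Complex.log (D x) ^ 2).re) (Ioc (-2) 2) :=
    (Complex.continuous_re.comp (continuous_comp_add_mul_I fun x =>
      (differentiableAt_oneSubICauchy_mul_log_sq hG0 hG (him x)).continuousAt)).integrableOn_Ioc
  refine ⟨hmajorant.sub hlog, ?_⟩
  rw [integral_sub hmajorant hlog]
  linarith [setIntegral_zygmundMajorant_re_le hG0 hG hGm hy (Ioc (-2) 2),
    setIntegral_re_mul_log_sq_ge hG0 hG hGm hy hy2]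

theorem exists_zygmundModular_cauchyTransform_le_of_nonneg (m : NNReal) :
    ∃ B : NNReal, ∀ G : ℝ → ℝ, (∀ t, 0 ≤ G t) → Integrable G μI → zygmundModular μI 2 G ≤ m →
      ∀ y ∈ Ioc (0 : ℝ) 2,
        zygmundModular μI 1 (fun x : ℝ => cauchyTransform μI G (x + y * Complex.I)) ≤ B := by
  refine ⟨Real.toNNReal (480 + 12 * (1584 + 1000 * m + 8 * ((1 + 4 * m) * (4 * m + 4) ^ 2))),
    fun G hG0 hG hGm y hy => ?_⟩
  obtain ⟨hsub, hle⟩ := integrableOn_zygmundMajorant_sub_re_mul_log_sq hG0 hG hGm hy.1 hy.2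
  set F : ℝ → ℝ := fun x : ℝ => zygmundMajorant (oneSubICauchy G (x + y * Complex.I)).re - 8 -
    (oneSubICauchy G (x + y * Complex.I) *
      Complex.log (oneSubICauchy G (x + y * Complex.I)) ^ 2).re
  have hpt : ∀ x : ℝ, zygmundFun 1 ‖cauchyTransform μI G (x + y * Complex.I)‖ ≤ 120 + 12 * F x :=
    fun x => zygmundFun_one_norm_cauchyTransform_le hG0 hG (by simpa using hy.1)
  have hint : IntegrableOn (fun x => 120 + 12 * F x) (Ioc (-2) 2) :=
    (integrable_const _).add (hsub.const_mul 12)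
  have hsubset : Ioo (-1 : ℝ) 1 ⊆ Ioc (-2) 2 := fun x hx => ⟨by linarith [hx.1], by linarith [hx.2]⟩
  calc zygmundModular μI 1 (fun x : ℝ => cauchyTransform μI G (x + y * Complex.I))
      ≤ ∫⁻ x in Ioc (-2 : ℝ) 2, ENNReal.ofReal (120 + 12 * F x) :=
        (lintegral_mono_set hsubset).trans
          (lintegral_mono fun x => ENNReal.ofReal_le_ofReal (hpt x))
    _ = ENNReal.ofReal (∫ x in Ioc (-2 : ℝ) 2, (120 + 12 * F x)) :=
        (ofReal_integral_eq_lintegral_ofReal hint (.of_forall fun x =>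
          (zygmundFun_nonneg 1 (norm_nonneg _)).trans (hpt x))).symm
    _ ≤ _ := by
        refine ENNReal.ofReal_le_ofReal ?_
        rw [integral_add (integrable_const _) (hsub.const_mul 12), integral_const_mul,
          setIntegral_const, Real.volume_real_Ioc_of_le (by norm_num), smul_eq_mul]
        linarith

theorem exists_zygmundModular_cauchyTransform_le (m : NNReal) :
    ∃ B : NNReal, ∀ g : ℝ → ℝ, Integrable g μI → zygmundModular μI 2 g ≤ m →
      ∀ y ∈ Ioc (0 : ℝ) 2,
        zygmundModular μI 1 (fun x : ℝ => cauchyTransform μI g (x + y * Complex.I)) ≤ B := by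
  obtain ⟨B, hB⟩ := exists_zygmundModular_cauchyTransform_le_of_nonneg m
  refine ⟨2 ^ 2 * (B + B), fun g hg hgm y hy => ?_⟩
  have him : ∀ x : ℝ, ((x : ℂ) + y * Complex.I).im ≠ 0 := fun x => im_add_mul_I_ne_zero x hy.1
  have hneg : Integrable (fun t => max (-g t) 0) μI := hg.neg.pos_part
  have hsplit : (fun t => max (g t) 0 - max (-g t) 0) = g := funext fun t => by
    rcases le_total (g t) 0 with h | h <;> simp [h]
  have hcont : Continuous fun x : ℝ =>
      cauchyTransform μI (fun t => max (g t) 0) (x + y * Complex.I) :=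
    continuous_cauchyTransform_add_mul_I hg.pos_part hy.1
  have hmod : ∀ h : ℝ → ℝ, (∀ t, |h t| ≤ |g t|) → zygmundModular μI 2 h ≤ m := fun h hle =>
    (zygmundModular_mono 2 (.of_forall hle)).trans hgm
  have hnorm : ∀ x : ℝ, ‖cauchyTransform μI g (x + y * Complex.I)‖ ≤
      ‖cauchyTransform μI (fun t => max (g t) 0) (x + y * Complex.I)‖ +
        ‖cauchyTransform μI (fun t => max (-g t) 0) (x + y * Complex.I)‖ := fun x => by
    rw [← congrArg (cauchyTransform μI · _) hsplit, cauchyTransform_sub hg.pos_part hneg (him x)]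
    exact norm_sub_le _ _
  refine (zygmundModular_le_of_norm_le_add 1 hcont.aestronglyMeasurable
    (.of_forall hnorm)).trans ?_
  push_cast
  gcongr
  · refine hB _ (fun t => le_max_right _ _) hg.pos_part (hmod _ fun t => ?_) y hy
    rcases le_total (g t) 0 with h | h <;> simp [h]
  · refine hB _ (fun t => le_max_right _ _) hneg (hmod _ fun t => ?_) y hy
    rcases le_total (g t) 0 with h | h <;> simp [h]

end ZygmundEstimate

/-! ### Commuting the semicircle weight with the Cauchy transform -/

/-- A bound, uniform in the distance to the real line, for the commutator of the real part of the
Cauchy transform with multiplication by `semicircle`, divided by `semicircle`. -/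
def commutatorMajorant (g : ℝ → ℝ) (x : ℝ) : ℝ :=
  2 * (semicircle x)⁻¹ * ∫ t, |g t| / (semicircle t + semicircle x) ∂μI

/-- The logarithmic weight `1 - log √(1 - x²)` at the endpoints of `(-1, 1)`. -/
def endpointLog (x : ℝ) : ℝ := 1 - Real.log (semicircle x)

section CommutatorMajorant

variable {g : ℝ → ℝ} {m : NNReal} {t x y : ℝ}

lemma commutatorMajorant_nonneg (g : ℝ → ℝ) (x : ℝ) : 0 ≤ commutatorMajorant g x :=
  mul_nonneg (mul_nonneg zero_le_two (inv_nonneg.2 (semicircle_nonneg x))) <|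
    integral_nonneg fun t =>
      div_nonneg (abs_nonneg _) (add_nonneg (semicircle_nonneg t) (semicircle_nonneg x))

lemma integrable_abs_div_semicircle_add (hg : Integrable g μI) (hx : x ∈ Ioo (-1 : ℝ) 1) :
    Integrable (fun t => |g t| / (semicircle t + semicircle x)) μI := by
  simp_rw [div_eq_mul_inv]
  refine hg.abs.mul_bdd (c := (semicircle x)⁻¹)
    (measurable_semicircle.add_const _).inv.aestronglyMeasurable (.of_forall fun t => ?_)
  have hle : semicircle x ≤ semicircle t + semicircle x :=
    le_add_of_nonneg_left (semicircle_nonneg t)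
  rw [norm_inv, Real.norm_of_nonneg ((semicircle_nonneg x).trans hle)]
  exact inv_anti₀ (semicircle_pos hx) hle

-- `w(t)² - w(x)² = x² - t²` cancels the singularity of the kernel.
lemma abs_semicircle_sub_mul_le (ht : t ∈ Ioo (-1 : ℝ) 1) (hx : x ∈ Ioo (-1 : ℝ) 1) (hy : 0 < y) :
    |(semicircle t - semicircle x) * ((t - x) / ((t - x) ^ 2 + y ^ 2))| ≤
      2 / (semicircle t + semicircle x) := by
  have hsum : 0 < semicircle t + semicircle x := add_pos (semicircle_pos ht) (semicircle_pos hx)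
  have hden : 0 < (t - x) ^ 2 + y ^ 2 := by positivity
  have hsub : semicircle t - semicircle x =
      -((t - x) * (t + x)) / (semicircle t + semicircle x) := by
    rw [eq_div_iff hsum.ne']
    linear_combination semicircle_sq ht - semicircle_sq hx
  have hadd : |t + x| ≤ 2 := abs_le.2 ⟨by linarith [ht.1, hx.1], by linarith [ht.2, hx.2]⟩
  have hkernel : (t - x) ^ 2 / ((t - x) ^ 2 + y ^ 2) ≤ 1 :=
    (div_le_one hden).2 (le_add_of_nonneg_right (sq_nonneg y))
  have heq : (semicircle t - semicircle x) * ((t - x) / ((t - x) ^ 2 + y ^ 2)) =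
      -((t - x) ^ 2 / ((t - x) ^ 2 + y ^ 2)) * ((t + x) / (semicircle t + semicircle x)) := by
    rw [hsub]
    ring
  rw [heq, abs_mul, abs_neg, abs_of_nonneg (by positivity), abs_div, abs_of_pos hsum]
  calc _ ≤ 1 * (2 / (semicircle t + semicircle x)) := by gcongr
    _ = _ := one_mul _

lemma abs_semicircle_inv_mul_re_cauchyTransform_le (hg : Integrable g μI)
    (hx : x ∈ Ioo (-1 : ℝ) 1) (hy : 0 < y) :
    |(semicircle x)⁻¹ * (cauchyTransform μI (fun t => semicircle t * g t)
        (x + y * Complex.I)).re| ≤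
      ‖cauchyTransform μI g (x + y * Complex.I)‖ + commutatorMajorant g x := by
  have hw := semicircle_pos hx
  have hint : Integrable (fun t => semicircle t * g t - semicircle x * g t) μI :=
    (integrable_semicircle_mul hg).sub (hg.const_mul _)
  have hcomm : |(cauchyTransform μI (fun t => semicircle t * g t - semicircle x * g t)
      (x + y * Complex.I)).re| ≤ ∫ t, 2 * (|g t| / (semicircle t + semicircle x)) ∂μI := by
    rw [re_cauchyTransform hint x hy, ← Real.norm_eq_abs]
    refine norm_integral_le_of_norm_le
      ((integrable_abs_div_semicircle_add hg hx).const_mul 2) ?_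
    filter_upwards [ae_mem_Ioo] with t ht
    rw [← sub_mul, mul_right_comm, norm_mul, mul_div_left_comm 2, mul_comm]
    exact mul_le_mul_of_nonneg_left (abs_semicircle_sub_mul_le ht hx hy) (abs_nonneg _)
  rw [cauchyTransform_sub (integrable_semicircle_mul hg) (hg.const_mul _)
    (im_add_mul_I_ne_zero x hy), cauchyTransform_const_mul, integral_const_mul] at hcomm
  set P := cauchyTransform μI (fun t => semicircle t * g t) (x + y * Complex.I)
  set Q := cauchyTransform μI g (x + y * Complex.I)
  calc |(semicircle x)⁻¹ * P.re|
      = |Q.re + (semicircle x)⁻¹ * (P - semicircle x * Q).re| := by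
        rw [Complex.sub_re, Complex.re_ofReal_mul, mul_sub, inv_mul_cancel_left₀ hw.ne',
          add_sub_cancel]
    _ ≤ |Q.re| + (semicircle x)⁻¹ * |(P - semicircle x * Q).re| := by
        rw [← abs_of_pos (inv_pos.2 hw), ← abs_mul, abs_of_pos (inv_pos.2 hw)]
        exact abs_add_le _ _
    _ ≤ ‖Q‖ + (semicircle x)⁻¹ *
          (2 * ∫ t, |g t| / (semicircle t + semicircle x) ∂μI) := by
        gcongr
        exact Complex.abs_re_le_norm Q
    _ = _ := by
        rw [commutatorMajorant]
        ring

lemma one_le_endpointLog (x : ℝ) : 1 ≤ endpointLog x := by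
  have := Real.log_nonpos (semicircle_nonneg x) (semicircle_le_one x)
  unfold endpointLog
  linarith

lemma measurable_endpointLog : Measurable endpointLog :=
  measurable_const.sub (Real.measurable_log.comp measurable_semicircle)

lemma lintegral_one_sub_rpow_le {b : ℝ} (hb : 0 < b) (hb1 : b ≤ 1) :
    ∫⁻ x, ENNReal.ofReal ((1 - x) ^ (b - 1)) ∂μI ≤ ENNReal.ofReal (2 / b) := by
  have hint : IntervalIntegrable (fun x : ℝ => (1 - x) ^ (b - 1)) volume (-1) 1 := by
    have hpow : IntervalIntegrable (fun x : ℝ => x ^ (b - 1)) volume 0 (1 - -1) :=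
      intervalIntegral.intervalIntegrable_rpow' (by linarith)
    simpa using (hpow.comp_sub_left 1).symm
  have hle : ∫ x in (-1 : ℝ)..1, (1 - x) ^ (b - 1) ≤ 2 / b := by
    rw [intervalIntegral.integral_comp_sub_left (fun x : ℝ => x ^ (b - 1)) 1,
      integral_rpow (.inl (by linarith)), sub_add_cancel, sub_self, Real.zero_rpow hb.ne', sub_zero]
    gcongr
    simpa [one_add_one_eq_two] using
      Real.rpow_le_rpow_of_exponent_le (by norm_num : (1 : ℝ) ≤ 2) hb1
  refine le_trans (le_of_eq ?_) (ENNReal.ofReal_le_ofReal hle)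
  rw [intervalIntegral.integral_of_le (by norm_num), integral_Ioc_eq_integral_Ioo,
    ofReal_integral_eq_lintegral_ofReal (hint.1.mono_set Ioo_subset_Ioc_self), μI]
  filter_upwards [ae_restrict_mem measurableSet_Ioo] with x hx
  exact Real.rpow_nonneg (by linarith [hx.2]) _

lemma lintegral_one_add_rpow_le {b : ℝ} (hb : 0 < b) (hb1 : b ≤ 1) :
    ∫⁻ x, ENNReal.ofReal ((1 + x) ^ (b - 1)) ∂μI ≤ ENNReal.ofReal (2 / b) := by
  have hneg : MeasurePreserving (Neg.neg : ℝ → ℝ) μI μI := by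
    have := (Measure.measurePreserving_neg (volume : Measure ℝ)).restrict_preimage
      (measurableSet_Ioo (a := (-1 : ℝ)) (b := 1))
    simpa [μI] using this
  rw [← hneg.lintegral_comp (by fun_prop)]
  simpa only [← sub_eq_add_neg] using lintegral_one_sub_rpow_le hb hb1

lemma endpointLog_le_mul_rpow (hx : x ∈ Ioo (-1 : ℝ) 1) {l : ℝ} (hl : 1 ≤ l) :
    endpointLog x ≤ 2 * l * semicircle x ^ (-(l⁻¹ / 2)) := by
  have : 0 < l := by positivity
  have := Real.log_nonpos (semicircle_nonneg x) (semicircle_le_one x)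
  have hexp : 1 + l⁻¹ / 2 * -Real.log (semicircle x) ≤ semicircle x ^ (-(l⁻¹ / 2)) := by
    rw [Real.rpow_def_of_pos (semicircle_pos hx)]
    linarith [Real.add_one_le_exp (Real.log (semicircle x) * -(l⁻¹ / 2))]
  calc endpointLog x = 1 + -Real.log (semicircle x) := sub_eq_add_neg _ _
    _ ≤ 2 * l + -Real.log (semicircle x) := by linarith
    _ = 2 * l * (1 + l⁻¹ / 2 * -Real.log (semicircle x)) := by
        field_simp
    _ ≤ _ := by gcongr

-- Weighted AM-GM with exponent `1 / endpointLog t`, for which `w(t)` contributes a constant.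
lemma inv_semicircle_add_le (ht : t ∈ Ioo (-1 : ℝ) 1) (hx : x ∈ Ioo (-1 : ℝ) 1) :
    (semicircle t + semicircle x)⁻¹ ≤ 3 * semicircle x ^ ((endpointLog t)⁻¹ - 1) := by
  have hc := semicircle_pos ht
  have hw := semicircle_pos hx
  have hl0 : 0 < endpointLog t := zero_lt_one.trans_le (one_le_endpointLog t)
  set a := (endpointLog t)⁻¹
  have ha0 : 0 < a := inv_pos.2 hl0
  have ha1 : a ≤ 1 := inv_le_one_of_one_le₀ (one_le_endpointLog t)
  have hgeom : semicircle t ^ a * semicircle x ^ (1 - a) ≤ semicircle t + semicircle x := by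
    refine (Real.geom_mean_le_arith_mean2_weighted ha0.le (sub_nonneg.2 ha1) hc.le hw.le
      (by ring)).trans ?_
    exact add_le_add (mul_le_of_le_one_left hc.le ha1)
      (mul_le_of_le_one_left hw.le (by linarith))
  have hpow : 1 / 3 ≤ semicircle t ^ a := by
    have hlog : Real.log (semicircle t) * a = a - 1 := by
      have : a * endpointLog t = 1 := inv_mul_cancel₀ hl0.ne'
      rw [endpointLog] at this
      linarith
    rw [Real.rpow_def_of_pos hc, hlog]
    calc (1 / 3 : ℝ) ≤ Real.exp (-1) := by
          rw [Real.exp_neg, one_div]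
          exact inv_anti₀ (Real.exp_pos 1) Real.exp_one_lt_three.le
      _ ≤ Real.exp (a - 1) := Real.exp_le_exp.2 (by linarith)
  have hle : 1 / 3 * semicircle x ^ (1 - a) ≤ semicircle t + semicircle x :=
    (mul_le_mul_of_nonneg_right hpow (Real.rpow_nonneg hw.le _)).trans hgeom
  calc (semicircle t + semicircle x)⁻¹ ≤ (1 / 3 * semicircle x ^ (1 - a))⁻¹ := by gcongr
    _ = 3 * semicircle x ^ (a - 1) := by
        rw [mul_inv, ← Real.rpow_neg hw.le, neg_sub]
        norm_num

lemma one_sub_sq_rpow_le (hx : x ∈ Ioo (-1 : ℝ) 1) {p : ℝ} (hp : p ≤ 0) :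
    (1 - x ^ 2) ^ p ≤ (1 - x) ^ p + (1 + x) ^ p := by
  have hsub : 0 < 1 - x := by linarith [hx.2]
  have hadd : 0 < 1 + x := by linarith [hx.1]
  rcases le_total 0 x with h | h
  · exact (Real.rpow_le_rpow_of_nonpos hsub (by nlinarith) hp).trans
      (le_add_of_nonneg_right (Real.rpow_nonneg hadd.le p))
  · exact (Real.rpow_le_rpow_of_nonpos hadd (by nlinarith) hp).trans
      (le_add_of_nonneg_left (Real.rpow_nonneg hsub.le p))

lemma endpointLog_mul_inv_semicircle_add_le (ht : t ∈ Ioo (-1 : ℝ) 1) (hx : x ∈ Ioo (-1 : ℝ) 1) :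
    2 * endpointLog x * (semicircle x)⁻¹ * (semicircle t + semicircle x)⁻¹ ≤
      12 * endpointLog t * ((1 - x) ^ ((endpointLog t)⁻¹ / 4 - 1) +
        (1 + x) ^ ((endpointLog t)⁻¹ / 4 - 1)) := by
  have hw := semicircle_pos hx
  have hl := one_le_endpointLog t
  have ha1 : (endpointLog t)⁻¹ ≤ 1 := inv_le_one_of_one_le₀ hl
  have hpow : semicircle x ^ (-((endpointLog t)⁻¹ / 2)) * (semicircle x)⁻¹ *
      semicircle x ^ ((endpointLog t)⁻¹ - 1) = (1 - x ^ 2) ^ ((endpointLog t)⁻¹ / 4 - 1) := by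
    rw [← semicircle_sq hx, ← Real.rpow_natCast, ← Real.rpow_mul hw.le,
      ← Real.rpow_neg_one (semicircle x), ← Real.rpow_add hw, ← Real.rpow_add hw]
    congr 1
    push_cast
    ring
  calc 2 * endpointLog x * (semicircle x)⁻¹ * (semicircle t + semicircle x)⁻¹
      ≤ 2 * (2 * endpointLog t * semicircle x ^ (-((endpointLog t)⁻¹ / 2))) * (semicircle x)⁻¹ *
          (3 * semicircle x ^ ((endpointLog t)⁻¹ - 1)) := by
        gcongr
        · have := semicircle_pos ht
          positivity
        · exact endpointLog_le_mul_rpow hx hl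
        · exact inv_semicircle_add_le ht hx
    _ = 12 * endpointLog t * (1 - x ^ 2) ^ ((endpointLog t)⁻¹ / 4 - 1) := by
        rw [← hpow]
        ring
    _ ≤ _ := by
        gcongr
        exact one_sub_sq_rpow_le hx (by linarith)

lemma lintegral_endpointLog_mul_inv_semicircle_add_le (ht : t ∈ Ioo (-1 : ℝ) 1) :
    ∫⁻ x, ENNReal.ofReal
        (2 * endpointLog x * (semicircle x)⁻¹ * (semicircle t + semicircle x)⁻¹) ∂μI ≤
      ENNReal.ofReal (192 * endpointLog t ^ 2) := by
  have hl := one_le_endpointLog t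
  set b := (endpointLog t)⁻¹ / 4 with hb
  have hb0 : 0 < b := by positivity
  have hb1 : b ≤ 1 := by linarith [inv_le_one_of_one_le₀ hl]
  calc _ ≤ ∫⁻ x, ENNReal.ofReal (12 * endpointLog t) * (ENNReal.ofReal ((1 - x) ^ (b - 1)) +
        ENNReal.ofReal ((1 + x) ^ (b - 1))) ∂μI := by
        refine lintegral_mono_ae ?_
        filter_upwards [ae_mem_Ioo] with x hx
        rw [← ENNReal.ofReal_add (Real.rpow_nonneg (by linarith [hx.2]) _)
          (Real.rpow_nonneg (by linarith [hx.1]) _), ← ENNReal.ofReal_mul (by positivity)]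
        exact ENNReal.ofReal_le_ofReal (endpointLog_mul_inv_semicircle_add_le ht hx)
    _ = ENNReal.ofReal (12 * endpointLog t) * (∫⁻ x, ENNReal.ofReal ((1 - x) ^ (b - 1)) ∂μI +
        ∫⁻ x, ENNReal.ofReal ((1 + x) ^ (b - 1)) ∂μI) := by
        rw [lintegral_const_mul _ (by fun_prop), lintegral_add_left (by fun_prop)]
    _ ≤ ENNReal.ofReal (12 * endpointLog t) *
          (ENNReal.ofReal (2 / b) + ENNReal.ofReal (2 / b)) := by
        gcongr
        · exact lintegral_one_sub_rpow_le hb0 hb1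
        · exact lintegral_one_add_rpow_le hb0 hb1
    _ = _ := by
        rw [← ENNReal.ofReal_add (by positivity) (by positivity),
          ← ENNReal.ofReal_mul (by positivity), hb]
        congr 1
        field_simp
        norm_num

-- Compare `a` with `(semicircle t) ^ (-1/2)`.
lemma mul_endpointLog_sq_le (ht : t ∈ Ioo (-1 : ℝ) 1) {a : ℝ} (ha : 0 ≤ a) :
    a * endpointLog t ^ 2 ≤ 16 * zygmundFun 2 a + 16 * (semicircle t)⁻¹ := by
  have hw := semicircle_pos ht
  have hl := one_le_endpointLog t
  have hlog := one_half_le_log_two_add ha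
  set u := -Real.log (semicircle t) with hu
  have hlu : endpointLog t = 1 + u := sub_eq_add_neg _ _
  have hwu : (semicircle t)⁻¹ = Real.exp u := by rw [hu, Real.exp_neg, Real.exp_log hw]
  rcases le_total a (Real.exp (u / 2)) with h | h
  · have hle : endpointLog t ≤ 4 * Real.exp (u / 4) := by
      linarith [Real.add_one_le_exp (u / 4)]
    calc a * endpointLog t ^ 2 ≤ Real.exp (u / 2) * (4 * Real.exp (u / 4)) ^ 2 := by gcongr
      _ = 16 * Real.exp (u / 2 + (u / 4 + u / 4)) := by
          rw [Real.exp_add, Real.exp_add]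
          ring
      _ = 16 * (semicircle t)⁻¹ := by
          rw [hwu]
          ring_nf
      _ ≤ _ := le_add_of_nonneg_left (mul_nonneg (by norm_num) (zygmundFun_nonneg 2 ha))
  · have hle : u / 2 ≤ Real.log (2 + a) := by
      rw [Real.le_log_iff_exp_le (by linarith)]
      linarith
    calc a * endpointLog t ^ 2 ≤ a * (4 * Real.log (2 + a)) ^ 2 := by
          gcongr
          linarith
      _ = 16 * zygmundFun 2 a := by
          unfold zygmundFun
          ring
      _ ≤ _ := le_add_of_nonneg_right (by positivity)

lemma commutatorMajorant_le_div_sq (hg : Integrable g μI) (hx : x ∈ Ioo (-1 : ℝ) 1) :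
    commutatorMajorant g x ≤ 2 * (∫ t, |g t| ∂μI) / semicircle x ^ 2 := by
  have hw := semicircle_pos hx
  have hle : ∫ t, |g t| / (semicircle t + semicircle x) ∂μI ≤ (∫ t, |g t| ∂μI) / semicircle x := by
    rw [← integral_div]
    refine integral_mono (integrable_abs_div_semicircle_add hg hx) (hg.abs.div_const _) fun t => ?_
    have := semicircle_nonneg t
    dsimp only
    gcongr
    linarith
  calc commutatorMajorant g x
      ≤ 2 * (semicircle x)⁻¹ * ((∫ t, |g t| ∂μI) / semicircle x) := by
        unfold commutatorMajorant
        gcongr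
    _ = _ := by
        field_simp

lemma zygmundFun_one_commutatorMajorant_le (hg : Integrable g μI)
    (hx : x ∈ Ioo (-1 : ℝ) 1) :
    zygmundFun 1 (commutatorMajorant g x) ≤
      (2 + 2 * ∫ t, |g t| ∂μI) * (endpointLog x * commutatorMajorant g x) := by
  have hw := semicircle_pos hx
  have hK0 := commutatorMajorant_nonneg g x
  have hK := commutatorMajorant_le_div_sq hg hx
  set M := ∫ t, |g t| ∂μI
  have hM : 0 ≤ M := integral_nonneg fun _ => abs_nonneg _
  have hadd : 2 + commutatorMajorant g x ≤ (2 + 2 * M) / semicircle x ^ 2 := by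
    have hsq : semicircle x ^ 2 ≤ 1 := pow_le_one₀ hw.le (semicircle_le_one x)
    have : 2 ≤ 2 / semicircle x ^ 2 := by
      rw [le_div_iff₀ (by positivity)]
      linarith
    rw [add_div]
    linarith
  have hlog : Real.log (2 + commutatorMajorant g x) ≤ (2 + 2 * M) * endpointLog x := by
    have h := Real.log_le_log (by linarith) hadd
    rw [Real.log_div (by positivity) (by positivity), Real.log_pow] at h
    have hlogM := Real.log_le_sub_one_of_pos (show 0 < 2 + 2 * M by positivity)
    have hlogw := Real.log_nonpos hw.le (semicircle_le_one x)
    unfold endpointLog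
    push_cast at h
    nlinarith
  calc zygmundFun 1 (commutatorMajorant g x)
      ≤ commutatorMajorant g x * ((2 + 2 * M) * endpointLog x) := by
        rw [zygmundFun, pow_one]
        gcongr
    _ = _ := by ring

lemma ofReal_endpointLog_mul_commutatorMajorant (hg : Integrable g μI)
    (hx : x ∈ Ioo (-1 : ℝ) 1) :
    ENNReal.ofReal (endpointLog x * commutatorMajorant g x) = ∫⁻ t, ENNReal.ofReal
      (|g t| * (2 * endpointLog x * (semicircle x)⁻¹ * (semicircle t + semicircle x)⁻¹)) ∂μI := by
  have hw := semicircle_pos hx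
  have hl := one_le_endpointLog x
  have hint := (integrable_abs_div_semicircle_add hg hx).const_mul
    (2 * endpointLog x * (semicircle x)⁻¹)
  have heq : ∀ t, 2 * endpointLog x * (semicircle x)⁻¹ * (|g t| / (semicircle t + semicircle x)) =
      |g t| * (2 * endpointLog x * (semicircle x)⁻¹ * (semicircle t + semicircle x)⁻¹) :=
    fun t => by ring
  have hval : endpointLog x * commutatorMajorant g x = ∫ t, 2 * endpointLog x *
      (semicircle x)⁻¹ * (|g t| / (semicircle t + semicircle x)) ∂μI := by
    rw [integral_const_mul, commutatorMajorant]
    ring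
  rw [hval, ofReal_integral_eq_lintegral_ofReal hint (.of_forall fun t => ?_)]
  · simp only [heq]
  · have := semicircle_nonneg t
    positivity

lemma lintegral_endpointLog_mul_commutatorMajorant_le (hg : Integrable g μI) :
    ∫⁻ x, ENNReal.ofReal (endpointLog x * commutatorMajorant g x) ∂μI ≤
      ∫⁻ t, ENNReal.ofReal (|g t| * (192 * endpointLog t ^ 2)) ∂μI := by
  set k : ℝ → ℝ → ℝ := fun x t =>
    2 * endpointLog x * (semicircle x)⁻¹ * (semicircle t + semicircle x)⁻¹
  have hmeas : AEMeasurable (Function.uncurry fun x t => ENNReal.ofReal (|g t| * k x t))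
      (μI.prod μI) := by
    have hkm : Measurable (Function.uncurry k) := by
      have := measurable_endpointLog
      have := measurable_semicircle
      unfold Function.uncurry
      fun_prop
    have hgm : AEMeasurable (fun t => |g t|) μI := hg.aemeasurable.norm
    exact (hgm.comp_snd.mul hkm.aemeasurable).ennreal_ofReal
  calc ∫⁻ x, ENNReal.ofReal (endpointLog x * commutatorMajorant g x) ∂μI
      = ∫⁻ x, ∫⁻ t, ENNReal.ofReal (|g t| * k x t) ∂μI ∂μI :=
        lintegral_congr_ae (ae_mem_Ioo.mono fun x hx =>
          ofReal_endpointLog_mul_commutatorMajorant hg hx)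
    _ = ∫⁻ t, ∫⁻ x, ENNReal.ofReal (|g t| * k x t) ∂μI ∂μI := lintegral_lintegral_swap hmeas
    _ ≤ ∫⁻ t, ENNReal.ofReal (|g t| * (192 * endpointLog t ^ 2)) ∂μI := by
        refine lintegral_mono_ae (ae_mem_Ioo.mono fun t ht => ?_)
        simp_rw [ENNReal.ofReal_mul (abs_nonneg (g t))]
        rw [lintegral_const_mul' _ _ ENNReal.ofReal_ne_top]
        gcongr
        exact lintegral_endpointLog_mul_inv_semicircle_add_le ht

lemma lintegral_endpointLog_mul_commutatorMajorant_le_integral (hg : Integrable g μI)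
    (hmod : Integrable (fun t => zygmundFun 2 ‖g t‖) μI) :
    ∫⁻ x, ENNReal.ofReal (endpointLog x * commutatorMajorant g x) ∂μI ≤
      ENNReal.ofReal (192 * (16 * (∫ t, zygmundFun 2 ‖g t‖ ∂μI) + 16 * Real.pi)) := by
  have hmod' := hmod.const_mul 16
  have hinv' := integrable_semicircle_inv.const_mul 16
  calc ∫⁻ x, ENNReal.ofReal (endpointLog x * commutatorMajorant g x) ∂μI
      ≤ ∫⁻ t, ENNReal.ofReal
          (192 * (16 * zygmundFun 2 ‖g t‖ + 16 * (semicircle t)⁻¹)) ∂μI := by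
        refine (lintegral_endpointLog_mul_commutatorMajorant_le hg).trans
          (lintegral_mono_ae (ae_mem_Ioo.mono fun t ht => ENNReal.ofReal_le_ofReal ?_))
        rw [mul_left_comm, Real.norm_eq_abs]
        gcongr
        exact mul_endpointLog_sq_le ht (abs_nonneg _)
    _ = _ := by
        rw [← integral_semicircle_inv, ← integral_const_mul, ← integral_const_mul,
          ← integral_add hmod' hinv', ← integral_const_mul]
        refine (ofReal_integral_eq_lintegral_ofReal ((hmod'.add hinv').const_mul 192)
          (.of_forall fun t => ?_)).symm
        have := semicircle_nonneg t
        have := zygmundFun_nonneg 2 (norm_nonneg (g t))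
        simp only [Pi.add_apply]
        positivity

theorem exists_zygmundModular_commutatorMajorant_le (m : NNReal) :
    ∃ B : NNReal, ∀ g : ℝ → ℝ, Integrable g μI → zygmundModular μI 2 g ≤ m →
      zygmundModular μI 1 (commutatorMajorant g) ≤ B := by
  refine ⟨Real.toNNReal ((2 + 2 * (2 ^ 2 * m)) * (192 * (16 * m + 16 * Real.pi))),
    fun g hg hgm => ?_⟩
  have hM := integral_abs_le_of_zygmundModular_le hg hgm
  have hmod := integrable_zygmundFun_norm hg.aestronglyMeasurable
    (ne_top_of_le_ne_top ENNReal.coe_ne_top hgm)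
  have hc : 0 ≤ 2 + 2 * ((2 : ℝ) ^ 2 * m) := by positivity
  calc zygmundModular μI 1 (commutatorMajorant g)
      ≤ ∫⁻ x, ENNReal.ofReal ((2 + 2 * (2 ^ 2 * m)) *
          (endpointLog x * commutatorMajorant g x)) ∂μI := by
        refine lintegral_mono_ae (ae_mem_Ioo.mono fun x hx => ENNReal.ofReal_le_ofReal ?_)
        have hl := one_le_endpointLog x
        have hK := commutatorMajorant_nonneg g x
        rw [Real.norm_of_nonneg hK]
        exact (zygmundFun_one_commutatorMajorant_le hg hx).trans (by gcongr)
    _ ≤ ENNReal.ofReal (2 + 2 * (2 ^ 2 * m)) *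
          ENNReal.ofReal (192 * (16 * (∫ t, zygmundFun 2 ‖g t‖ ∂μI) + 16 * Real.pi)) := by
        simp_rw [ENNReal.ofReal_mul hc]
        rw [lintegral_const_mul' _ _ ENNReal.ofReal_ne_top]
        gcongr 1
        exact lintegral_endpointLog_mul_commutatorMajorant_le_integral hg hmod
    _ ≤ _ := by
        rw [← ENNReal.ofReal_mul hc]
        refine ENNReal.ofReal_le_ofReal ?_
        gcongr
        exact integral_zygmundFun_norm_le hg hgm

end CommutatorMajorant

lemma exists_zygmundModular_semicircle_inv_mul_re_cauchyTransform_le (m : NNReal) :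
    ∃ B : NNReal, ∀ g : ℝ → ℝ, Integrable g μI → zygmundModular μI 2 g ≤ m →
      ∀ y ∈ Ioc (0 : ℝ) 2, zygmundModular μI 1 (fun x : ℝ => (semicircle x)⁻¹ *
        (cauchyTransform μI (fun t => semicircle t * g t) (x + y * Complex.I)).re) ≤ B := by
  obtain ⟨B, hB⟩ := exists_zygmundModular_cauchyTransform_le m
  obtain ⟨K, hK⟩ := exists_zygmundModular_commutatorMajorant_le m
  refine ⟨2 ^ 2 * (B + K), fun g hg hgm y hy => ?_⟩
  refine (zygmundModular_le_of_norm_le_add (g := commutatorMajorant g) 1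
    (continuous_cauchyTransform_add_mul_I hg hy.1).aestronglyMeasurable
    (ae_mem_Ioo.mono fun x hx => ?_)).trans ?_
  · rw [Real.norm_of_nonneg (commutatorMajorant_nonneg g x)]
    exact abs_semicircle_inv_mul_re_cauchyTransform_le hg hx hy.1
  · push_cast
    gcongr
    · exact hB g hg hgm y hy
    · exact hK g hg hgm

namespace IsAirfoilPair

theorem exists_zygmundModular_left_le (m : NNReal) :
    ∃ B : NNReal, ∀ f g : ℝ → ℝ, IsAirfoilPair f g → zygmundModular μI 2 g ≤ m →
      zygmundModular μI 1 f ≤ B := by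
  obtain ⟨B, hB⟩ := exists_zygmundModular_semicircle_inv_mul_re_cauchyTransform_le m
  refine ⟨B, fun f g h hgm => ?_⟩
  set y : ℕ → ℝ := fun n => 1 / ((n : ℝ) + 1)
  have hy0 : ∀ n, 0 < y n := fun n => Nat.one_div_pos_of_nat
  have hy2 : ∀ n, y n ≤ 2 := fun n => (div_le_one (by positivity)).2 (by simp) |>.trans one_le_two
  have hlim : Tendsto y atTop (𝓝[>] 0) :=
    tendsto_nhdsWithin_iff.2 ⟨tendsto_one_div_add_atTop_nhds_zero_nat, .of_forall hy0⟩
  refine (zygmundModular_mono 1 (.of_forall fun x => ?_)).trans <|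
    zygmundModular_le_of_tendsto (fun n => ?_)
      (fun n => hB g h.integrable_right hgm (y n) ⟨hy0 n, hy2 n⟩)
      (h.ae_tendsto_re_cauchyTransform.mono fun x hx => hx.comp hlim)
  · rw [norm_neg, norm_mul, Real.norm_of_nonneg Real.pi_pos.le]
    exact le_mul_of_one_le_left (norm_nonneg _) (by linarith [Real.pi_gt_three])
  · exact (measurable_semicircle.inv.mul (Complex.continuous_re.comp
      (continuous_cauchyTransform_add_mul_I (integrable_semicircle_mul h.integrable_right)
        (hy0 n))).measurable).aestronglyMeasurable

lemma exists_eLpNorm_left_le (m : NNReal) :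
    ∃ B : NNReal, ∀ (f g : ℝ → ℝ) (n : ℕ), IsAirfoilPair f g →
      zygmundModular μI 2 g ≤ m * (8⁻¹ : ℝ≥0∞) ^ n → eLpNorm f 1 μI ≤ B * (2⁻¹ : ℝ≥0∞) ^ n := by
  obtain ⟨B, hB⟩ := exists_zygmundModular_left_le m
  refine ⟨2 ^ 1 * B, fun f g n h hgm => ?_⟩
  have hscale : zygmundModular μI 2 (fun t => 2 ^ n * g t) ≤ m := by
    calc zygmundModular μI 2 (fun t => 2 ^ n * g t)
        ≤ ENNReal.ofReal ((2 ^ n) ^ 3) * zygmundModular μI 2 g :=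
          zygmundModular_le_of_norm_le_mul 2 (one_le_pow₀ one_le_two)
            (.of_forall fun t => by simp)
      _ ≤ 8 ^ n * (m * (8⁻¹ : ℝ≥0∞) ^ n) := by
          rw [← pow_mul, mul_comm n, pow_mul, ENNReal.ofReal_pow (by positivity)]
          norm_num
          gcongr
      _ = m := by
          rw [mul_left_comm, ← mul_pow, ENNReal.mul_inv_cancel (by simp) (by simp), one_pow,
            mul_one]
  have hnorm := (lintegral_enorm_le_zygmundModular 1 _).trans
    (mul_le_mul_right (hB _ _ (h.const_mul (2 ^ n)) hscale) (2 ^ 1))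
  simp only [enorm_mul, enorm_pow] at hnorm
  rw [lintegral_const_mul' _ _ (by finiteness)] at hnorm
  rw [eLpNorm_one_eq_lintegral_enorm, ← ENNReal.inv_pow, ← div_eq_mul_inv,
    ENNReal.le_div_iff_mul_le (by simp) (by simp), mul_comm]
  simpa [Real.enorm_eq_ofReal] using hnorm

end IsAirfoilPair

/-! ### Density of the polynomials in the Zygmund class -/

section Approximation

variable {α E : Type*} [MeasurableSpace α] [NormedAddCommGroup E] {μ : Measure α} {f : α → E}
  {k : ℕ} {ε : ℝ≥0∞}

lemma zygmundModular_le_mul_lintegral_enorm {M : ℝ} (k : ℕ) (hM : ∀ᵐ x ∂μ, ‖f x‖ ≤ M) :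
    zygmundModular μ k f ≤ ENNReal.ofReal (Real.log (2 + M) ^ k) * ∫⁻ x, ‖f x‖ₑ ∂μ := by
  rw [zygmundModular, ← lintegral_const_mul' _ _ ENNReal.ofReal_ne_top]
  refine lintegral_mono_ae (hM.mono fun x hx => ?_)
  have hlog := one_half_le_log_two_add (norm_nonneg (f x))
  rw [← ofReal_norm, ← ENNReal.ofReal_mul' (norm_nonneg _), zygmundFun, mul_comm]
  gcongr

lemma zygmundModular_sub_le_of_le_pow {u : ℕ → α → E} {r : ℝ≥0∞} {N i j : ℕ}
    (hf : AEStronglyMeasurable f μ) (hu : ∀ n, AEStronglyMeasurable (u n) μ)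
    (hfu : ∀ n, zygmundModular μ k (fun x => f x - u n x) ≤ r ^ n) (hr : r ≤ 1)
    (hi : N ≤ i) (hj : N ≤ j) :
    zygmundModular μ k (fun x => u i x - u j x) ≤ 2 ^ (k + 2) * r ^ N :=
  calc zygmundModular μ k (fun x => u i x - u j x)
      ≤ 2 ^ (k + 1) * (zygmundModular μ k (fun x => f x - u i x) +
          zygmundModular μ k (fun x => f x - u j x)) :=
        zygmundModular_le_of_norm_le_add k (hf.sub (hu i)) (.of_forall fun x => by
          rw [norm_sub_rev (f x)]
          exact norm_sub_le_norm_sub_add_norm_sub _ _ _)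
    _ ≤ 2 ^ (k + 1) * (r ^ N + r ^ N) := by
        gcongr
        · exact (hfu i).trans (pow_le_pow_right_of_le_one' hr hi)
        · exact (hfu j).trans (pow_le_pow_right_of_le_one' hr hj)
    _ = 2 ^ (k + 2) * r ^ N := by ring

lemma exists_bounded_zygmundModular_sub_le (hf : AEStronglyMeasurable f μ)
    (hfin : zygmundModular μ k f ≠ ∞) (hε : ε ≠ 0) :
    ∃ (M : ℝ) (g : α → E), AEStronglyMeasurable g μ ∧ (∀ x, ‖g x‖ ≤ M) ∧
      zygmundModular μ k (fun x => f x - g x) ≤ ε := by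
  set u : ℕ → α → E := fun n => {x | ‖f x‖ ≤ n}.indicator f with hu
  have hum : ∀ n, AEStronglyMeasurable (u n) μ := fun n =>
    hf.indicator₀ (nullMeasurableSet_le hf.norm.aemeasurable aemeasurable_const)
  have hub : ∀ n x, ‖u n x‖ ≤ n := fun n x => by
    by_cases h : ‖f x‖ ≤ n <;> simp [hu, h]
  have hsub : ∀ n x, ‖f x - u n x‖ ≤ ‖f x‖ := fun n x => by
    by_cases h : ‖f x‖ ≤ n <;> simp [hu, h]
  have hlim : ∀ x, Tendsto (fun n => ENNReal.ofReal (zygmundFun k ‖f x - u n x‖)) atTop (𝓝 0) := by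
    refine fun x => tendsto_const_nhds.congr' ?_
    filter_upwards [eventually_ge_atTop ⌈‖f x‖⌉₊] with n hn
    simp [hu, Nat.ceil_le.1 hn, zygmundFun]
  have hmod : Tendsto (fun n => zygmundModular μ k fun x => f x - u n x) atTop (𝓝 0) := by
    simpa [zygmundModular] using tendsto_lintegral_of_dominated_convergence' _
      (fun n => (aemeasurable_zygmundFun_norm k (hf.sub (hum n))).ennreal_ofReal)
      (fun n => .of_forall fun x => ENNReal.ofReal_le_ofReal
        (zygmundFun_le_zygmundFun k (norm_nonneg _) (hsub n x))) hfin (.of_forall hlim)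
  obtain ⟨n, hn⟩ := (hmod.eventually (Iic_mem_nhds hε.bot_lt)).exists
  exact ⟨n, u n, hum n, hub n, hn⟩

lemma exists_continuous_abs_le_lintegral_sub_le {X : Type*} [TopologicalSpace X] [NormalSpace X]
    [R1Space X] [WeaklyLocallyCompactSpace X] [MeasurableSpace X] [BorelSpace X] {μ : Measure X}
    [μ.Regular] {f : X → ℝ} {M : ℝ} (hf : Integrable f μ) (hM : ∀ x, |f x| ≤ M) (hM0 : 0 ≤ M)
    (hε : ε ≠ 0) :
    ∃ g : X → ℝ, Continuous g ∧ (∀ x, |g x| ≤ M) ∧ ∫⁻ x, ‖f x - g x‖ₑ ∂μ ≤ ε := by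
  obtain ⟨φ, -, hφ, hφc, -⟩ := hf.exists_hasCompactSupport_lintegral_sub_le hε
  have hM' : -M ≤ M := neg_le_self hM0
  refine ⟨fun x => projIcc (-M) M hM' (φ x), continuous_subtype_val.comp
    (continuous_projIcc.comp hφc), fun x => abs_le.2 (projIcc (-M) M hM' (φ x)).2,
    (lintegral_mono fun x => ?_).trans hφ⟩
  have := abs_projIcc_sub_projIcc (h := hM') (c := f x) (d := φ x)
  rw [projIcc_of_mem hM' (abs_le.1 (hM x))] at this
  rwa [enorm_le_iff_norm_le]

end Approximation

instance : μI.Regular := by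
  unfold μI
  infer_instance

lemma exists_polynomial_lintegral_sub_le {f : ℝ → ℝ} {M : ℝ} {ε : ℝ≥0∞} (hf : Integrable f μI)
    (hM : ∀ t, |f t| ≤ M) (hε : ε ≠ 0) :
    ∃ p : Polynomial ℝ, (∀ t ∈ Ioo (-1 : ℝ) 1, |p.eval t| ≤ M + 1) ∧
      ∫⁻ t, ‖f t - p.eval t‖ₑ ∂μI ≤ ε := by
  obtain ⟨g, hgc, hgM, hfg⟩ := exists_continuous_abs_le_lintegral_sub_le hf hM
    ((abs_nonneg _).trans (hM 0)) (ENNReal.half_pos hε).ne'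
  obtain ⟨r, hr0, hr⟩ := ENNReal.lt_iff_exists_nnreal_btwn.1
    (ENNReal.half_pos (ENNReal.half_pos hε).ne')
  have hr0' : (0 : ℝ) < r := mod_cast hr0
  obtain ⟨p, hp⟩ := exists_polynomial_near_of_continuousOn (-1) 1 g hgc.continuousOn
    (min (r : ℝ) 1) (lt_min hr0' one_pos)
  have hgp : ∀ t ∈ Ioo (-1 : ℝ) 1, |p.eval t - g t| < min (r : ℝ) 1 := fun t ht =>
    hp t (Ioo_subset_Icc_self ht)
  refine ⟨p, fun t ht => ?_, ?_⟩
  · have := (hgp t ht).trans_le (min_le_right _ _)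
    have := abs_sub_abs_le_abs_sub (p.eval t) (g t)
    linarith [hgM t]
  · calc ∫⁻ t, ‖f t - p.eval t‖ₑ ∂μI ≤ ∫⁻ t, ‖f t - g t‖ₑ + r ∂μI := by
          refine lintegral_mono_ae (ae_mem_Ioo.mono fun t ht => ?_)
          have hle : ‖g t - p.eval t‖ₑ ≤ r := by
            rw [enorm_sub_rev, ← ofReal_norm, ENNReal.ofReal_le_coe]
            exact (hgp t ht).le.trans (min_le_left _ _)
          rw [← sub_add_sub_cancel (f t) (g t)]
          exact (enorm_add_le _ _).trans (by gcongr)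
      _ ≤ ε / 2 + ε / 2 / 2 * 2 := by
          rw [lintegral_add_right _ measurable_const, lintegral_const]
          gcongr
          simp only [μI, Measure.restrict_apply_univ, Real.volume_Ioo]
          norm_num
      _ = ε := by
          rw [ENNReal.div_mul_cancel two_ne_zero ENNReal.ofNat_ne_top, ENNReal.add_halves]

theorem exists_polynomial_zygmundModular_sub_le {k : ℕ} {f : ℝ → ℝ} {ε : ℝ≥0∞}
    (hf : AEStronglyMeasurable f μI) (hfin : zygmundModular μI k f ≠ ∞) (hε : ε ≠ 0) :
    ∃ p : Polynomial ℝ, zygmundModular μI k (fun t => f t - p.eval t) ≤ ε := by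
  set δ : ℝ≥0∞ := ε / 2 ^ (k + 1) / 2
  have hδ : δ ≠ 0 := (ENNReal.half_pos (ENNReal.div_pos hε (by finiteness)).ne').ne'
  obtain ⟨M, g, hgm, hgM, hfg⟩ := exists_bounded_zygmundModular_sub_le hf hfin hδ
  set L : ℝ≥0∞ := ENNReal.ofReal (Real.log (2 + (M + (M + 1))) ^ k)
  obtain ⟨p, hpM, hgp⟩ := exists_polynomial_lintegral_sub_le
    (Integrable.of_bound hgm M (.of_forall hgM)) hgM
    (ENNReal.div_pos hδ (ENNReal.ofReal_ne_top (r := _)) : 0 < δ / L).ne'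
  refine ⟨p, ?_⟩
  have hmod : zygmundModular μI k (fun t => g t - p.eval t) ≤ δ :=
    calc zygmundModular μI k (fun t => g t - p.eval t)
        ≤ L * ∫⁻ t, ‖g t - p.eval t‖ₑ ∂μI :=
          zygmundModular_le_mul_lintegral_enorm k (ae_mem_Ioo.mono fun t ht =>
            (norm_sub_le _ _).trans (add_le_add (hgM t) (hpM t ht)))
      _ ≤ L * (δ / L) := by gcongr
      _ ≤ δ := ENNReal.mul_div_le
  calc zygmundModular μI k (fun t => f t - p.eval t)
      ≤ 2 ^ (k + 1) * (zygmundModular μI k (fun t => f t - g t) +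
          zygmundModular μI k (fun t => g t - p.eval t)) :=
        zygmundModular_le_of_norm_le_add k (hf.sub hgm)
          (.of_forall fun t => norm_sub_le_norm_sub_add_norm_sub _ _ _)
    _ ≤ 2 ^ (k + 1) * (δ + δ) := by gcongr
    _ ≤ ε := by
        rw [ENNReal.add_halves]
        exact ENNReal.mul_div_le

/-! ### Solving the airfoil equation -/

namespace IsAirfoilPair

lemma of_tendsto {f g : ℕ → ℝ → ℝ} {F G : ℝ → ℝ} (h : ∀ n, IsAirfoilPair (f n) (g n))
    (hF : Integrable F μI) (hG : Integrable G μI)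
    (hf : Tendsto (fun n => eLpNorm (f n - F) 1 μI) atTop (𝓝 0))
    (hg : Tendsto (fun n => eLpNorm (g n - G) 1 μI) atTop (𝓝 0)) : IsAirfoilPair F G where
  integrable_left := hF
  integrable_right := hG
  cauchyTransform_eq z hz := by
    have hweight : Tendsto (fun n => eLpNorm ((fun t => semicircle t * g n t) -
        fun t => semicircle t * G t) 1 μI) atTop (𝓝 0) := by
      refine tendsto_of_tendsto_of_tendsto_of_le_of_le tendsto_const_nhds hg
        (fun _ => zero_le) fun n => eLpNorm_mono fun t => ?_
      simp only [Pi.sub_apply, ← mul_sub, norm_mul, Real.norm_of_nonneg (semicircle_nonneg t)]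
      exact mul_le_of_le_one_left (norm_nonneg _) (semicircle_le_one t)
    refine tendsto_nhds_unique
      (tendsto_cauchyTransform (fun n => (h n).integrable_left) hF hf hz.ne') ?_
    simpa only [(h _).cauchyTransform_eq z hz] using
      (tendsto_cauchyTransform (fun n => integrable_semicircle_mul (h n).integrable_right)
        (integrable_semicircle_mul hG) hweight hz.ne').const_mul _

lemma exists_tendsto_eLpNorm_left {f g : ℕ → ℝ → ℝ} (m : NNReal)
    (h : ∀ n, IsAirfoilPair (f n) (g n))
    (hg : ∀ N i j : ℕ, N ≤ i → N ≤ j →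
      zygmundModular μI 2 (fun t => g i t - g j t) ≤ m * (8⁻¹ : ℝ≥0∞) ^ N) :
    ∃ F, Integrable F μI ∧ Tendsto (fun n => eLpNorm (f n - F) 1 μI) atTop (𝓝 0) := by
  obtain ⟨B, hB⟩ := exists_eLpNorm_left_le m
  have hsum : ∑' n : ℕ, ((B : ℝ≥0∞) + 1) * 2⁻¹ ^ n ≠ ∞ := by
    rw [ENNReal.tsum_mul_left]
    exact ENNReal.mul_ne_top (by finiteness) (tsum_geometric_lt_top.2 (by simp)).ne
  obtain ⟨F, hF, hlim⟩ := Lp.cauchy_complete_eLpNorm le_rfl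
    (fun n => memLp_one_iff_integrable.2 (h n).integrable_left) hsum fun N i j hi hj =>
      (hB _ _ N ((h i).sub (h j)) (hg N i j hi hj)).trans_lt <|
        ENNReal.mul_lt_mul_left (by simp) (by finiteness)
          (ENNReal.lt_add_right ENNReal.coe_ne_top one_ne_zero)
  exact ⟨F, memLp_one_iff_integrable.1 hF, hlim⟩

theorem exists_left {g : ℝ → ℝ} (hg : AEStronglyMeasurable g μI)
    (hfin : zygmundModular μI 2 g ≠ ∞) : ∃ f, IsAirfoilPair f g := by
  have hgeom : ∀ n : ℕ, (8⁻¹ : ℝ≥0∞) ^ n ≠ 0 := fun n => by simp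
  choose p hp using fun n => exists_polynomial_zygmundModular_sub_le hg hfin (hgeom n)
  choose f hf using fun n => exists_polynomial (p n)
  have hcauchy : ∀ N i j : ℕ, N ≤ i → N ≤ j → zygmundModular μI 2
      (fun t => (p i).eval t - (p j).eval t) ≤ (16 : NNReal) * (8⁻¹ : ℝ≥0∞) ^ N := by
    intro N i j hi hj
    convert zygmundModular_sub_le_of_le_pow hg
      (fun n => (p n).continuous.aestronglyMeasurable) hp (by simp) hi hj using 2
    norm_num
  obtain ⟨F, hF, hlim⟩ := exists_tendsto_eLpNorm_left 16 hf hcauchy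
  refine ⟨F, of_tendsto hf hF (integrable_of_zygmundModular_ne_top hg hfin) hlim ?_⟩
  have hzero : Tendsto (fun n : ℕ => 2 ^ 2 * (8⁻¹ : ℝ≥0∞) ^ n) atTop (𝓝 0) := by
    simpa using ENNReal.Tendsto.const_mul (ENNReal.tendsto_pow_atTop_nhds_zero_of_lt_one
      (ENNReal.inv_lt_one.2 (by norm_num))) (.inr (by finiteness))
  refine tendsto_of_tendsto_of_tendsto_of_le_of_le tendsto_const_nhds hzero
    (fun _ => zero_le) fun n => ?_
  rw [eLpNorm_sub_comm, eLpNorm_one_eq_lintegral_enorm]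
  exact (lintegral_enorm_le_zygmundModular 2 _).trans (mul_le_mul_right (hp n) _)

end IsAirfoilPair

lemma integrableOn_div_sub_truncation {f : ℝ → ℝ} (hf : Integrable f μI) (x : ℝ) {y : ℝ}
    (hy : 0 < y) :
    IntegrableOn (fun t => f t / (t - x)) {t : ℝ | t ∈ Ioo (-1 : ℝ) 1 ∧ y ≤ |t - x|} := by
  have hf' : IntegrableOn f {t : ℝ | t ∈ Ioo (-1 : ℝ) 1 ∧ y ≤ |t - x|} :=
    hf.mono_measure (Measure.restrict_mono_set _ fun t ht => ht.1)
  refine hf'.mul_bdd (c := y⁻¹) (by fun_prop) ?_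
  filter_upwards [ae_restrict_mem (measurableSet_truncation x y)] with t ht
  rw [norm_inv, Real.norm_eq_abs]
  exact inv_anti₀ hy ht.2

lemma setIntegral_div_sub_truncation {u v : ℝ → ℝ} (hu : Integrable u μI) (hv : Integrable v μI)
    (x : ℝ) {y : ℝ} (hy : 0 < y) :
    ∫ t in {t : ℝ | t ∈ Ioo (-1 : ℝ) 1 ∧ y ≤ |t - x|},
        ((u t : ℂ) + v t * Complex.I) / ((t : ℂ) - (x : ℂ)) =
      truncatedHilbert u y x + truncatedHilbert v y x * Complex.I := by
  have hu' := integrableOn_div_sub_truncation hu x hy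
  have hv' := integrableOn_div_sub_truncation hv x hy
  rw [truncatedHilbert, truncatedHilbert, ← integral_complex_ofReal, ← integral_complex_ofReal,
    ← integral_mul_const, ← integral_add hu'.ofReal (hv'.ofReal.mul_const _)]
  congr 1 with t
  push_cast
  ring

lemma FHT_eq_of_tendsto_truncatedHilbert {u v : ℝ → ℝ} {x : ℝ} {w : ℂ} (hu : Integrable u μI)
    (hv : Integrable v μI)
    (hre : Tendsto (fun y => truncatedHilbert u y x) (𝓝[>] 0) (𝓝 (Real.pi * w.re)))
    (him : Tendsto (fun y => truncatedHilbert v y x) (𝓝[>] 0) (𝓝 (Real.pi * w.im))) :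
    FHT (fun t => u t + v t * Complex.I) x = w := by
  have hlim := ((hre.ofReal.add (him.ofReal.mul_const Complex.I)).const_mul (Real.pi : ℂ)⁻¹)
  have hw : (Real.pi : ℂ)⁻¹ * (((Real.pi * w.re : ℝ) : ℂ) +
      ((Real.pi * w.im : ℝ) : ℂ) * Complex.I) = w := by
    push_cast
    rw [mul_assoc, ← mul_add, Complex.re_add_im,
      inv_mul_cancel_left₀ (Complex.ofReal_ne_zero.2 Real.pi_ne_zero)]
  rw [hw] at hlim
  refine (hlim.congr' ?_).limUnder_eq
  filter_upwards [self_mem_nhdsWithin] with y hy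
  rw [setIntegral_div_sub_truncation hu hv x hy]

lemma memLlogL_of_zygmundModular_ne_top {f : ℝ → ℂ} (hf : AEStronglyMeasurable f μI)
    (hfin : zygmundModular μI 1 f ≠ ∞) : MemLlogL f := by
  have hmeas : Measurable fun s : ℝ => s * max (Real.log s) 0 := by fun_prop
  refine ⟨hf, (integrable_zygmundFun_norm hf hfin).mono'
    (hmeas.comp_aemeasurable hf.norm.aemeasurable).aestronglyMeasurable (.of_forall fun t => ?_)⟩
  rw [Real.norm_of_nonneg (by positivity), zygmundFun, pow_one]
  gcongr
  have hlog := one_half_le_log_two_add (norm_nonneg (f t))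
  refine max_le ?_ (by linarith)
  rcases (norm_nonneg (f t)).eq_or_lt with h | h
  · rw [← h, Real.log_zero]
    positivity
  · exact Real.log_le_log h (by linarith)

lemma zygmundModular_ofReal_add_mul_I_ne_top {u v : ℝ → ℝ} {k : ℕ}
    (hu : AEStronglyMeasurable u μI) (hufin : zygmundModular μI k u ≠ ∞)
    (hvfin : zygmundModular μI k v ≠ ∞) :
    zygmundModular μI k (fun t => (u t : ℂ) + v t * Complex.I) ≠ ∞ :=
  ne_top_of_le_ne_top (by finiteness) <|
    zygmundModular_le_of_norm_le_add k hu (g := v) (.of_forall fun t => by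
      simpa using norm_add_le (u t : ℂ) (v t * Complex.I))

namespace IsAirfoilPair

lemma zygmundModular_left_ne_top {f g : ℝ → ℝ} (h : IsAirfoilPair f g)
    (hg : zygmundModular μI 2 g ≠ ∞) : zygmundModular μI 1 f ≠ ∞ := by
  obtain ⟨B, hB⟩ := exists_zygmundModular_left_le (zygmundModular μI 2 g).toNNReal
  exact ne_top_of_le_ne_top ENNReal.coe_ne_top (hB f g h (ENNReal.coe_toNNReal hg).ge)

end IsAirfoilPair

/-- `L(log L)²(-1,1)` is contained in the range of `T : L log L(-1,1) → L¹(-1,1)`. -/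
theorem LlogL2_subset_range (g : ℝ → ℂ) (hg : MemLlogL2 g) :
    ∃ f : ℝ → ℂ, MemLlogL f ∧ FHT f =ᵐ[μI] g := by
  have hfin : zygmundModular μI 2 g ≠ ∞ := zygmundModular_ne_top hg.2
  have hre : zygmundModular μI 2 (fun t => (g t).re) ≠ ∞ := ne_top_of_le_ne_top hfin
    (zygmundModular_mono 2 (.of_forall fun t => Complex.abs_re_le_norm (g t)))
  have him : zygmundModular μI 2 (fun t => (g t).im) ≠ ∞ := ne_top_of_le_ne_top hfin
    (zygmundModular_mono 2 (.of_forall fun t => Complex.abs_im_le_norm (g t)))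
  obtain ⟨u, hu⟩ :=
    IsAirfoilPair.exists_left (Complex.continuous_re.comp_aestronglyMeasurable hg.1) hre
  obtain ⟨v, hv⟩ :=
    IsAirfoilPair.exists_left (Complex.continuous_im.comp_aestronglyMeasurable hg.1) him
  refine ⟨fun t => u t + v t * Complex.I, memLlogL_of_zygmundModular_ne_top
    (hu.integrable_left.ofReal.add (hv.integrable_left.ofReal.mul_const _)).aestronglyMeasurable
    (zygmundModular_ofReal_add_mul_I_ne_top hu.integrable_left.aestronglyMeasurable
      (hu.zygmundModular_left_ne_top hre) (hv.zygmundModular_left_ne_top him)), ?_⟩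
  filter_upwards [hu.ae_tendsto_truncatedHilbert, hv.ae_tendsto_truncatedHilbert] with x hux hvx
  exact FHT_eq_of_tendsto_truncatedHilbert hu.integrable_left hv.integrable_left hux hvx
end
end

section
/- The range T(LlogL(-1,1)) of the finite Hilbert transform is not contained in LlogL(-1,1), and likewise the range T̂(LlogL(-1,1)) is not contained in LlogL(-1,1). -/
open MeasureTheory Set Filter

noncomputable section

/-!
Let `f(x) = 1 / (x |log x| ^ 3)` on `(0, 1/e)` and `f = 0` elsewhere. Since `log f(x) ≤ |log x|`,
the function `f log⁺ f` is dominated by the integrable `1 / (x |log x| ^ 2)`. At `-t < 0` there is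
no singularity, and both `|T f(-t)|` and `|T̂ f(-t)|` are at least
`(2 π t)⁻¹ ∫₀ᵗ f = 1 / (4 π t |log t| ^ 2)`. The logarithm of this lower bound is of order
`|log t|`, so each of the two transforms, multiplied by its own `log⁺`, dominates a multiple of
`1 / (t |log t|)`, which is not integrable at `0`.
-/

open scoped Topology

variable {n : ℕ} {x t : ℝ}

/-- The function `x ↦ 1 / (x |log x| ^ n)`, meant for `0 < x < 1`: it is integrable at `0` exactly
for `n ≥ 2`, which makes the exponent `n` measure its position in the Zygmund scale. -/
def logPole (n : ℕ) (x : ℝ) : ℝ := (x * (-Real.log x) ^ n)⁻¹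

/-- `logPole n` cut off to `(0, 1/e)`, the part of `(0, 1)` where `|log x| > 1` and hence
`log (logPole n x) ≤ |log x|`. -/
def truncLogPole (n : ℕ) : ℝ → ℝ := (Ioo 0 (Real.exp (-1))).indicator (logPole n)

lemma exp_neg_one_lt_one : Real.exp (-1) < 1 := Real.exp_lt_one_iff.2 (by norm_num)

lemma neg_log_pos (hx : x ∈ Ioo (0 : ℝ) 1) : 0 < -Real.log x :=
  neg_pos.2 (Real.log_neg hx.1 hx.2)

lemma measurable_logPole (n : ℕ) : Measurable (logPole n) := by
  unfold logPole
  fun_prop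

lemma logPole_pos (hx : x ∈ Ioo (0 : ℝ) 1) : 0 < logPole n x :=
  inv_pos.2 (mul_pos hx.1 (pow_pos (neg_log_pos hx) n))

lemma logPole_succ_mul_neg_log (hx : x ∈ Ioo (0 : ℝ) 1) :
    logPole (n + 1) x * -Real.log x = logPole n x := by
  have hlog := (neg_log_pos hx).ne'
  rw [logPole, logPole, pow_succ, ← mul_assoc, mul_inv, inv_mul_cancel_right₀ hlog]

lemma log_logPole (hx : x ∈ Ioo (0 : ℝ) 1) :
    Real.log (logPole n x) = -Real.log x - n * Real.log (-Real.log x) := by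
  rw [logPole, Real.log_inv, Real.log_mul hx.1.ne' (pow_pos (neg_log_pos hx) n).ne', Real.log_pow]
  ring

lemma log_logPole_le (hx : x ∈ Ioo 0 (Real.exp (-1))) :
    Real.log (logPole n x) ≤ -Real.log x := by
  have hlog : Real.log x < -1 := (Real.log_lt_iff_lt_exp hx.1).2 hx.2
  have hloglog : 0 ≤ Real.log (-Real.log x) := Real.log_nonneg (by linarith)
  rw [log_logPole ⟨hx.1, hx.2.trans exp_neg_one_lt_one⟩]
  exact sub_le_self _ (by positivity)

lemma tendsto_neg_log_nhdsGT_zero : Tendsto (fun x => -Real.log x) (𝓝[>] 0) atTop :=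
  tendsto_neg_atBot_atTop.comp Real.tendsto_log_nhdsGT_zero

lemma eventually_half_neg_log_le_log_mul_logPole {K : ℝ} (hK : 0 < K) (n : ℕ) :
    ∀ᶠ x in 𝓝[>] 0, -Real.log x / 2 ≤ Real.log (K * logPole n x) := by
  have hlittle : (fun L : ℝ => n * Real.log L - Real.log K) =o[atTop] (id : ℝ → ℝ) :=
    (Real.isLittleO_log_id_atTop.const_mul_left _).sub (Asymptotics.isLittleO_const_id_atTop _)
  have hbound := tendsto_neg_log_nhdsGT_zero.eventually
    (hlittle.bound (by norm_num : (0 : ℝ) < 1 / 2))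
  filter_upwards [hbound, Ioo_mem_nhdsGT one_pos] with x hle hx
  rw [Real.log_mul hK.ne' (logPole_pos hx).ne', log_logPole hx]
  rw [id, Real.norm_of_nonneg (neg_log_pos hx).le] at hle
  linarith [(le_abs_self _).trans hle]

lemma hasDerivAt_inv_neg_log_pow (n : ℕ) (hx : x ∈ Ioo (0 : ℝ) 1) :
    HasDerivAt (fun y => ((n + 1) * (-Real.log y) ^ (n + 1))⁻¹) (logPole (n + 2) x) x := by
  have hx0 := hx.1.ne'
  have hlog := (neg_log_pos hx).ne'
  have hderiv := (((Real.hasDerivAt_log hx0).neg.pow (n + 1)).const_mul ((n : ℝ) + 1)).inv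
    (mul_ne_zero n.cast_add_one_ne_zero (pow_ne_zero _ hlog))
  refine hderiv.congr_deriv ?_
  have hn := n.cast_add_one_ne_zero (R := ℝ)
  simp only [logPole, Pi.neg_apply, Pi.pow_apply, Nat.cast_add, Nat.cast_one,
    Nat.add_sub_cancel, pow_succ]
  field_simp

lemma continuousOn_inv_neg_log_pow (n : ℕ) {b : ℝ} (hb : b < 1) :
    ContinuousOn (fun y => ((n + 1) * (-Real.log y) ^ (n + 1))⁻¹) (Icc 0 b) := by
  intro x hx
  refine ContinuousAt.continuousWithinAt ?_
  rcases hx.1.eq_or_lt with rfl | hx0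
  · -- The junk values `log 0 = 0` and `0⁻¹ = 0` give the right limit at `0`.
    rw [continuousAt_iff_punctured_nhds]
    have hpow : Tendsto (fun y => (n + 1 : ℝ) * (-Real.log y) ^ (n + 1)) (𝓝[≠] 0) atTop :=
      ((tendsto_pow_atTop n.succ_ne_zero).comp
        (tendsto_neg_atBot_atTop.comp Real.tendsto_log_nhdsNE_zero)).const_mul_atTop
          n.cast_add_one_pos
    simpa [Function.comp_def] using tendsto_inv_atTop_zero.comp hpow
  · exact (hasDerivAt_inv_neg_log_pow n ⟨hx0, hx.2.trans_lt hb⟩).continuousAt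

lemma integrableOn_logPole (n : ℕ) {b : ℝ} (hb : b < 1) :
    IntegrableOn (logPole (n + 2)) (Ioo 0 b) :=
  (intervalIntegral.integrableOn_deriv_of_nonneg (continuousOn_inv_neg_log_pow n hb)
    (fun _ hx => hasDerivAt_inv_neg_log_pow n ⟨hx.1, hx.2.trans hb⟩)
    (fun _ hx => (logPole_pos ⟨hx.1, hx.2.trans hb⟩).le)).mono_set Ioo_subset_Ioc_self

lemma setIntegral_logPole (n : ℕ) {b : ℝ} (hb0 : 0 ≤ b) (hb1 : b < 1) :
    ∫ x in Ioo 0 b, logPole (n + 2) x = ((n + 1) * (-Real.log b) ^ (n + 1))⁻¹ := by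
  have hftc := intervalIntegral.integral_eq_sub_of_hasDerivAt_of_le hb0
    (continuousOn_inv_neg_log_pow n hb1)
    (fun x hx => hasDerivAt_inv_neg_log_pow n ⟨hx.1, hx.2.trans hb1⟩)
    ((intervalIntegrable_iff_integrableOn_Ioo_of_le hb0).2 (integrableOn_logPole n hb1))
  rw [← integral_Ioc_eq_integral_Ioo, ← intervalIntegral.integral_of_le hb0, hftc]
  simp

lemma not_integrableOn_of_logPole_one_isBigO {E : Type*} [NormedAddCommGroup E] {g : ℝ → E}
    {s : Set ℝ} (hs : s ∈ 𝓝[>] 0) (hg : logPole 1 =O[𝓝[>] 0] g) : ¬ IntegrableOn g s := by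
  have hderiv : ∀ᶠ x in 𝓝[>] (0 : ℝ),
      HasDerivAt (fun y => Real.log (-Real.log y)) (-logPole 1 x) x := by
    filter_upwards [Ioo_mem_nhdsGT one_pos] with x hx
    refine ((Real.hasDerivAt_log hx.1.ne').neg.log (neg_log_pos hx).ne').congr_deriv ?_
    simp only [logPole, Pi.neg_apply, pow_one, mul_inv, div_eq_mul_inv, neg_mul]
  refine not_integrableOn_of_tendsto_norm_atTop_of_deriv_isBigO_filter (𝓝[>] 0) hs
    (hderiv.mono fun x hx => hx.differentiableAt)
    (tendsto_norm_atTop_atTop.comp (Real.tendsto_log_atTop.comp tendsto_neg_log_nhdsGT_zero))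
    (Asymptotics.IsBigO.congr' hg.neg_left ?_ .rfl)
  exact hderiv.mono fun x hx => hx.deriv.symm

lemma truncLogPole_nonneg (n : ℕ) : 0 ≤ truncLogPole n :=
  fun x =>
  indicator_nonneg (fun _ hx => (logPole_pos ⟨hx.1, hx.2.trans exp_neg_one_lt_one⟩).le) x

lemma truncLogPole_of_nonpos (hx : x ≤ 0) : truncLogPole n x = 0 :=
  indicator_of_notMem (fun h => hx.not_gt h.1) _

lemma measurable_truncLogPole (n : ℕ) : Measurable (truncLogPole n) :=
  (measurable_logPole n).indicator measurableSet_Ioo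

lemma integrable_truncLogPole (n : ℕ) : Integrable (truncLogPole (n + 2)) :=
  (integrableOn_logPole n exp_neg_one_lt_one).integrable_indicator measurableSet_Ioo

lemma inv_mul_setIntegral_truncLogPole (ht : t ∈ Ioo 0 (Real.exp (-1))) :
    t⁻¹ * ∫ x in Ioo 0 t, truncLogPole (n + 2) x = (n + 1 : ℝ)⁻¹ * logPole (n + 1) t := by
  have htrunc : EqOn (truncLogPole (n + 2)) (logPole (n + 2)) (Ioo 0 t) := fun x hx =>
    indicator_of_mem (s := Ioo 0 (Real.exp (-1))) ⟨hx.1, hx.2.trans ht.2⟩ _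
  rw [setIntegral_congr_fun measurableSet_Ioo htrunc,
    setIntegral_logPole n ht.1.le (ht.2.trans exp_neg_one_lt_one), logPole]
  simp only [mul_inv]
  ring

lemma truncLogPole_mul_log_le (n : ℕ) (x : ℝ) :
    truncLogPole (n + 1) x * max (Real.log (truncLogPole (n + 1) x)) 0 ≤ truncLogPole n x := by
  by_cases hx : x ∈ Ioo 0 (Real.exp (-1))
  · have hx1 : x ∈ Ioo (0 : ℝ) 1 := ⟨hx.1, hx.2.trans exp_neg_one_lt_one⟩
    simp only [truncLogPole, indicator_of_mem hx]
    rw [← logPole_succ_mul_neg_log (n := n) hx1]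
    exact mul_le_mul_of_nonneg_left (max_le (log_logPole_le hx) (neg_log_pos hx1).le)
      (logPole_pos hx1).le
  · simp [truncLogPole, indicator_of_notMem hx]

lemma memLlogL_truncLogPole (n : ℕ) : MemLlogL fun x => (truncLogPole (n + 3) x : ℂ) := by
  have hmeas := measurable_truncLogPole (n + 3)
  refine ⟨(Complex.measurable_ofReal.comp hmeas).aestronglyMeasurable, ?_⟩
  simp only [Complex.norm_of_nonneg (truncLogPole_nonneg _ _)]
  refine ((integrable_truncLogPole n).mono' (by fun_prop) (.of_forall fun x => ?_)).integrableOn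
  rw [Real.norm_of_nonneg (mul_nonneg (truncLogPole_nonneg _ x) (le_max_right _ _))]
  exact truncLogPole_mul_log_le (n + 2) x

lemma not_memLlogL_of_logPole_two_le {F : ℝ → ℂ} {K : ℝ} (hK : 0 < K)
    (hF : ∀ᶠ t in 𝓝[>] 0, K * logPole 2 t ≤ ‖F (-t)‖) : ¬ MemLlogL F := by
  intro hmem
  have hint := hmem.2.comp_neg
  rw [Set.neg_Ioo, neg_neg] at hint
  refine not_integrableOn_of_logPole_one_isBigO (Ioo_mem_nhdsGT_of_mem (by norm_num)) ?_ hint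
  refine Asymptotics.IsBigO.of_bound (2 / K) ?_
  filter_upwards [hF, eventually_half_neg_log_le_log_mul_logPole hK 2, Ioo_mem_nhdsGT one_pos]
    with t hFt hlog ht
  have hlower : 0 < K * logPole 2 t := mul_pos hK (logPole_pos ht)
  rw [Real.norm_of_nonneg (logPole_pos ht).le,
    Real.norm_of_nonneg (mul_nonneg (norm_nonneg _) (le_max_right _ _))]
  calc logPole 1 t = 2 / K * (K * logPole 2 t * (-Real.log t / 2)) := by
        rw [← logPole_succ_mul_neg_log ht]
        field_simp
    _ ≤ 2 / K * (‖F (-t)‖ * max (Real.log ‖F (-t)‖) 0) := by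
        gcongr
        · exact div_nonneg (neg_log_pos ht).le zero_le_two
        · exact hlog.trans ((Real.log_le_log hlower hFt).trans (le_max_left _ _))

lemma not_memLlogL_of_average_truncLogPole_le {F : ℝ → ℂ}
    (hF : ∀ t ∈ Ioo (0 : ℝ) 1,
      (2 * Real.pi * t)⁻¹ * ∫ x in Ioo 0 t, truncLogPole 3 x ≤ ‖F (-t)‖) : ¬ MemLlogL F := by
  refine not_memLlogL_of_logPole_two_le (K := (4 * Real.pi)⁻¹) (by positivity) ?_
  filter_upwards [Ioo_mem_nhdsGT (Real.exp_pos (-1))] with t ht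
  refine le_of_eq_of_le ?_ (hF t ⟨ht.1, ht.2.trans exp_neg_one_lt_one⟩)
  have haverage : t⁻¹ * ∫ x in Ioo 0 t, truncLogPole 3 x = 2⁻¹ * logPole 2 t := by
    simpa [one_add_one_eq_two] using inv_mul_setIntegral_truncLogPole (n := 1) ht
  rw [mul_inv _ t, mul_assoc, haverage]
  ring

lemma FHT_eq_setIntegral_of_eventuallyEq_zero {f : ℝ → ℂ} (hf : f =ᶠ[𝓝 t] 0) :
    FHT f t = (Real.pi : ℂ)⁻¹ * ∫ x in Ioo (-1 : ℝ) 1, f x / ((x : ℂ) - (t : ℂ)) := by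
  obtain ⟨δ, hδ, hzero⟩ := Metric.eventually_nhds_iff.1 hf
  refine Tendsto.limUnder_eq (tendsto_const_nhds.congr' ?_)
  filter_upwards [Ioo_mem_nhdsGT hδ] with ε hε
  congr 1
  refine setIntegral_eq_of_subset_of_forall_sdiff_eq_zero measurableSet_Ioo
    (fun x hx => hx.1) fun x hx => ?_
  have hclose : |x - t| < ε := not_le.1 fun h => hx.2 ⟨hx.1, h⟩
  rw [hzero (hclose.trans hε.2), Pi.zero_apply, zero_div]

section Positive

variable {u : ℝ → ℝ}

lemma average_le_integral_div_add (hu : IntegrableOn u (Ioo (-1) 1)) (hu_nonneg : 0 ≤ u)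
    (hu_zero : ∀ x ≤ 0, u x = 0) (ht : t ∈ Ioo (0 : ℝ) 1) :
    (2 * t)⁻¹ * ∫ x in Ioo 0 t, u x ≤ ∫ x in Ioo (-1 : ℝ) 1, u x / (x + t) := by
  have hsub : Ioo 0 t ⊆ Ioo (-1) 1 := Ioo_subset_Ioo (by norm_num) ht.2.le
  have hnonneg : ∀ x, 0 ≤ u x / (x + t) := fun x => by
    rcases le_or_gt x 0 with hx | hx
    · simp [hu_zero x hx]
    · exact div_nonneg (hu_nonneg x) (add_pos hx ht.1).le
  have hdom : ∀ x, u x / (x + t) ≤ t⁻¹ * u x := fun x => by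
    rcases le_or_gt x 0 with hx | hx
    · simp [hu_zero x hx]
    · rw [div_eq_inv_mul]
      exact mul_le_mul_of_nonneg_right (inv_anti₀ ht.1 (by linarith)) (hu_nonneg x)
  have hint : IntegrableOn (fun x => u x / (x + t)) (Ioo (-1) 1) := by
    refine Integrable.mono' (hu.const_mul t⁻¹)
      (hu.aestronglyMeasurable.div₀ (by fun_prop)) (.of_forall fun x => ?_)
    rw [Real.norm_of_nonneg (hnonneg x)]
    exact hdom x
  calc (2 * t)⁻¹ * ∫ x in Ioo 0 t, u x = ∫ x in Ioo 0 t, (2 * t)⁻¹ * u x :=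
        (integral_const_mul _ _).symm
    _ ≤ ∫ x in Ioo 0 t, u x / (x + t) := by
        refine setIntegral_mono_on ((hu.mono_set hsub).const_mul _) (hint.mono_set hsub)
          measurableSet_Ioo fun x hx => ?_
        rw [div_eq_inv_mul]
        exact mul_le_mul_of_nonneg_right
          (inv_anti₀ (add_pos hx.1 ht.1) (by linarith [hx.2])) (hu_nonneg x)
    _ ≤ ∫ x in Ioo (-1 : ℝ) 1, u x / (x + t) :=
        setIntegral_mono_set hint (.of_forall hnonneg) hsub.eventuallyLE

lemma average_le_norm_FHT_neg (hu : IntegrableOn u (Ioo (-1) 1)) (hu_nonneg : 0 ≤ u)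
    (hu_zero : ∀ x ≤ 0, u x = 0) (ht : t ∈ Ioo (0 : ℝ) 1) :
    (2 * Real.pi * t)⁻¹ * ∫ x in Ioo 0 t, u x ≤ ‖FHT (fun x => (u x : ℂ)) (-t)‖ := by
  have hvanish : (fun x => (u x : ℂ)) =ᶠ[𝓝 (-t)] 0 := by
    filter_upwards [Iio_mem_nhds (neg_lt_zero.2 ht.1)] with x hx
    simp [hu_zero x (le_of_lt hx)]
  have hFHT : FHT (fun x => (u x : ℂ)) (-t)
      = ((Real.pi⁻¹ * ∫ x in Ioo (-1 : ℝ) 1, u x / (x + t) : ℝ) : ℂ) := by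
    rw [FHT_eq_setIntegral_of_eventuallyEq_zero hvanish, Complex.ofReal_mul, Complex.ofReal_inv,
      ← integral_complex_ofReal]
    simp
  rw [hFHT, Complex.norm_real]
  refine le_trans ?_ (Real.le_norm_self _)
  calc (2 * Real.pi * t)⁻¹ * ∫ x in Ioo 0 t, u x
      = Real.pi⁻¹ * ((2 * t)⁻¹ * ∫ x in Ioo 0 t, u x) := by simp only [mul_inv]; ring
    _ ≤ Real.pi⁻¹ * ∫ x in Ioo (-1 : ℝ) 1, u x / (x + t) :=
        mul_le_mul_of_nonneg_left (average_le_integral_div_add hu hu_nonneg hu_zero ht)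
          (by positivity)

/-- The weight `√(1 - x²)` decreases on `(0, t)`, so pulling out its value at `t` cancels the outer
factor of `hatT`. -/
lemma average_le_norm_hatT_neg (hu : IntegrableOn u (Ioo (-1) 1)) (hu_nonneg : 0 ≤ u)
    (hu_zero : ∀ x ≤ 0, u x = 0) (ht : t ∈ Ioo (0 : ℝ) 1) :
    (2 * Real.pi * t)⁻¹ * ∫ x in Ioo 0 t, u x ≤ ‖hatT (fun x => (u x : ℂ)) (-t)‖ := by
  set w : ℝ → ℝ := fun x => Real.sqrt (1 - x ^ 2)
  have ht0 : 0 < t := ht.1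
  have hwt : 0 < w t := Real.sqrt_pos.2 (by nlinarith [ht.2])
  have hsub : Ioo 0 t ⊆ Ioo (-1) 1 := Ioo_subset_Ioo (by norm_num) ht.2.le
  have hwu : IntegrableOn (fun x => w x * u x) (Ioo (-1) 1) := by
    refine hu.bdd_mul (c := 1) (by fun_prop) (.of_forall fun x => ?_)
    rw [Real.norm_of_nonneg (Real.sqrt_nonneg _)]
    exact Real.sqrt_le_one.2 (by nlinarith [sq_nonneg x])
  have hpull : w t * ∫ x in Ioo 0 t, u x ≤ ∫ x in Ioo 0 t, w x * u x := by
    rw [← integral_const_mul]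
    refine setIntegral_mono_on ((hu.mono_set hsub).const_mul _) (hwu.mono_set hsub)
      measurableSet_Ioo fun x hx => mul_le_mul_of_nonneg_right ?_ (hu_nonneg x)
    exact Real.sqrt_le_sqrt (by nlinarith [hx.1, hx.2])
  have hFHT := average_le_norm_FHT_neg hwu
    (fun x => mul_nonneg (Real.sqrt_nonneg _) (hu_nonneg x))
    (fun x hx => by simp [hu_zero x hx]) ht
  have hnorm : ‖hatT (fun x => (u x : ℂ)) (-t)‖
      = (w t)⁻¹ * ‖FHT (fun x => ((w x * u x : ℝ) : ℂ)) (-t)‖ := by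
    simp [hatT, w, abs_of_nonneg (Real.sqrt_nonneg _)]
  rw [hnorm]
  calc (2 * Real.pi * t)⁻¹ * ∫ x in Ioo 0 t, u x
      = (w t)⁻¹ * ((2 * Real.pi * t)⁻¹ * (w t * ∫ x in Ioo 0 t, u x)) := by field_simp
    _ ≤ (w t)⁻¹ * ‖FHT (fun x => ((w x * u x : ℝ) : ℂ)) (-t)‖ := by
        refine mul_le_mul_of_nonneg_left (le_trans ?_ hFHT) (inv_pos.2 hwt).le
        exact mul_le_mul_of_nonneg_left hpull (by positivity)

end Positive

/-- Neither the range `T(L log L)` nor the range `T̂(L log L)` is contained in `L log L`. -/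
theorem ranges_not_contained_in_LlogL :
    (∃ f : ℝ → ℂ, MemLlogL f ∧ ¬ MemLlogL (FHT f)) ∧
    (∃ f : ℝ → ℂ, MemLlogL f ∧ ¬ MemLlogL (hatT f)) := by
  have hint : IntegrableOn (truncLogPole 3) (Ioo (-1) 1) := (integrable_truncLogPole 1).integrableOn
  have hnonneg := truncLogPole_nonneg 3
  have hzero : ∀ x ≤ 0, truncLogPole 3 x = 0 := fun _ => truncLogPole_of_nonpos
  refine ⟨⟨fun x => truncLogPole 3 x, memLlogL_truncLogPole 0, ?_⟩,
    ⟨fun x => truncLogPole 3 x, memLlogL_truncLogPole 0, ?_⟩⟩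
  · exact not_memLlogL_of_average_truncLogPole_le fun t =>
      average_le_norm_FHT_neg hint hnonneg hzero
  · exact not_memLlogL_of_average_truncLogPole_le fun t =>
      average_le_norm_hatT_neg hint hnonneg hzero
end
end
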